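/- arXiv:2105.03373 — 6 statements merged into one kernel-verified Lean document; each statement's English description precedes it below -/
import Mathlib

section
/- Let k > 1 be an integer and let G be a simple graph on n vertices. Suppose the edges of G are colored with n + k color classes, each of size at least 10^9 · k. Then G contains a rainbow cycle of length at most n/k. -/
/-!
A rainbow cycle is found in the following counting form (`RainbowGirth.Short`): a nonempty set of
edges of pairwise distinct colors that spans at most as many vertices as it has edges. Such a set is
not a forest, so it contains a cycle (`exists_rainbow_cycle`). The counting form still makes sense
when color classes overlap, which happens below. It is only needed that there are more colors than
vertices.

Let `r = 100 k`. A vertex is heavy for a color if it has at least `6 r` edges of that color, and a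
color class is good if it has a heavy vertex or at least `414 r` darts. All classes are good at the
start. We may assume that no rainbow cycle of length at most `4` exists.

*Reduction* (`reduction`). Suppose that some vertex `v` is heavy for a color `c₀`, with star `B`,
and meets more than `4 k` colors. Delete `v` together with neighbors of `v` along `4 k - 1` other
colors, and delete these `4 k` colors; every remaining edge from `u` to a deleted vertex is replaced
by a star of the same color from `u` to `B`. Goodness and the balance of colors and vertices are
preserved, and undoing the step lengthens a cycle by at most `2`. There are at most `n / (4 k)`
such steps, so they cost at most `n / (2 k)` in total.

*Irreducible case* (`short_of_irreducible`). Now every heavy vertex meets at most `4 k` colors.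
Take a maximal matching between vertices and colors for which they are heavy (`exists_matching`),
and let `H` be the set of matched vertices. There are at least as many unmatched colors as vertices
in the complement `L` of `H`. Because in-degrees are bounded by `4 k`, following edges of the matched
colors leads from each `v ∈ H` to a set of at least `3 r` vertices of `L` in logarithmically many
steps (`exists_levels`). Choose two random subsets of `L`, each vertex with probability `1 / r`. With
probability at least `9 / r` an unmatched color has an edge both of whose ends are sampled or are led
to the sample (`survival_prob`). So some sample `T`, with `|T| ≤ 4 |L| / r`, is survived by at least
`9 |L| / r > 2 |T|` colors. Contracting the paths into the sample gives a multigraph on `T` of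
average degree more than `4`, which has a cycle of logarithmic length (`exists_short_of_two_mul_lt`);
undoing the contraction (`expand`) multiplies the length by another logarithmic factor.

The total length is `O((log (n / k)) ^ 2) + n / (2 k)`. Since the color classes are pairwise disjoint
sets of at least `10 ^ 9 k` edges, `n` is at least `10 ^ 9 k`, and the first term is at most
`n / (2 k)` too.
-/

namespace RainbowGirth

/-! ### Rainbow cycles via counting -/

open Classical in
/-- The set of endpoints of the edges `{s c, t c}`, `c ∈ I`. -/
noncomputable def supp {V ι : Type*} (I : Finset ι) (s t : ι → V) : Finset V :=
  I.image s ∪ I.image t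

/-- `Short E J g`: one can pick a nonempty set `I` of at most `g` colors from `J` and, for each
`c ∈ I`, one edge `{s c, t c}` of color `c`, such that these edges span at most `|I|` vertices.
This is a counting form of the existence of a rainbow cycle of length at most `g`; it makes sense
also when the color classes `E c` overlap (two parallel edges of different colors count as a cycle).
-/
def Short {V ι : Type*} (E : ι → SimpleGraph V) (J : Finset ι) (g : ℕ) : Prop :=
  ∃ (I : Finset ι) (s t : ι → V), I ⊆ J ∧ I.Nonempty ∧ (∀ c ∈ I, (E c).Adj (s c) (t c)) ∧
    (supp I s t).card ≤ I.card ∧ I.card ≤ g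

lemma mem_supp {V ι : Type*} {I : Finset ι} {s t : ι → V} {v : V} :
    v ∈ supp I s t ↔ ∃ c ∈ I, s c = v ∨ t c = v := by
  simp only [supp, Finset.mem_union, Finset.mem_image]
  constructor
  · rintro (⟨c, hc, h⟩ | ⟨c, hc, h⟩)
    exacts [⟨c, hc, Or.inl h⟩, ⟨c, hc, Or.inr h⟩]
  · rintro ⟨c, hc, h | h⟩
    exacts [Or.inl ⟨c, hc, h⟩, Or.inr ⟨c, hc, h⟩]

lemma Short.mono {V ι : Type*} {E : ι → SimpleGraph V} {J : Finset ι} {g g' : ℕ}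
    (h : Short E J g) (hg : g ≤ g') : Short E J g' := by
  obtain ⟨I, s, t, h1, h2, h3, h4, h5⟩ := h
  exact ⟨I, s, t, h1, h2, h3, h4, h5.trans hg⟩

/-- A forest has fewer edges than vertices, so edges of pairwise distinct colors that span too few
vertices contain a rainbow cycle. -/
lemma exists_rainbow_cycle {V : Type*} (G : SimpleGraph V) (b : Sym2 V → ℕ)
    (I : Finset ℕ) (s t : ℕ → V) (hne : I.Nonempty) (hadj : ∀ c ∈ I, G.Adj (s c) (t c))
    (hb : ∀ c ∈ I, b s(s c, t c) = c) (hcard : (supp I s t).card ≤ I.card) :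
    ∃ (u : V) (w : G.Walk u u), w.IsCycle ∧ (w.edges.map b).Nodup ∧ w.length ≤ I.card := by
  classical
  set K : Finset (Sym2 V) := I.image (fun c => s(s c, t c)) with hK
  set H : SimpleGraph V := SimpleGraph.fromEdgeSet (K : Set (Sym2 V)) with hH
  have hHadj : ∀ c ∈ I, H.Adj (s c) (t c) := by
    intro c hc
    rw [hH, SimpleGraph.fromEdgeSet_adj]
    exact ⟨by simpa [hK] using ⟨c, hc, Or.inl ⟨rfl, rfl⟩⟩, (hadj c hc).ne⟩
  have hle : H ≤ G := by
    intro x y hxy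
    rw [hH, SimpleGraph.fromEdgeSet_adj] at hxy
    obtain ⟨c, hc, hce⟩ := Finset.mem_image.1 (Finset.mem_coe.1 hxy.1)
    have := hadj c hc
    rw [← SimpleGraph.mem_edgeSet, hce] at this
    exact this
  by_cases hac : H.IsAcyclic
  · exfalso
    let W : Set V := (supp I s t : Set V)
    have hW : ∀ c ∈ I, s c ∈ W ∧ t c ∈ W := fun c hc =>
      ⟨Finset.mem_coe.2 (mem_supp.2 ⟨c, hc, Or.inl rfl⟩),
        Finset.mem_coe.2 (mem_supp.2 ⟨c, hc, Or.inr rfl⟩)⟩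
    obtain ⟨c₀, hc₀⟩ := hne
    have : Nonempty W := ⟨⟨s c₀, (hW c₀ hc₀).1⟩⟩
    obtain ⟨T, hT, hTmax⟩ :=
      SimpleGraph.exists_maximal_isAcyclic_of_le_isAcyclic (le_top : H.induce W ≤ ⊤)
        (hac.induce W)
    have htree : T.IsTree := SimpleGraph.maximal_isAcyclic_iff_isTree.1 (by simpa using hTmax)
    have h1 := htree.card_edgeFinset
    have h2 : I.card ≤ T.edgeFinset.card := by
      refine Finset.card_le_card_of_injOn
        (fun c => if h : c ∈ I then s(⟨s c, (hW c h).1⟩, ⟨t c, (hW c h).2⟩) else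
          s(⟨s c₀, (hW c₀ hc₀).1⟩, ⟨s c₀, (hW c₀ hc₀).1⟩)) ?_ ?_
      · intro c hc
        have hc' : c ∈ I := hc
        simp only [hc', dif_pos, Finset.mem_coe, SimpleGraph.mem_edgeFinset,
          SimpleGraph.mem_edgeSet]
        exact hT (hHadj c hc')
      · intro c hc c' hc' hcc
        have hc1 : c ∈ I := hc
        have hc2 : c' ∈ I := hc'
        simp only [hc1, hc2, dif_pos] at hcc
        have := congrArg (Sym2.map Subtype.val) hcc
        simp only [Sym2.map_mk] at this
        rw [← hb c hc1, ← hb c' hc2]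
        exact congrArg b this
    have h3 : Fintype.card W = (supp I s t).card := Fintype.card_coe _
    omega
  · unfold SimpleGraph.IsAcyclic at hac
    push Not at hac
    obtain ⟨u, w, hw⟩ := hac
    have hsub : ∀ e ∈ w.edges, e ∈ K := by
      intro e he
      have := w.edges_subset_edgeSet he
      rw [hH, SimpleGraph.edgeSet_fromEdgeSet] at this
      exact this.1
    refine ⟨u, w.mapLe hle, hw.mapLe hle, ?_, ?_⟩
    · rw [SimpleGraph.Walk.edges_mapLe_eq_edges]
      refine List.Nodup.map_on ?_ hw.edges_nodup
      intro e he e' he' hee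
      obtain ⟨c, hc, rfl⟩ := Finset.mem_image.1 (hsub e he)
      obtain ⟨c', hc', rfl⟩ := Finset.mem_image.1 (hsub e' he')
      rw [hb c hc, hb c' hc'] at hee
      rw [hee]
    · have h1 : (w.mapLe hle).length = w.edges.length := by simp
      rw [h1, ← List.toFinset_card_of_nodup hw.edges_nodup]
      calc w.edges.toFinset.card ≤ K.card :=
            Finset.card_le_card (fun e he => hsub e (List.mem_toFinset.1 he))
        _ ≤ I.card := Finset.card_image_le

/-- An inclusion-minimal set of edges spanning at most as many vertices as it has edges is a cycle,
so it has at most two edges at each vertex. -/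
lemma exists_degree_le_two {V ι : Type*} (I : Finset ι) (s t : ι → V) (hne : I.Nonempty)
    (hst : ∀ c ∈ I, s c ≠ t c) (hcard : (supp I s t).card ≤ I.card) :
    ∃ I' ⊆ I, I'.Nonempty ∧ (supp I' s t).card ≤ I'.card ∧
      ∀ v, ∀ A ⊆ I', (∀ c ∈ A, s c = v ∨ t c = v) → A.card ≤ 2 := by
  classical
  obtain ⟨I', hI', hmin⟩ := exists_minimal_le_of_wellFoundedLT
    (fun A : Finset ι => A.Nonempty ∧ (supp A s t).card ≤ A.card) I ⟨hne, hcard⟩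
  obtain ⟨hne', hc'⟩ := hmin.prop
  have hI'' : I' ⊆ I := hI'
  refine ⟨I', hI'', hne', hc', ?_⟩
  have herase : ∀ e ∈ I', (I'.erase e).Nonempty ∧ I'.card ≤ (supp (I'.erase e) s t).card := by
    intro e he
    have hne2 : (I'.erase e).Nonempty := by
      by_contra hemp
      rw [Finset.not_nonempty_iff_eq_empty] at hemp
      have h1 : I'.card = 1 := by
        have := Finset.card_erase_add_one he
        rw [hemp] at this; simpa using this.symm
      have h2 : ({s e, t e} : Finset V) ⊆ supp I' s t := by
        intro v hv
        simp only [Finset.mem_insert, Finset.mem_singleton] at hv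
        rcases hv with rfl | rfl
        exacts [mem_supp.2 ⟨e, he, Or.inl rfl⟩, mem_supp.2 ⟨e, he, Or.inr rfl⟩]
      have h3 := Finset.card_le_card h2
      rw [Finset.card_pair (hst e (hI'' he))] at h3
      omega
    refine ⟨hne2, ?_⟩
    by_contra hlt
    have h1 := Finset.card_erase_add_one he
    have := hmin.le_of_le (y := I'.erase e) ⟨hne2, by omega⟩ (Finset.erase_subset e I')
    exact absurd (this he) (Finset.notMem_erase e I')
  have hsuppmono : ∀ e, supp (I'.erase e) s t ⊆ supp I' s t := by
    intro e v hv
    obtain ⟨c, hc, h⟩ := mem_supp.1 hv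
    exact mem_supp.2 ⟨c, Finset.mem_of_mem_erase hc, h⟩
  have hdeg : ∀ v ∈ supp I' s t, 2 ≤ (I'.filter (fun c => s c = v ∨ t c = v)).card := by
    intro v hv
    obtain ⟨e, he, hev⟩ := mem_supp.1 hv
    by_contra hlt
    have hv2 : v ∈ supp (I'.erase e) s t := by
      have h1 := (herase e he).2
      have : supp (I'.erase e) s t = supp I' s t :=
        Finset.eq_of_subset_of_card_le (hsuppmono e) (hc'.trans h1)
      rw [this]; exact hv
    obtain ⟨f, hf, hfv⟩ := mem_supp.1 hv2
    have h3 : ({e, f} : Finset ι) ⊆ I'.filter (fun c => s c = v ∨ t c = v) := by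
      intro x hx
      simp only [Finset.mem_insert, Finset.mem_singleton] at hx
      rcases hx with rfl | rfl
      exacts [Finset.mem_filter.2 ⟨he, hev⟩,
        Finset.mem_filter.2 ⟨Finset.mem_of_mem_erase hf, hfv⟩]
    have h4 := Finset.card_le_card h3
    rw [Finset.card_pair (Finset.ne_of_mem_erase hf).symm] at h4
    omega
  intro v A hA hAv
  by_contra hlt
  have hA3 : 3 ≤ (I'.filter (fun c => s c = v ∨ t c = v)).card := by
    have : A ⊆ I'.filter (fun c => s c = v ∨ t c = v) := fun c hc =>
      Finset.mem_filter.2 ⟨hA hc, hAv c hc⟩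
    have := Finset.card_le_card this
    omega
  have hv : v ∈ supp I' s t := by
    obtain ⟨c, hc⟩ := Finset.card_pos.1 (by omega : 0 < A.card)
    exact mem_supp.2 ⟨c, hA hc, hAv c hc⟩
  -- double counting of incidences: the degree sum is at most `2 |I'|`
  have hsum : ∑ v ∈ supp I' s t, (I'.filter (fun c => s c = v ∨ t c = v)).card ≤ 2 * I'.card := by
    simp_rw [Finset.card_filter]
    rw [Finset.sum_comm, mul_comm, ← smul_eq_mul, ← Finset.sum_const]
    refine Finset.sum_le_sum fun c _ => ?_
    rw [← Finset.card_filter]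
    calc _ ≤ ({s c, t c} : Finset V).card := Finset.card_le_card (by
            intro x hx
            simp only [Finset.mem_filter] at hx
            simp only [Finset.mem_insert, Finset.mem_singleton]
            rcases hx.2 with h | h
            exacts [Or.inl h.symm, Or.inr h.symm])
      _ ≤ 2 := Finset.card_le_two
  have hlow : 2 * (supp I' s t).card + 1 ≤
      ∑ v ∈ supp I' s t, (I'.filter (fun c => s c = v ∨ t c = v)).card := by
    rw [← Finset.add_sum_erase _ _ hv]
    have : ((supp I' s t).erase v).card • 2 ≤ ∑ v ∈ (supp I' s t).erase v,
        (I'.filter (fun c => s c = v ∨ t c = v)).card :=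
      Finset.card_nsmul_le_sum _ _ _ fun w hw => hdeg w (Finset.mem_of_mem_erase hw)
    have h5 := Finset.card_erase_add_one hv
    simp only [smul_eq_mul] at this
    omega
  obtain ⟨e, he⟩ := hne'
  have h6 := (herase e he).2
  have h7 := Finset.card_le_card (hsuppmono e)
  omega

/-! ### Contracted forests and short cycles in dense multigraphs -/

/-- Following the parent map `par` from `v` until a root is reached: `P v` collects the non-roots
on the way and `π v` is the root. -/
lemma exists_paths {V : Type*} (H R : V → Prop) (par : V → V) (rk : V → ℕ)
    (hstep : ∀ v, H v → R (par v) ∨ (H (par v) ∧ rk (par v) < rk v)) (d : ℕ)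
    (hd : ∀ v, H v → rk v ≤ d) :
    ∃ (P : V → Finset V) (π : V → V), ∀ v, H v ∨ R v → R (π v) ∧ (v ∈ P v ∨ v = π v) ∧
      (P v).card ≤ d + 1 ∧ ∀ w ∈ P v, H w ∧ (par w ∈ P v ∨ par w = π v) := by
  classical
  have key : ∀ n v, H v → rk v ≤ n → ∃ (A : Finset V) (x : V), R x ∧ v ∈ A ∧ A.card ≤ n + 1 ∧
      ∀ w ∈ A, H w ∧ (par w ∈ A ∨ par w = x) := by
    intro n
    induction n with
    | zero =>
      intro v hv h0
      rcases hstep v hv with h | ⟨-, h⟩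
      · exact ⟨{v}, par v, h, by simp, by simp, by simpa using hv⟩
      · omega
    | succ n ih =>
      intro v hv hn
      rcases hstep v hv with h | ⟨h1, h⟩
      · exact ⟨{v}, par v, h, by simp, by simp, by simpa using hv⟩
      · obtain ⟨A, x, hx, hA, hc, hAw⟩ := ih (par v) h1 (by omega)
        refine ⟨insert v A, x, hx, by simp, (Finset.card_insert_le _ _).trans (by omega), ?_⟩
        intro w hw
        rcases Finset.mem_insert.1 hw with rfl | hw
        · exact ⟨hv, Or.inl (Finset.mem_insert_of_mem hA)⟩
        · exact ⟨(hAw w hw).1, (hAw w hw).2.imp (Finset.mem_insert_of_mem) id⟩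
  have key2 : ∀ v, ∃ (A : Finset V) (x : V), H v ∨ R v → R x ∧ (v ∈ A ∨ v = x) ∧
      A.card ≤ d + 1 ∧ ∀ w ∈ A, H w ∧ (par w ∈ A ∨ par w = x) := by
    intro v
    by_cases hv : H v
    · obtain ⟨A, x, h1, h2, h3, h4⟩ := key d v hv (hd v hv)
      exact ⟨A, x, fun _ => ⟨h1, Or.inl h2, h3, h4⟩⟩
    · refine ⟨∅, v, fun h => ⟨h.resolve_left hv, Or.inr rfl, by simp, by simp⟩⟩
  choose P π h using key2
  exact ⟨P, π, h⟩

/-- Undoing the contraction of a rooted forest: if the edges of `I` span few vertices after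
contracting every tree to its root, adding the forest edges on the paths from the endpoints of `I`
to the roots gives an edge set spanning few vertices. Each non-root on these paths brings in exactly
one new vertex and one new edge, the edge of color `col v` from `v` to `par v`. -/
lemma expand {V ι : Type*} [DecidableEq ι] (H : V → Prop) (par : V → V) (col : V → ι) (s t : ι → V)
    (P : V → Finset V) (π : V → V) (I : Finset ι) (D : ℕ)
    (hcol : ∀ v w, H v → H w → col v = col w → v = w)
    (hcolI : ∀ v, H v → col v ∉ I)
    (hend : ∀ v, H v → (s (col v) = v ∧ t (col v) = par v) ∨ (s (col v) = par v ∧ t (col v) = v))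
    (hP : ∀ c ∈ I, ∀ v, v = s c ∨ v = t c → (v ∈ P v ∨ v = π v) ∧ (P v).card ≤ D ∧
      ∀ w ∈ P v, H w ∧ (par w ∈ P v ∨ par w = π v))
    (hI : (supp I (fun c => π (s c)) (fun c => π (t c))).card ≤ I.card) :
    ∃ PP : Finset V, (∀ v ∈ PP, H v) ∧
      (supp (I ∪ PP.image col) s t).card ≤ (I ∪ PP.image col).card ∧
      (I ∪ PP.image col).card ≤ I.card * (2 * D + 1) := by
  classical
  set PP : Finset V := I.biUnion (fun c => P (s c) ∪ P (t c)) with hPP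
  have hmem : ∀ c ∈ I, ∀ v, v = s c ∨ v = t c → P v ⊆ PP := by
    intro c hc v hv w hw
    rw [hPP, Finset.mem_biUnion]
    refine ⟨c, hc, ?_⟩
    rcases hv with rfl | rfl
    exacts [Finset.mem_union_left _ hw, Finset.mem_union_right _ hw]
  have hinv : ∀ w ∈ PP, ∃ c ∈ I, ∃ v, (v = s c ∨ v = t c) ∧ w ∈ P v := by
    intro w hw
    rw [hPP, Finset.mem_biUnion] at hw
    obtain ⟨c, hc, hw⟩ := hw
    rcases Finset.mem_union.1 hw with h | h
    exacts [⟨c, hc, _, Or.inl rfl, h⟩, ⟨c, hc, _, Or.inr rfl, h⟩]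
  have hH : ∀ v ∈ PP, H v := by
    intro w hw
    obtain ⟨c, hc, v, hv, hwv⟩ := hinv w hw
    exact ((hP c hc v hv).2.2 w hwv).1
  have hcard : (I ∪ PP.image col).card = I.card + PP.card := by
    rw [Finset.card_union_of_disjoint, Finset.card_image_of_injOn]
    · intro v hv w hw h
      exact hcol v w (hH v hv) (hH w hw) h
    · rw [Finset.disjoint_right]
      intro c hc
      obtain ⟨v, hv, rfl⟩ := Finset.mem_image.1 hc
      exact hcolI v (hH v hv)
  have hπ : ∀ c ∈ I, ∀ v, v = s c ∨ v = t c →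
      π v ∈ supp I (fun c => π (s c)) (fun c => π (t c)) := by
    intro c hc v hv
    refine mem_supp.2 ⟨c, hc, ?_⟩
    rcases hv with rfl | rfl
    exacts [Or.inl rfl, Or.inr rfl]
  have hsub : supp (I ∪ PP.image col) s t ⊆
      supp I (fun c => π (s c)) (fun c => π (t c)) ∪ PP := by
    have h1 : ∀ c ∈ I, ∀ v, v = s c ∨ v = t c →
        v ∈ supp I (fun c => π (s c)) (fun c => π (t c)) ∪ PP := by
      intro c hc v hv
      rcases (hP c hc v hv).1 with h | h
      · exact Finset.mem_union_right _ (hmem c hc v hv h)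
      · rw [h]; exact Finset.mem_union_left _ (hπ c hc v hv)
    have h2 : ∀ w ∈ PP, par w ∈ supp I (fun c => π (s c)) (fun c => π (t c)) ∪ PP := by
      intro w hw
      obtain ⟨c, hc, v, hv, hwv⟩ := hinv w hw
      rcases ((hP c hc v hv).2.2 w hwv).2 with h | h
      · exact Finset.mem_union_right _ (hmem c hc v hv h)
      · rw [h]; exact Finset.mem_union_left _ (hπ c hc v hv)
    intro x hx
    obtain ⟨c, hc, hx⟩ := mem_supp.1 hx
    rcases Finset.mem_union.1 hc with hc | hc
    · exact h1 c hc x (hx.imp Eq.symm Eq.symm)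
    · obtain ⟨v, hv, rfl⟩ := Finset.mem_image.1 hc
      rcases hend v (hH v hv) with ⟨e1, e2⟩ | ⟨e1, e2⟩ <;> rw [e1, e2] at hx <;>
        rcases hx with rfl | rfl
      exacts [Finset.mem_union_right _ hv, h2 v hv, h2 v hv, Finset.mem_union_right _ hv]
  refine ⟨PP, hH, ?_, ?_⟩
  · have := (Finset.card_le_card hsub).trans (Finset.card_union_le _ _)
    omega
  · have : PP.card ≤ I.card * (2 * D) := by
      refine Finset.card_biUnion_le_card_mul _ _ _ fun c hc => ?_
      have h1 := (hP c hc (s c) (Or.inl rfl)).2.1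
      have h2 := (hP c hc (t c) (Or.inr rfl)).2.1
      have := Finset.card_union_le (P (s c)) (P (t c))
      omega
    rw [hcard]
    nlinarith

/-- A multigraph with more than `2 |T|` edges on a vertex set `T` has a cycle of logarithmic length.
In an inclusion-minimal such `T`, every nonempty `B ⊆ T` touches more than `2 |B|` edges. A ball `B`
around a vertex whose radius-one enlargement `B'` has fewer than `2 |B|` vertices therefore
touches more edges than a spanning tree of `B'` has, and any further edge closes a cycle. -/
lemma exists_short_of_two_mul_lt {V ι : Type*} (T : Finset V) (Q : Finset ι) (s t : ι → V)
    (hs : ∀ c ∈ Q, s c ∈ T) (ht : ∀ c ∈ Q, t c ∈ T) (hcard : 2 * T.card < Q.card) :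
    ∃ I ⊆ Q, I.Nonempty ∧ (supp I s t).card ≤ I.card ∧ I.card ≤ 2 * Nat.log 2 T.card + 3 := by
  classical
  obtain ⟨T', hT', hmin⟩ := exists_minimal_le_of_wellFoundedLT
    (fun A : Finset V => 2 * A.card < (Q.filter (fun c => s c ∈ A ∧ t c ∈ A)).card) T (by
      rw [Finset.filter_true_of_mem fun c hc => ⟨hs c hc, ht c hc⟩]; exact hcard)
  set Q' := Q.filter (fun c => s c ∈ T' ∧ t c ∈ T') with hQ'
  have hQ'card : 2 * T'.card < Q'.card := hmin.prop
  obtain ⟨c₁, hc₁⟩ := Finset.card_pos.1 (by omega : 0 < Q'.card)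
  set x := s c₁ with hx
  have hxT : x ∈ T' := (Finset.mem_filter.1 hc₁).2.1
  -- balls around `x`
  let B : ℕ → Finset V := fun n => Nat.rec (motive := fun _ => Finset V) {x} (fun _ A => A ∪ T'.filter (fun v =>
    ∃ c ∈ Q', (s c ∈ A ∧ t c = v) ∨ (t c ∈ A ∧ s c = v))) n
  have hB0 : B 0 = {x} := rfl
  have hBs : ∀ n, B (n + 1) = B n ∪ T'.filter (fun v =>
    ∃ c ∈ Q', (s c ∈ B n ∧ t c = v) ∨ (t c ∈ B n ∧ s c = v)) := fun n => rfl
  have hBT : ∀ n, B n ⊆ T' := by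
    intro n
    induction n with
    | zero => rw [hB0]; simpa using hxT
    | succ n ih => rw [hBs]; exact Finset.union_subset ih (Finset.filter_subset _ _)
  have hBmono : Monotone B := monotone_nat_of_le_succ fun n => by
    rw [hBs]; exact Finset.subset_union_left
  have hxB : ∀ n, x ∈ B n := fun n => hBmono (Nat.zero_le n) (by rw [hB0]; simp)
  obtain ⟨i, hi, hgrow⟩ : ∃ i ≤ Nat.log 2 T'.card, (B (i + 1)).card < 2 * (B i).card := by
    by_contra hno
    push Not at hno
    have : ∀ n ≤ Nat.log 2 T'.card + 1, 2 ^ n ≤ (B n).card := by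
      intro n
      induction n with
      | zero => intro _; rw [hB0]; simp
      | succ n ih =>
        intro hn
        have := hno n (by omega)
        have := ih (by omega)
        rw [pow_succ]; omega
    have h1 := this _ le_rfl
    have h2 := Finset.card_le_card (hBT (Nat.log 2 T'.card + 1))
    have h3 := Nat.lt_pow_succ_log_self (b := 2) (by norm_num) T'.card
    rw [Nat.succ_eq_add_one] at h3
    omega
  set Qt := Q'.filter (fun c => s c ∈ B i ∨ t c ∈ B i) with hQt
  have hQtcard : 2 * (B i).card < Qt.card := by
    have h1 : ¬ (2 * (T' \ B i).card <
        (Q.filter (fun c => s c ∈ T' \ B i ∧ t c ∈ T' \ B i)).card) := by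
      intro h
      have := hmin.le_of_le (y := T' \ B i) h Finset.sdiff_subset hxT
      exact (Finset.mem_sdiff.1 this).2 (hxB i)
    have h2 : Q' \ Qt ⊆ Q.filter (fun c => s c ∈ T' \ B i ∧ t c ∈ T' \ B i) := by
      intro c hc
      simp only [hQt, hQ', Finset.mem_sdiff, Finset.mem_filter] at hc ⊢
      tauto
    have h3 := Finset.card_le_card h2
    have h4 := Finset.card_sdiff_add_card_eq_card (Finset.filter_subset
      (fun c => s c ∈ B i ∨ t c ∈ B i) Q')
    have h5 := Finset.card_sdiff_add_card_eq_card (hBT i)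
    rw [← hQt] at h4
    omega
  -- breadth-first parents
  have hpar : ∀ v, ∃ (n : ℕ) (p : V) (c : ι), v ∈ B (i + 1) → v ≠ x →
      n ≤ i ∧ v ∈ B (n + 1) ∧ v ∉ B n ∧ p ∈ B n ∧ c ∈ Q' ∧
        ((s c = v ∧ t c = p) ∨ (s c = p ∧ t c = v)) := by
    intro v
    by_cases hv : v ∈ B (i + 1) ∧ v ≠ x
    · have hex : ∃ n, v ∈ B n := ⟨i + 1, hv.1⟩
      obtain ⟨n, hn⟩ : ∃ n, Nat.find hex = n + 1 := by
        refine Nat.exists_eq_succ_of_ne_zero fun h0 => hv.2 ?_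
        have := Nat.find_spec hex
        rw [h0, hB0] at this
        simpa using this
      have h1 : v ∈ B (n + 1) := by rw [← hn]; exact Nat.find_spec hex
      have h2 : v ∉ B n := Nat.find_min hex (by omega)
      have h3 : n + 1 ≤ i + 1 := by rw [← hn]; exact Nat.find_min' hex hv.1
      have h4 := h1
      rw [hBs, Finset.mem_union, Finset.mem_filter] at h4
      obtain ⟨-, c, hc, h | h⟩ := h4.resolve_left h2
      · exact ⟨n, s c, c, fun _ _ => ⟨by omega, h1, h2, h.1, hc, Or.inr ⟨rfl, h.2⟩⟩⟩
      · exact ⟨n, t c, c, fun _ _ => ⟨by omega, h1, h2, h.1, hc, Or.inl ⟨h.2, rfl⟩⟩⟩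
    · exact ⟨0, v, c₁, fun h1 h2 => absurd ⟨h1, h2⟩ hv⟩
  choose rk par col hpc using hpar
  have hstep : ∀ v, v ∈ B (i + 1) ∧ v ≠ x → par v = x ∨
      ((par v ∈ B (i + 1) ∧ par v ≠ x) ∧ rk (par v) < rk v) := by
    intro v hv
    by_cases hpx : par v = x
    · exact Or.inl hpx
    · obtain ⟨a1, a2, a3, a4, a5, a6⟩ := hpc v hv.1 hv.2
      have hp : par v ∈ B (i + 1) := hBmono (a1.trans (Nat.le_succ i)) a4
      obtain ⟨b1, b2, b3, b4, b5, b6⟩ := hpc (par v) hp hpx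
      refine Or.inr ⟨⟨hp, hpx⟩, ?_⟩
      by_contra hlt
      exact b3 (hBmono (not_lt.1 hlt) a4)
  have hcolinj : ∀ v w, (v ∈ B (i + 1) ∧ v ≠ x) → (w ∈ B (i + 1) ∧ w ≠ x) →
      col v = col w → v = w := by
    intro v w hv hw hvw
    by_contra hne
    obtain ⟨a1, a2, a3, a4, a5, a6⟩ := hpc v hv.1 hv.2
    obtain ⟨b1, b2, b3, b4, b5, b6⟩ := hpc w hw.1 hw.2
    rw [hvw] at a6
    have h1 : par v = w ∧ par w = v := by
      rcases a6 with ⟨h1, h2⟩ | ⟨h1, h2⟩ <;> rcases b6 with ⟨h3, h4⟩ | ⟨h3, h4⟩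
      · exact absurd (h1.symm.trans h3) hne
      · exact ⟨h2.symm.trans h4, h3.symm.trans h1⟩
      · exact ⟨h1.symm.trans h3, h4.symm.trans h2⟩
      · exact absurd (h2.symm.trans h4) hne
    have h2 := (hstep v hv).resolve_left (by rw [h1.1]; exact hw.2)
    have h3 := (hstep w hw).resolve_left (by rw [h1.2]; exact hv.2)
    rw [h1.1] at h2
    rw [h1.2] at h3
    omega
  obtain ⟨c₀, hc₀, hc₀n⟩ : ∃ c ∈ Qt, c ∉ ((B (i + 1)).erase x).image col := by
    by_contra hno
    push Not at hno
    have h1 := Finset.card_le_card (show Qt ⊆ ((B (i + 1)).erase x).image col from hno)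
    have h2 := Finset.card_image_le (s := (B (i + 1)).erase x) (f := col)
    have h3 := Finset.card_erase_le (s := B (i + 1)) (a := x)
    omega
  have hc₀Q : c₀ ∈ Q' := (Finset.mem_filter.1 hc₀).1
  have hc₀T := (Finset.mem_filter.1 hc₀Q).2
  have hc₀B : s c₀ ∈ B (i + 1) ∧ t c₀ ∈ B (i + 1) := by
    have hsub := hBmono (Nat.le_succ i)
    rcases (Finset.mem_filter.1 hc₀).2 with h | h
    · refine ⟨hsub h, ?_⟩
      rw [hBs, Finset.mem_union, Finset.mem_filter]
      exact Or.inr ⟨hc₀T.2, c₀, hc₀Q, Or.inl ⟨h, rfl⟩⟩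
    · refine ⟨?_, hsub h⟩
      rw [hBs, Finset.mem_union, Finset.mem_filter]
      exact Or.inr ⟨hc₀T.1, c₀, hc₀Q, Or.inr ⟨h, rfl⟩⟩
  obtain ⟨P, π, hPπ⟩ := exists_paths (fun v => v ∈ B (i + 1) ∧ v ≠ x) (fun v => v = x) par rk
    hstep i (fun v hv => (hpc v hv.1 hv.2).1)
  have hHR : ∀ v ∈ B (i + 1), (v ∈ B (i + 1) ∧ v ≠ x) ∨ v = x := fun v hv => by tauto
  obtain ⟨PP, hPP, h1, h2⟩ := expand (fun v => v ∈ B (i + 1) ∧ v ≠ x) par col s t P π {c₀} (i + 1)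
    hcolinj
    (by
      intro v hv h
      rw [Finset.mem_singleton] at h
      exact hc₀n (h ▸ Finset.mem_image_of_mem _ (Finset.mem_erase.2 ⟨hv.2, hv.1⟩)))
    (fun v hv => (hpc v hv.1 hv.2).2.2.2.2.2)
    (by
      intro c hc v hv
      rw [Finset.mem_singleton] at hc
      subst hc
      have hvB : v ∈ B (i + 1) := by
        rcases hv with rfl | rfl
        exacts [hc₀B.1, hc₀B.2]
      exact (hPπ v (hHR v hvB)).2)
    (by
      have : supp {c₀} (fun c => π (s c)) (fun c => π (t c)) ⊆ {x} := by
        intro v hv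
        obtain ⟨c, hc, hcv⟩ := mem_supp.1 hv
        rw [Finset.mem_singleton] at hc
        subst hc
        rw [Finset.mem_singleton]
        rcases hcv with h | h <;> rw [← h]
        exacts [(hPπ _ (hHR _ hc₀B.1)).1, (hPπ _ (hHR _ hc₀B.2)).1]
      simpa using Finset.card_le_card this)
  refine ⟨{c₀} ∪ PP.image col, ?_, ⟨c₀, by simp⟩, h1, h2.trans ?_⟩
  · intro c hc
    rcases Finset.mem_union.1 hc with hc | hc
    · rw [Finset.mem_singleton] at hc
      subst hc
      exact (Finset.mem_filter.1 hc₀Q).1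
    · obtain ⟨v, hv, rfl⟩ := Finset.mem_image.1 hc
      exact (Finset.mem_filter.1 (hpc v (hPP v hv).1 (hPP v hv).2).2.2.2.2.1).1
  · have : Nat.log 2 T'.card ≤ Nat.log 2 T.card := Nat.log_mono_right (Finset.card_le_card hT')
    simp only [Finset.card_singleton]
    omega

/-! ### The reduction step -/

/-- The vertex `v` is the center of a star with at least `D` edges of `G`. -/
def Heavy {V : Type*} (G : SimpleGraph V) (D : ℕ) (v : V) : Prop :=
  ∃ B : Finset V, D ≤ B.card ∧ ∀ x ∈ B, G.Adj v x

/-- A color class is good if it contains a star with `D` edges or has at least `M` darts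
(ordered pairs of adjacent vertices). This is the notion of a large color class that survives
the reduction step. -/
def Good {V : Type*} (G : SimpleGraph V) (D M : ℕ) : Prop :=
  (∃ v, Heavy G D v) ∨ ∃ F : Finset (V × V), M ≤ F.card ∧ ∀ p ∈ F, G.Adj p.1 p.2

lemma Good.mono {V : Type*} {G G' : SimpleGraph V} {D M : ℕ} (h : Good G D M)
    (hle : ∀ u v, G.Adj u v → G'.Adj u v) : Good G' D M := by
  rcases h with ⟨v, B, hB, h⟩ | ⟨F, hF, h⟩
  · exact Or.inl ⟨v, B, hB, fun x hx => hle _ _ (h x hx)⟩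
  · exact Or.inr ⟨F, hF, fun p hp => hle _ _ (h p hp)⟩

lemma short_digon {V ι : Type*} {E : ι → SimpleGraph V} {J : Finset ι} {c d : ι} {u v : V}
    (hc : c ∈ J) (hd : d ∈ J) (hcd : c ≠ d) (h1 : (E c).Adj u v) (h2 : (E d).Adj u v) :
    Short E J 4 := by
  classical
  refine ⟨{c, d}, fun _ => u, fun _ => v, ?_, ⟨c, by simp⟩, ?_, ?_, ?_⟩
  · intro e he
    simp only [Finset.mem_insert, Finset.mem_singleton] at he
    rcases he with rfl | rfl <;> assumption
  · intro e he
    simp only [Finset.mem_insert, Finset.mem_singleton] at he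
    rcases he with rfl | rfl <;> assumption
  · rw [Finset.card_pair hcd]
    refine le_trans (Finset.card_le_card (t := {u, v}) ?_) Finset.card_le_two
    intro x hx
    obtain ⟨e, -, hx⟩ := mem_supp.1 hx
    simp only [Finset.mem_insert, Finset.mem_singleton]
    exact hx.imp Eq.symm Eq.symm
  · rw [Finset.card_pair hcd]; norm_num

lemma short_triangle {V ι : Type*} {E : ι → SimpleGraph V} {J : Finset ι} {c d e : ι} {u v w : V}
    (hc : c ∈ J) (hd : d ∈ J) (he : e ∈ J) (hcd : c ≠ d) (hce : c ≠ e) (hde : d ≠ e)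
    (h1 : (E c).Adj u v) (h2 : (E d).Adj v w) (h3 : (E e).Adj w u) :
    Short E J 4 := by
  classical
  have hcard : ({c, d, e} : Finset ι).card = 3 := Finset.card_eq_three.2 ⟨c, d, e, hcd, hce, hde, rfl⟩
  refine ⟨{c, d, e}, fun a => if a = c then u else if a = d then v else w,
    fun a => if a = c then v else if a = d then w else u, ?_, ⟨c, by simp⟩, ?_, ?_, ?_⟩
  · intro a ha
    simp only [Finset.mem_insert, Finset.mem_singleton] at ha
    rcases ha with rfl | rfl | rfl <;> assumption
  · intro a ha
    simp only [Finset.mem_insert, Finset.mem_singleton] at ha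
    rcases ha with rfl | rfl | rfl
    · simpa using h1
    · simpa [hcd.symm] using h2
    · simpa [hce.symm, hde.symm] using h3
  · rw [hcard]
    refine le_trans (Finset.card_le_card (t := {u, v, w}) ?_) Finset.card_le_three
    intro x hx
    obtain ⟨a, -, hx⟩ := mem_supp.1 hx
    simp only [Finset.mem_insert, Finset.mem_singleton]
    rcases hx with rfl | rfl <;> split_ifs <;> simp
  · rw [hcard]; norm_num

/-- The reduction step. Let `v` be the center of a star `B` of color `c₀` with `D` leaves, and let
`X` consist of `v` and of neighbors of `v` along `m` further colors `A`. Delete the vertices `X`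
and the colors `A ∪ {c₀}`, and replace each remaining edge from `u` to `X` by the edges of the
same color from `u` to all of `B`; this creates a star with `D` leaves, so goodness is kept.
Conversely each new edge from `u` to `B` can be rerouted through `X` and `v`. A cycle in the
rerouted edge set passes through `v` at most once, so it uses at most two of the edges at `v`, and
has at most two edges more than the original one. -/
lemma reduction {V ι : Type*} (E : ι → SimpleGraph V) (S : Finset V) (J : Finset ι) (D M m : ℕ)
    (hS : ∀ c ∈ J, ∀ u v, (E c).Adj u v → u ∈ S) (hgood : ∀ c ∈ J, Good (E c) D M)
    (hshort : ¬ Short E J 4) (v : V) (hvS : v ∈ S) (c₀ : ι) (hc₀ : c₀ ∈ J) (hv : Heavy (E c₀) D v)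
    (A : Finset ι) (hA : A ⊆ J) (hc₀A : c₀ ∉ A) (hAm : A.card = m) (x : ι → V)
    (hx : ∀ c ∈ A, (E c).Adj v (x c)) :
    ∃ (E' : ι → SimpleGraph V) (S' : Finset V) (J' : Finset ι),
      S'.card + (m + 1) = S.card ∧ J'.card + (m + 1) = J.card ∧
      (∀ c ∈ J', ∀ u v, (E' c).Adj u v → u ∈ S') ∧ (∀ c ∈ J', Good (E' c) D M) ∧
      ∀ g, Short E' J' g → Short E J (g + 2) := by
  classical
  obtain ⟨B, hBD, hB⟩ := hv
  have hxinj : ∀ c ∈ A, ∀ d ∈ A, x c = x d → c = d := by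
    intro c hc d hd h
    by_contra hne
    exact hshort (short_digon (hA hc) (hA hd) hne (hx c hc) (h ▸ hx d hd))
  have hvA : ∀ c ∈ A, x c ≠ v := fun c hc => (hx c hc).ne'
  have hcA : ∀ c ∈ A, c ≠ c₀ := fun c hc h => hc₀A (h ▸ hc)
  set X : Finset V := insert v (A.image x) with hX
  have hXmem : ∀ y, y ∈ X ↔ y = v ∨ ∃ c ∈ A, x c = y := by
    intro y; simp [hX]
  have hXcard : X.card = m + 1 := by
    rw [hX, Finset.card_insert_of_notMem, Finset.card_image_of_injOn, hAm]
    · intro c hc d hd h; exact hxinj c hc d hd h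
    · intro h
      obtain ⟨c, hc, h⟩ := Finset.mem_image.1 h
      exact hvA c hc h
  have hBX : ∀ y ∈ B, y ∉ X := by
    intro y hy h
    rcases (hXmem y).1 h with rfl | ⟨c, hc, rfl⟩
    · exact (hB _ hy).ne rfl
    · exact hshort (short_digon (hA hc) hc₀ (hcA c hc) (hx c hc) (hB _ hy))
  set J' : Finset ι := J \ insert c₀ A with hJ'
  have hJ'mem : ∀ c ∈ J', c ∈ J ∧ c ≠ c₀ ∧ c ∉ A := by
    intro c hc
    simp only [hJ', Finset.mem_sdiff, Finset.mem_insert, not_or] at hc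
    exact hc
  have hne : ∀ c ∈ J', ∀ d ∈ A, c ≠ d := fun c hc d hd h => (hJ'mem c hc).2.2 (h ▸ hd)
  have hnX : ∀ c ∈ J', ∀ u, ∀ y ∈ X, (E c).Adj u y → u ∉ X := by
    intro c hc u y hy huy hu
    have hcJ := (hJ'mem c hc).1
    rcases (hXmem y).1 hy with rfl | ⟨d, hd, rfl⟩ <;> rcases (hXmem u).1 hu with rfl | ⟨e, he, rfl⟩
    · exact huy.ne rfl
    · exact hshort (short_digon hcJ (hA he) (hne c hc e he) huy (hx e he).symm)
    · exact hshort (short_digon hcJ (hA hd) (hne c hc d hd) huy (hx d hd))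
    · have hde : e ≠ d := fun h => huy.ne (by rw [h])
      exact hshort (short_triangle (hA he) hcJ (hA hd) (hne c hc e he).symm hde (hne c hc d hd)
        (hx e he) huy (hx d hd).symm)
  have hnB : ∀ c ∈ J', ∀ u, ∀ y ∈ X, (E c).Adj u y → u ∉ B := by
    intro c hc u y hy huy hu
    have hcJ := (hJ'mem c hc).1
    have hc0 := (hJ'mem c hc).2.1
    rcases (hXmem y).1 hy with rfl | ⟨d, hd, rfl⟩
    · exact hshort (short_digon hcJ hc₀ hc0 huy.symm (hB u hu))
    · exact hshort (short_triangle hc₀ hcJ (hA hd) hc0.symm (hcA d hd).symm (hne c hc d hd)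
        (hB u hu) huy (hx d hd).symm)
  -- an edge from `a` to `X` is redirected to all of `B`, and the edges avoiding `X` are kept
  let E' : ι → SimpleGraph V := fun c => SimpleGraph.fromRel (fun a b =>
    ((E c).Adj a b ∧ a ∉ X ∧ b ∉ X) ∨ (b ∈ B ∧ ∃ y ∈ X, (E c).Adj a y))
  have hE' : ∀ c a b, (E' c).Adj a b → ((E c).Adj a b ∧ a ∉ X ∧ b ∉ X) ∨
      (b ∈ B ∧ ∃ y ∈ X, (E c).Adj a y) ∨ (a ∈ B ∧ ∃ y ∈ X, (E c).Adj b y) := by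
    intro c a b h
    obtain ⟨-, (h | h) | (h | h)⟩ := (SimpleGraph.fromRel_adj _ _ _).1 h
    exacts [Or.inl h, Or.inr (Or.inl h), Or.inl ⟨h.1.symm, h.2.2, h.2.1⟩, Or.inr (Or.inr h)]
  refine ⟨E', S \ X, J', ?_, ?_, ?_, ?_, ?_⟩
  · rw [← hXcard]
    refine Finset.card_sdiff_add_card_eq_card fun y hy => ?_
    rcases (hXmem y).1 hy with rfl | ⟨d, hd, rfl⟩
    · exact hvS
    · exact hS d (hA hd) _ _ (hx d hd).symm
  · have : (insert c₀ A).card = m + 1 := by rw [Finset.card_insert_of_notMem hc₀A, hAm]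
    rw [← this]
    exact Finset.card_sdiff_add_card_eq_card (Finset.insert_subset hc₀ hA)
  · intro c hc a b hab
    have hcJ := (hJ'mem c hc).1
    rw [Finset.mem_sdiff]
    rcases hE' c a b hab with ⟨h1, h2, h3⟩ | ⟨h1, y, hy, h2⟩ | ⟨h1, y, hy, h2⟩
    · exact ⟨hS c hcJ _ _ h1, h2⟩
    · exact ⟨hS c hcJ _ _ h2, hnX c hc a y hy h2⟩
    · exact ⟨hS c₀ hc₀ _ _ (hB a h1).symm, hBX a h1⟩
  · intro c hc
    have hcJ := (hJ'mem c hc).1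
    by_cases hex : ∃ u, ∃ y ∈ X, (E c).Adj u y
    · obtain ⟨u, y, hy, huy⟩ := hex
      refine Or.inl ⟨u, B, hBD, fun z hz => (SimpleGraph.fromRel_adj _ _ _).2
        ⟨?_, Or.inl (Or.inr ⟨hz, y, hy, huy⟩)⟩⟩
      rintro rfl
      exact hnB c hc _ y hy huy hz
    · push Not at hex
      refine (hgood c hcJ).mono fun a b hab => (SimpleGraph.fromRel_adj _ _ _).2
        ⟨hab.ne, Or.inl (Or.inl ⟨hab, fun h => hex b a h hab.symm, fun h => hex a b h hab⟩)⟩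
  -- reroute every redirected edge `u b` as the path from `u` through `y ∈ X` and `v` to `b`
  · rintro g ⟨I, s, t, hIJ, hIne, hadj, hcard, hg⟩
    by_cases hold : ∀ c ∈ I, (E c).Adj (s c) (t c)
    · exact ⟨I, s, t, fun c hc => (hJ'mem c (hIJ hc)).1, hIne, hold, hcard, by omega⟩
    have hnew : ∀ c, ∃ u b y : V, c ∈ I → ¬ (E c).Adj (s c) (t c) →
        (u = s c ∨ u = t c) ∧ (b = s c ∨ b = t c) ∧ b ∈ B ∧ y ∈ X ∧ (E c).Adj u y := by
      intro c
      by_cases hc : c ∈ I ∧ ¬ (E c).Adj (s c) (t c)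
      · rcases hE' c _ _ (hadj c hc.1) with ⟨h1, -⟩ | ⟨h1, y, hy, h2⟩ | ⟨h1, y, hy, h2⟩
        · exact absurd h1 hc.2
        · exact ⟨s c, t c, y, fun _ _ => ⟨Or.inl rfl, Or.inr rfl, h1, hy, h2⟩⟩
        · exact ⟨t c, s c, y, fun _ _ => ⟨Or.inr rfl, Or.inl rfl, h1, hy, h2⟩⟩
      · exact ⟨v, v, v, fun h1 h2 => absurd ⟨h1, h2⟩ hc⟩
    choose u b y huby using hnew
    push Not at hold
    obtain ⟨c₁, hc₁, hc₁n⟩ := hold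
    set A1 : Finset ι := A.filter (fun d => ∃ c ∈ I, ¬ (E c).Adj (s c) (t c) ∧ y c = x d) with hA1
    have hA1A : A1 ⊆ A := Finset.filter_subset _ _
    have hIc₀ : c₀ ∉ I := fun h => (hJ'mem _ (hIJ h)).2.1 rfl
    have hIA : ∀ d ∈ A1, d ∉ I := fun d hd h => (hJ'mem _ (hIJ h)).2.2 (hA1A hd)
    have hc₀A1 : c₀ ∉ A1 := fun h => hc₀A (hA1A h)
    set s' : ι → V := fun c => if c ∈ I then (if (E c).Adj (s c) (t c) then s c else u c) else v
      with hs'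
    set t' : ι → V := fun c => if c ∈ I then (if (E c).Adj (s c) (t c) then t c else y c) else
      (if c = c₀ then b c₁ else x c) with ht'
    set I' : Finset ι := I ∪ insert c₀ A1 with hI'
    have hI'card : I'.card = I.card + (1 + A1.card) := by
      rw [hI', Finset.card_union_of_disjoint, Finset.card_insert_of_notMem hc₀A1, add_comm 1]
      rw [Finset.disjoint_right]
      intro d hd
      rcases Finset.mem_insert.1 hd with rfl | hd
      exacts [hIc₀, hIA d hd]
    have hadj' : ∀ c ∈ I', (E c).Adj (s' c) (t' c) := by
      intro c hc
      by_cases hcI : c ∈ I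
      · by_cases hco : (E c).Adj (s c) (t c)
        · simp only [hs', ht', hcI, hco, if_true]
        · simp only [hs', ht', hcI, hco, if_true, if_false]
          exact (huby c hcI hco).2.2.2.2
      · by_cases hcc : c = c₀
        · simp only [hs', ht', if_false, hcc, if_true, hIc₀]
          exact hB _ (huby c₁ hc₁ hc₁n).2.2.1
        · simp only [hs', ht', hcI, if_false, hcc]
          have : c ∈ A1 := by
            rcases Finset.mem_union.1 hc with h | h
            · exact absurd h hcI
            · exact (Finset.mem_insert.1 h).resolve_left hcc
          exact hx c (hA1A this)
    have hsupp : supp I' s' t' ⊆ supp I s t ∪ insert v (A1.image x) := by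
      intro z hz
      obtain ⟨c, hc, hz⟩ := mem_supp.1 hz
      by_cases hcI : c ∈ I
      · have hss : ∀ w, (w = s c ∨ w = t c) → w ∈ supp I s t ∪ insert v (A1.image x) := fun w hw =>
          Finset.mem_union_left _ (mem_supp.2 ⟨c, hcI, hw.imp Eq.symm Eq.symm⟩)
        by_cases hco : (E c).Adj (s c) (t c)
        · simp only [hs', ht', hcI, hco, if_true] at hz
          exact hss z (hz.imp Eq.symm Eq.symm)
        · simp only [hs', ht', hcI, hco, if_true, if_false] at hz
          obtain ⟨h1, h2, h3, h4, h5⟩ := huby c hcI hco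
          rcases hz with rfl | rfl
          · exact hss _ h1
          · refine Finset.mem_union_right _ ?_
            rcases (hXmem _).1 h4 with h | ⟨d, hd, h⟩
            · rw [h]; exact Finset.mem_insert_self _ _
            · rw [← h]
              exact Finset.mem_insert_of_mem (Finset.mem_image_of_mem _
                (Finset.mem_filter.2 ⟨hd, c, hcI, hco, h.symm⟩))
      · by_cases hcc : c = c₀
        · simp only [hs', ht', if_false, hcc, if_true, hIc₀] at hz
          rcases hz with rfl | rfl
          · exact Finset.mem_union_right _ (Finset.mem_insert_self _ _)
          · exact Finset.mem_union_left _ (mem_supp.2 ⟨c₁, hc₁,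
              (huby c₁ hc₁ hc₁n).2.1.imp Eq.symm Eq.symm⟩)
        · simp only [hs', ht', hcI, if_false, hcc] at hz
          have : c ∈ A1 := by
            rcases Finset.mem_union.1 hc with h | h
            · exact absurd h hcI
            · exact (Finset.mem_insert.1 h).resolve_left hcc
          rcases hz with rfl | rfl
          · exact Finset.mem_union_right _ (Finset.mem_insert_self _ _)
          · exact Finset.mem_union_right _ (Finset.mem_insert_of_mem
              (Finset.mem_image_of_mem _ this))
    have hcard' : (supp I' s' t').card ≤ I'.card := by
      have h1 := (Finset.card_le_card hsupp).trans (Finset.card_union_le _ _)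
      have h2 := Finset.card_insert_le v (A1.image x)
      have h3 := Finset.card_image_le (s := A1) (f := x)
      omega
    obtain ⟨I₂, hI₂, hI₂ne, hI₂card, hI₂deg⟩ := exists_degree_le_two I' s' t'
      (hIne.mono Finset.subset_union_left) (fun c hc => (hadj' c hc).ne) hcard'
    refine ⟨I₂, s', t', ?_, hI₂ne, fun c hc => hadj' c (hI₂ hc), hI₂card, ?_⟩
    · intro c hc
      rcases Finset.mem_union.1 (hI₂ hc) with h | h
      · exact (hJ'mem c (hIJ h)).1
      · rcases Finset.mem_insert.1 h with rfl | h
        exacts [hc₀, hA (hA1A h)]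
    · have h1 := hI₂deg v (I₂ \ I) Finset.sdiff_subset (by
        intro c hc
        left
        simp only [hs', (Finset.mem_sdiff.1 hc).2, if_false])
      have h2 := Finset.card_sdiff_add_card_inter I₂ I
      have h3 := Finset.card_le_card (Finset.inter_subset_right (s₁ := I₂) (s₂ := I))
      omega

/-! ### Random sampling -/

open Classical in
/-- A pairwise independent (or negatively correlated) way to sample each element of `L` with
probability `1 / r` so that the sample never has more than `|L| / r + 1` elements: cut `L` into
blocks of size `r` and choose one position in each block. -/
lemma exists_sampler {V : Type*} (L : Finset V) (r : ℕ) (hr : 0 < r) :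
    ∃ (Ω : Type) (_ : Fintype Ω) (_ : Nonempty Ω) (A : Ω → Finset V),
      (∀ ω, A ω ⊆ L ∧ (A ω).card * r ≤ L.card + r) ∧
      (∀ w ∈ L, (Finset.univ.filter fun ω => w ∈ A ω).card * r = Fintype.card Ω) ∧
      (∀ w ∈ L, ∀ u ∈ L, w ≠ u →
        (Finset.univ.filter fun ω => w ∈ A ω ∧ u ∈ A ω).card * r ^ 2 ≤ Fintype.card Ω) := by
  classical
  set N := L.card / r + 1 with hN
  have hNr : N * r ≤ L.card + r := by
    rw [hN, add_mul, one_mul]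
    exact Nat.add_le_add_right (Nat.div_mul_le_self _ _) _
  let e := L.equivFin
  -- block and position of an element
  let p : V → Fin N := fun v => if h : v ∈ L then
    ⟨(e ⟨v, h⟩ : ℕ) / r, Nat.lt_succ_of_le (Nat.div_le_div_right (e ⟨v, h⟩).2.le)⟩
    else ⟨0, Nat.succ_pos _⟩
  let q : V → Fin r := fun v => if h : v ∈ L then ⟨(e ⟨v, h⟩ : ℕ) % r, Nat.mod_lt _ hr⟩
    else ⟨0, hr⟩
  have hinj : ∀ v ∈ L, ∀ w ∈ L, p v = p w → q v = q w → v = w := by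
    intro v hv w hw h1 h2
    simp only [p, q, dif_pos hv, dif_pos hw, Fin.mk.injEq] at h1 h2
    have h3 : (e ⟨v, hv⟩ : ℕ) = e ⟨w, hw⟩ := by
      rw [← Nat.div_add_mod (e ⟨v, hv⟩ : ℕ) r, ← Nat.div_add_mod (e ⟨w, hw⟩ : ℕ) r, h1, h2]
    have := e.injective (Fin.ext h3)
    exact congrArg Subtype.val this
  refine ⟨Fin N → Fin r, inferInstance, ⟨fun _ => ⟨0, hr⟩⟩,
    fun ω => L.filter fun w => ω (p w) = q w, ?_, ?_, ?_⟩
  · intro ω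
    refine ⟨Finset.filter_subset _ _, le_trans (Nat.mul_le_mul_right r ?_) hNr⟩
    have := Finset.card_le_card_of_injOn (s := L.filter fun w => ω (p w) = q w)
      (t := (Finset.univ : Finset (Fin N))) p (fun _ _ => by simp) ?_
    · simpa using this
    · intro v hv w hw h
      simp only [Finset.coe_filter, Set.mem_ofPred_eq] at hv hw
      exact hinj v hv.1 w hw.1 h (by rw [← hv.2, ← hw.2, h])
  · intro w hw
    have h1 : (Finset.univ.filter fun ω : Fin N → Fin r =>
        w ∈ L.filter fun w => ω (p w) = q w).card = r ^ (N - 1) := by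
      have := Fintype.card_filter_piFinset_const (κ := Fin r) (ι := Fin N) Finset.univ (p w) (q w)
      simp only [Fintype.piFinset_univ, Finset.mem_univ, if_true, Finset.card_univ,
        Fintype.card_fin] at this
      simpa [Finset.mem_filter, hw] using this
    rw [h1, ← pow_succ, Fintype.card_fun, Fintype.card_fin, Fintype.card_fin]
    rfl
  · intro w hw u hu hwu
    by_cases hp : p w = p u
    · have : (Finset.univ.filter fun ω : Fin N → Fin r =>
        w ∈ (L.filter fun w => ω (p w) = q w) ∧ u ∈ L.filter fun w => ω (p w) = q w) = ∅ := by
        rw [Finset.filter_eq_empty_iff]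
        rintro ω - ⟨h1, h2⟩
        rw [Finset.mem_filter] at h1 h2
        exact hwu (hinj w hw u hu hp (by rw [← h1.2, ← h2.2, hp]))
      rw [this]; simp
    · -- resampling the two blocks gives an injection
      have := Finset.card_le_card_of_injOn
        (s := (Finset.univ.filter fun ω : Fin N → Fin r =>
          w ∈ (L.filter fun w => ω (p w) = q w) ∧ u ∈ L.filter fun w => ω (p w) = q w) ×ˢ
          (Finset.univ : Finset (Fin r × Fin r)))
        (t := (Finset.univ : Finset (Fin N → Fin r)))
        (fun z => Function.update (Function.update z.1 (p w) z.2.1) (p u) z.2.2)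
        (fun _ _ => by simp) ?_
      · rw [Finset.card_product, Finset.card_univ, Finset.card_univ, Fintype.card_prod,
          Fintype.card_fin] at this
        rw [pow_two]
        exact this
      · rintro ⟨ω, x, y⟩ hz ⟨ω', x', y'⟩ hz' h
        simp only [Finset.coe_product, Set.mem_prod, Finset.mem_coe, Finset.mem_filter,
          Finset.mem_univ, true_and, and_true, hw, hu] at hz hz'
        have hfun : ∀ i, Function.update (Function.update ω (p w) x) (p u) y i =
          Function.update (Function.update ω' (p w) x') (p u) y' i := fun i => congrFun h i
        have hy : y = y' := by simpa using hfun (p u)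
        have hx : x = x' := by simpa [Function.update_of_ne hp] using hfun (p w)
        have hω : ω = ω' := by
          funext i
          by_cases h1 : i = p u
          · rw [h1, hz.2, hz'.2]
          by_cases h2 : i = p w
          · rw [h2, hz.1, hz'.1]
          simpa [Function.update_of_ne h1, Function.update_of_ne h2] using hfun i
        rw [hω, hx, hy]

open Classical in
/-- The second moment method (Cauchy–Schwarz), in terms of counting. -/
lemma second_moment {Ω τ : Type*} [Fintype Ω] (T : Finset τ) (P : Ω → τ → Prop) :
    (∑ t ∈ T, (Finset.univ.filter fun ω => P ω t).card) ^ 2 ≤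
      (Finset.univ.filter fun ω => ∃ t ∈ T, P ω t).card *
        ∑ t ∈ T, ∑ t' ∈ T, (Finset.univ.filter fun ω => P ω t ∧ P ω t').card := by
  classical
  set X : Ω → ℕ := fun ω => ∑ t ∈ T, if P ω t then 1 else 0 with hX
  have h1 : ∑ t ∈ T, (Finset.univ.filter fun ω => P ω t).card =
      ∑ ω ∈ Finset.univ.filter (fun ω => ∃ t ∈ T, P ω t), X ω := by
    rw [Finset.sum_filter_of_ne]
    · rw [hX, Finset.sum_comm]
      simp only [Finset.card_filter]
    · intro ω _ hω
      obtain ⟨t, ht, h⟩ := Finset.exists_ne_zero_of_sum_ne_zero hω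
      exact ⟨t, ht, by by_contra h'; simp [h'] at h⟩
  have h2 : ∑ t ∈ T, ∑ t' ∈ T, (Finset.univ.filter fun ω => P ω t ∧ P ω t').card =
      ∑ ω, X ω ^ 2 := by
    simp only [Finset.card_filter, hX, pow_two, Finset.sum_mul_sum]
    rw [Finset.sum_comm]
    refine Eq.trans ?_ (Finset.sum_comm (s := T) (t := Finset.univ))
    refine Finset.sum_congr rfl fun t ht => ?_
    rw [Finset.sum_comm]
    refine Finset.sum_congr rfl fun ω _ => Finset.sum_congr rfl fun t' ht' => ?_
    by_cases a : P ω t <;> by_cases b : P ω t' <;> simp [a, b]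
  rw [h1, h2]
  refine sq_sum_le_card_mul_sum_sq.trans (Nat.mul_le_mul_left _ ?_)
  exact Finset.sum_le_sum_of_subset (Finset.filter_subset _ _)

open Classical in
/-- A `1 / r`-sample hits a given set of `t` elements with probability at least `t / (r + t)`. -/
lemma hit_prob {V Ω : Type*} [Fintype Ω] (L : Finset V) (r : ℕ) (hr : 0 < r) (A : Ω → Finset V)
    (h1 : ∀ w ∈ L, (Finset.univ.filter fun ω => w ∈ A ω).card * r = Fintype.card Ω)
    (h2 : ∀ w ∈ L, ∀ u ∈ L, w ≠ u →
      (Finset.univ.filter fun ω => w ∈ A ω ∧ u ∈ A ω).card * r ^ 2 ≤ Fintype.card Ω)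
    (W : Finset V) (hW : W ⊆ L) (t : ℕ) (ht : t ≤ W.card) :
    t * Fintype.card Ω ≤ (r + t) * (Finset.univ.filter fun ω => ∃ w ∈ W, w ∈ A ω).card := by
  obtain ⟨W', hW', rfl⟩ := Finset.exists_subset_card_eq ht
  have hmono : (Finset.univ.filter fun ω => ∃ w ∈ W', w ∈ A ω).card ≤
      (Finset.univ.filter fun ω => ∃ w ∈ W, w ∈ A ω).card :=
    Finset.card_le_card fun ω => by
      simp only [Finset.mem_filter, Finset.mem_univ, true_and]
      rintro ⟨w, hw, h⟩
      exact ⟨w, hW' hw, h⟩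
  refine le_trans ?_ (Nat.mul_le_mul_left _ hmono)
  set P := (Finset.univ.filter fun ω => ∃ w ∈ W', w ∈ A ω).card with hP
  have key : (∑ w ∈ W', (Finset.univ.filter fun ω => w ∈ A ω).card) ^ 2 ≤
      P * ∑ w ∈ W', ∑ u ∈ W', (Finset.univ.filter fun ω => w ∈ A ω ∧ u ∈ A ω).card := by
    convert second_moment W' (fun ω w => w ∈ A ω)
  set p := Fintype.card Ω
  have hr' : (0 : ℝ) < r := by exact_mod_cast hr
  have e1 : ∀ w ∈ L, ((Finset.univ.filter fun ω => w ∈ A ω).card : ℝ) = p / r := by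
    intro w hw
    rw [eq_div_iff hr'.ne']
    exact_mod_cast h1 w hw
  have e2 : ∀ w ∈ L, ∀ u ∈ L,
      ((Finset.univ.filter fun ω => w ∈ A ω ∧ u ∈ A ω).card : ℝ) ≤
        (if w = u then (p : ℝ) / r else 0) + p / r ^ 2 := by
    intro w hw u hu
    split_ifs with h
    · subst h
      simp only [and_self]
      rw [e1 w hw]
      have : (0 : ℝ) ≤ p / r ^ 2 := by positivity
      linarith
    · rw [zero_add, le_div_iff₀ (by positivity)]
      exact_mod_cast h2 w hw u hu h
  have key' : ((W'.card : ℝ) * (p / r)) ^ 2 ≤ P * (W'.card * (p / r + W'.card * (p / r ^ 2))) := by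
    calc ((W'.card : ℝ) * (p / r)) ^ 2
        = (∑ w ∈ W', ((Finset.univ.filter fun ω => w ∈ A ω).card : ℝ)) ^ 2 := by
          rw [Finset.sum_congr rfl fun w hw => e1 w (hW (hW' hw)), Finset.sum_const, nsmul_eq_mul]
      _ ≤ P * ∑ w ∈ W', ∑ u ∈ W',
            ((Finset.univ.filter fun ω => w ∈ A ω ∧ u ∈ A ω).card : ℝ) := by exact_mod_cast key
      _ ≤ P * ∑ w ∈ W', ∑ u ∈ W', ((if w = u then (p : ℝ) / r else 0) + p / r ^ 2) := by
          gcongr with w hw u hu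
          exact e2 w (hW (hW' hw)) u (hW (hW' hu))
      _ = _ := by
          congr 1
          rw [← nsmul_eq_mul, ← Finset.sum_const]
          refine Finset.sum_congr rfl fun w hw => ?_
          rw [Finset.sum_add_distrib, Finset.sum_ite_eq, if_pos hw, Finset.sum_const, nsmul_eq_mul]
  have goal : (W'.card : ℝ) * p ≤ (r + W'.card) * P := by
    rcases Nat.eq_zero_or_pos W'.card with h0 | h0
    · rw [h0]; simp only [Nat.cast_zero, zero_mul]; positivity
    rcases Nat.eq_zero_or_pos p with hp | hp
    · rw [hp]; simp only [Nat.cast_zero, mul_zero]; positivity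
    have h0' : (0 : ℝ) < W'.card := by exact_mod_cast h0
    have hp' : (0 : ℝ) < p := by exact_mod_cast hp
    have hc : (0 : ℝ) < W'.card * p / r ^ 2 := by positivity
    refine le_of_mul_le_mul_left ?_ hc
    calc (W'.card * p / r ^ 2 : ℝ) * (W'.card * p) = ((W'.card : ℝ) * (p / r)) ^ 2 := by ring
      _ ≤ _ := key'
      _ = _ := by field_simp
  exact_mod_cast goal

open Classical in
/-- If at least `126 r` pairs have all their in- and outdegrees at most `6 r`, then two independent
`1 / r`-samples contain the two ends of some pair with probability at least `9 / r`. -/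
lemma pair_hit_prob {V Ω : Type*} [Fintype Ω] (L : Finset V) (r : ℕ) (hr : 126 ≤ r)
    (A : Ω → Finset V)
    (h1 : ∀ w ∈ L, (Finset.univ.filter fun ω => w ∈ A ω).card * r = Fintype.card Ω)
    (h2 : ∀ w ∈ L, ∀ u ∈ L, w ≠ u →
      (Finset.univ.filter fun ω => w ∈ A ω ∧ u ∈ A ω).card * r ^ 2 ≤ Fintype.card Ω)
    (F : Finset (V × V)) (hF : ∀ e ∈ F, e.1 ∈ L ∧ e.2 ∈ L) (hcard : 126 * r ≤ F.card)
    (ho : ∀ w, (F.filter fun e => e.1 = w).card ≤ 6 * r)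
    (hi : ∀ w, (F.filter fun e => e.2 = w).card ≤ 6 * r) :
    9 * Fintype.card (Ω × Ω) ≤ r *
      (Finset.univ.filter fun ω : Ω × Ω => ∃ e ∈ F, e.1 ∈ A ω.1 ∧ e.2 ∈ A ω.2).card := by
  obtain ⟨F', hF', hF'c⟩ := Finset.exists_subset_card_eq hcard
  have hmono : (Finset.univ.filter fun ω : Ω × Ω => ∃ e ∈ F', e.1 ∈ A ω.1 ∧ e.2 ∈ A ω.2).card ≤
      (Finset.univ.filter fun ω : Ω × Ω => ∃ e ∈ F, e.1 ∈ A ω.1 ∧ e.2 ∈ A ω.2).card :=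
    Finset.card_le_card fun ω => by
      simp only [Finset.mem_filter, Finset.mem_univ, true_and]
      rintro ⟨w, hw, h⟩
      exact ⟨w, hF' hw, h⟩
  refine le_trans ?_ (Nat.mul_le_mul_left _ hmono)
  set P := (Finset.univ.filter fun ω : Ω × Ω => ∃ e ∈ F', e.1 ∈ A ω.1 ∧ e.2 ∈ A ω.2).card
  have key : (∑ e ∈ F', (Finset.univ.filter fun ω : Ω × Ω =>
      e.1 ∈ A ω.1 ∧ e.2 ∈ A ω.2).card) ^ 2 ≤
      P * ∑ e ∈ F', ∑ f ∈ F', (Finset.univ.filter fun ω : Ω × Ω =>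
        (e.1 ∈ A ω.1 ∧ e.2 ∈ A ω.2) ∧ (f.1 ∈ A ω.1 ∧ f.2 ∈ A ω.2)).card := by
    convert second_moment F' (fun (ω : Ω × Ω) e => e.1 ∈ A ω.1 ∧ e.2 ∈ A ω.2)
  rw [Fintype.card_prod]
  set p := Fintype.card Ω
  have hr126 : (126 : ℝ) ≤ r := by exact_mod_cast hr
  have hr' : (0 : ℝ) < r := by linarith
  have hF'c' : (F'.card : ℝ) = 126 * r := by exact_mod_cast hF'c
  have e1 : ∀ w ∈ L, ((Finset.univ.filter fun ω => w ∈ A ω).card : ℝ) = p / r := by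
    intro w hw
    rw [eq_div_iff hr'.ne']
    exact_mod_cast h1 w hw
  have e2 : ∀ w ∈ L, ∀ u ∈ L,
      ((Finset.univ.filter fun ω => w ∈ A ω ∧ u ∈ A ω).card : ℝ) ≤
        if w = u then (p : ℝ) / r else p / r ^ 2 := by
    intro w hw u hu
    split_ifs with h
    · subst h
      simp only [and_self]
      rw [e1 w hw]
    · rw [le_div_iff₀ (by positivity)]
      exact_mod_cast h2 w hw u hu h
  have f1 : ∀ e ∈ F', ((Finset.univ.filter fun ω : Ω × Ω => e.1 ∈ A ω.1 ∧ e.2 ∈ A ω.2).card : ℝ)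
      = p ^ 2 / r ^ 2 := by
    intro e he
    have hsplit : (Finset.univ.filter fun ω : Ω × Ω => e.1 ∈ A ω.1 ∧ e.2 ∈ A ω.2) =
        (Finset.univ.filter fun a => e.1 ∈ A a) ×ˢ (Finset.univ.filter fun a => e.2 ∈ A a) := by
      ext ω
      simp only [Finset.mem_filter, Finset.mem_univ, true_and, Finset.mem_product]
    rw [hsplit, Finset.card_product, Nat.cast_mul, e1 _ (hF e (hF' he)).1, e1 _ (hF e (hF' he)).2]
    ring
  have f2 : ∀ e ∈ F', ∀ f ∈ F', ((Finset.univ.filter fun ω : Ω × Ω =>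
      (e.1 ∈ A ω.1 ∧ e.2 ∈ A ω.2) ∧ (f.1 ∈ A ω.1 ∧ f.2 ∈ A ω.2)).card : ℝ) ≤
      (if f = e then (p : ℝ) ^ 2 / r ^ 2 else 0) + (if f.1 = e.1 then (p : ℝ) ^ 2 / r ^ 3 else 0) +
        (if f.2 = e.2 then (p : ℝ) ^ 2 / r ^ 3 else 0) + p ^ 2 / r ^ 4 := by
    intro e he f hf
    have hsplit : (Finset.univ.filter fun ω : Ω × Ω =>
        (e.1 ∈ A ω.1 ∧ e.2 ∈ A ω.2) ∧ (f.1 ∈ A ω.1 ∧ f.2 ∈ A ω.2)) =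
        (Finset.univ.filter fun a => e.1 ∈ A a ∧ f.1 ∈ A a) ×ˢ
          (Finset.univ.filter fun a => e.2 ∈ A a ∧ f.2 ∈ A a) := by
      ext ω
      simp only [Finset.mem_filter, Finset.mem_univ, true_and, Finset.mem_product]
      tauto
    rw [hsplit, Finset.card_product, Nat.cast_mul]
    refine (mul_le_mul (e2 _ (hF e (hF' he)).1 _ (hF f (hF' hf)).1)
      (e2 _ (hF e (hF' he)).2 _ (hF f (hF' hf)).2) (by positivity) (by positivity)).trans ?_
    have n2 : (0 : ℝ) ≤ p ^ 2 / r ^ 2 := by positivity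
    have n3 : (0 : ℝ) ≤ p ^ 2 / r ^ 3 := by positivity
    have n4 : (0 : ℝ) ≤ p ^ 2 / r ^ 4 := by positivity
    have g2 : (p : ℝ) / r * (p / r) = p ^ 2 / r ^ 2 := by ring
    have g3 : (p : ℝ) / r * (p / r ^ 2) = p ^ 2 / r ^ 3 := by ring
    have g3' : (p : ℝ) / r ^ 2 * (p / r) = p ^ 2 / r ^ 3 := by ring
    have g4 : (p : ℝ) / r ^ 2 * (p / r ^ 2) = p ^ 2 / r ^ 4 := by ring
    by_cases ha : e.1 = f.1 <;> by_cases hb : e.2 = f.2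
    · have hef : f = e := Prod.ext ha.symm hb.symm
      rw [if_pos ha, if_pos hb, if_pos hef, if_pos ha.symm, if_pos hb.symm, g2]
      linarith
    · rw [if_pos ha, if_neg hb, if_pos ha.symm, if_neg (Ne.symm hb), g3]
      split_ifs <;> linarith
    · rw [if_neg ha, if_pos hb, if_neg (Ne.symm ha), if_pos hb.symm, g3']
      split_ifs <;> linarith
    · rw [if_neg ha, if_neg hb, if_neg (Ne.symm ha), if_neg (Ne.symm hb), g4]
      split_ifs <;> linarith
  have frow : ∀ e ∈ F', ∑ f ∈ F', ((Finset.univ.filter fun ω : Ω × Ω =>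
      (e.1 ∈ A ω.1 ∧ e.2 ∈ A ω.2) ∧ (f.1 ∈ A ω.1 ∧ f.2 ∈ A ω.2)).card : ℝ) ≤
      14 * (p ^ 2 / r ^ 2) := by
    intro e he
    refine (Finset.sum_le_sum fun f hf => f2 e he f hf).trans ?_
    rw [Finset.sum_add_distrib, Finset.sum_add_distrib, Finset.sum_add_distrib,
      Finset.sum_ite_eq', if_pos he, Finset.sum_const, nsmul_eq_mul, hF'c', ← Finset.sum_filter,
      ← Finset.sum_filter, Finset.sum_const, Finset.sum_const, nsmul_eq_mul, nsmul_eq_mul]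
    have d1 : ((F'.filter fun f => f.1 = e.1).card : ℝ) ≤ 6 * r := by
      exact_mod_cast (Finset.card_le_card (Finset.filter_subset_filter _ hF')).trans (ho e.1)
    have d2 : ((F'.filter fun f => f.2 = e.2).card : ℝ) ≤ 6 * r := by
      exact_mod_cast (Finset.card_le_card (Finset.filter_subset_filter _ hF')).trans (hi e.2)
    have n3 : (0 : ℝ) ≤ p ^ 2 / r ^ 3 := by positivity
    have m1 := mul_le_mul_of_nonneg_right d1 n3
    have m2 := mul_le_mul_of_nonneg_right d2 n3
    have m3 : 6 * (r : ℝ) * (p ^ 2 / r ^ 3) = 6 * (p ^ 2 / r ^ 2) := by field_simp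
    have m4 : 126 * (r : ℝ) * (p ^ 2 / r ^ 4) ≤ p ^ 2 / r ^ 2 := by
      have : 126 * (r : ℝ) * (p ^ 2 / r ^ 4) = (126 / r) * (p ^ 2 / r ^ 2) := by field_simp
      rw [this]
      refine mul_le_of_le_one_left (by positivity) ?_
      rwa [div_le_one hr']
    linarith
  have key' : (126 * r * (p ^ 2 / r ^ 2) : ℝ) ^ 2 ≤ P * (126 * r * (14 * (p ^ 2 / r ^ 2))) := by
    calc (126 * r * (p ^ 2 / r ^ 2) : ℝ) ^ 2
        = (∑ e ∈ F', ((Finset.univ.filter fun ω : Ω × Ω =>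
            e.1 ∈ A ω.1 ∧ e.2 ∈ A ω.2).card : ℝ)) ^ 2 := by
          rw [Finset.sum_congr rfl f1, Finset.sum_const, nsmul_eq_mul, hF'c']
      _ ≤ P * ∑ e ∈ F', ∑ f ∈ F', ((Finset.univ.filter fun ω : Ω × Ω =>
            (e.1 ∈ A ω.1 ∧ e.2 ∈ A ω.2) ∧ (f.1 ∈ A ω.1 ∧ f.2 ∈ A ω.2)).card : ℝ) := by
          exact_mod_cast key
      _ ≤ P * ∑ e ∈ F', (14 * (p ^ 2 / r ^ 2) : ℝ) := by
          gcongr with e he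
          exact frow e he
      _ = _ := by rw [Finset.sum_const, nsmul_eq_mul, hF'c']
  have goal : 9 * ((p : ℝ) * p) ≤ r * P := by
    rcases Nat.eq_zero_or_pos p with hp | hp
    · rw [hp]; simp only [Nat.cast_zero, mul_zero]; positivity
    have hp' : (0 : ℝ) < p := by exact_mod_cast hp
    have hc : (0 : ℝ) < 1764 * (p ^ 2 / r ^ 2) := by positivity
    refine le_of_mul_le_mul_left ?_ hc
    calc 1764 * ((p : ℝ) ^ 2 / r ^ 2) * (9 * (p * p)) = (126 * r * (p ^ 2 / r ^ 2) : ℝ) ^ 2 := by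
          field_simp; norm_num
      _ ≤ _ := key'
      _ = _ := by ring
  exact_mod_cast goal

/-! ### The irreducible case -/

/-- A maximal matching between vertices and colors: every unmatched color `c ∈ Q` is related only
to matched vertices. -/
lemma exists_matching {V ι : Type*} (S : Finset V) (J : Finset ι) (h : V → ι → Prop)
    (hJ : J.Nonempty) (hJS : S.card ≤ J.card) :
    ∃ (H : Finset V) (col : V → ι) (Q : Finset ι), H ⊆ S ∧ Q ⊆ J ∧ Set.InjOn col H ∧
      (∀ v ∈ H, col v ∈ J ∧ h v (col v) ∧ col v ∉ Q) ∧ S.card ≤ Q.card + H.card ∧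
      ∀ c ∈ Q, ∀ v ∈ S, h v c → v ∈ H := by
  classical
  obtain ⟨c₀, -⟩ := hJ
  let 𝓗 : Finset (Finset V) := S.powerset.filter fun H =>
    ∃ col : V → ι, Set.InjOn col H ∧ ∀ v ∈ H, col v ∈ J ∧ h v (col v)
  have h𝓗 : 𝓗.Nonempty := ⟨∅, by
    simp only [𝓗, Finset.mem_filter, Finset.mem_powerset, Finset.empty_subset, true_and]
    exact ⟨fun _ => c₀, by simp, by simp⟩⟩
  obtain ⟨H, hH, hmax⟩ := Finset.exists_max_image 𝓗 Finset.card h𝓗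
  simp only [𝓗, Finset.mem_filter, Finset.mem_powerset] at hH hmax
  obtain ⟨hHS, col, hinj, hcol⟩ := hH
  refine ⟨H, col, J \ H.image col, hHS, Finset.sdiff_subset, hinj, ?_, ?_, ?_⟩
  · intro v hv
    refine ⟨(hcol v hv).1, (hcol v hv).2, ?_⟩
    simp only [Finset.mem_sdiff, not_and, not_not]
    exact fun _ => Finset.mem_image_of_mem _ hv
  · have := Finset.le_card_sdiff (H.image col) J
    have h2 : (H.image col).card ≤ H.card := Finset.card_image_le
    omega
  · intro c hc v hvS hvc
    by_contra hvH
    obtain ⟨hcJ, hcI⟩ := Finset.mem_sdiff.1 hc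
    have hne : ∀ u ∈ H, u ≠ v := fun u hu e => hvH (e ▸ hu)
    have := hmax (insert v H) ⟨Finset.insert_subset hvS hHS, Function.update col v c, ?_, ?_⟩
    · rw [Finset.card_insert_of_notMem hvH] at this
      omega
    · rw [Finset.coe_insert, Set.injOn_insert (by simpa using hvH)]
      constructor
      · intro x hx y hy hxy
        rw [Function.update_of_ne (hne x hx), Function.update_of_ne (hne y hy)] at hxy
        exact hinj hx hy hxy
      · rintro ⟨u, hu, hu'⟩
        rw [Function.update_of_ne (hne u hu), Function.update_self] at hu'
        exact hcI (hu' ▸ Finset.mem_image_of_mem col hu)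
    · intro u hu
      rcases Finset.mem_insert.1 hu with rfl | hu
      · rw [Function.update_self]; exact ⟨hcJ, hvc⟩
      · rw [Function.update_of_ne (hne u hu)]; exact hcol u hu

open Classical in
/-- Suppose every `v ∈ H` has a large set `nb v` of out-neighbors while in-degrees inside `H` are
small. Then following out-neighbors inside `H` one reaches, in logarithmically many steps, a
vertex many of whose out-neighbors lie outside `H`. The step from `v` goes to `par v`, the rank
`rk v` bounds the number of steps, and `root v` is the vertex of rank `0` that is reached.

The reason is that the set of vertices from which this takes more than `i + 1` steps is at most
half as large as the set of those from which it takes more than `i` steps. -/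
lemma exists_levels {V : Type*} (H : Finset V) (nb : V → Finset V) (h K : ℕ) (hK : 2 * K ≤ h)
    (hpos : 0 < h) (hnb : ∀ v ∈ H, 2 * h ≤ (nb v).card)
    (hin : ∀ u ∈ H, (H.filter fun v => u ∈ nb v).card ≤ K) :
    ∃ (par root : V → V) (rk : V → ℕ),
      (∀ v ∈ H, rk v ≤ Nat.log 2 (H.card / h) + 2) ∧
      (∀ v ∈ H, rk v = 0 → h ≤ (nb v \ H).card) ∧
      (∀ v ∈ H, rk v ≠ 0 → par v ∈ nb v ∧ par v ∈ H ∧ rk (par v) < rk v ∧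
        root v = root (par v)) ∧
      ∀ v ∈ H, root v ∈ H ∧ rk (root v) = 0 ∧ (rk v = 0 → root v = v) := by
  -- `U i` is the set of vertices from which more than `i` steps are needed
  obtain ⟨U, U0, Us⟩ : ∃ U : ℕ → Finset V, U 0 = H.filter (fun v => (nb v \ H).card < h) ∧
      ∀ i, U (i + 1) = (U i).filter fun v : V => ∀ u ∈ nb v, u ∈ H → u ∈ U i :=
    ⟨fun i => Nat.rec (motive := fun _ => Finset V) (H.filter fun v => (nb v \ H).card < h)
      (fun _ (T : Finset V) => T.filter fun v : V => ∀ u ∈ nb v, u ∈ H → u ∈ T) i,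
      rfl, fun _ => rfl⟩
  have UH0 : ∀ i, U i ⊆ U 0 := by
    intro i
    induction i with
    | zero => exact subset_rfl
    | succ i ih => rw [Us]; exact (Finset.filter_subset _ _).trans ih
  have UH : ∀ i, U i ⊆ H := fun i => (UH0 i).trans (U0 ▸ Finset.filter_subset _ _)
  have hsub : ∀ i, ∀ v ∈ U (i + 1), h ≤ ((U i).filter fun u => u ∈ nb v).card := by
    intro i v hv
    have hv0 := UH0 _ hv
    rw [U0, Finset.mem_filter] at hv0
    rw [Us, Finset.mem_filter] at hv
    have e1 := Finset.card_inter_add_card_sdiff (nb v) H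
    have e2 := hnb v hv0.1
    have e3 : (nb v ∩ H).card ≤ ((U i).filter fun u => u ∈ nb v).card := by
      refine Finset.card_le_card fun u hu => ?_
      rw [Finset.mem_inter] at hu
      exact Finset.mem_filter.2 ⟨hv.2 u hu.1 hu.2, hu.1⟩
    omega
  have hhalf : ∀ i, 2 * (U (i + 1)).card ≤ (U i).card := by
    intro i
    have h1 : (U (i + 1)).card * h ≤ (U i).card * K := by
      calc (U (i + 1)).card * h ≤ ∑ v ∈ U (i + 1), ((U i).filter fun u => u ∈ nb v).card := by
            rw [← smul_eq_mul]
            exact Finset.card_nsmul_le_sum _ _ _ (hsub i)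
        _ = ∑ u ∈ U i, ((U (i + 1)).filter fun v => u ∈ nb v).card := by
            simp only [Finset.card_filter]
            exact Finset.sum_comm
        _ ≤ (U i).card * K := by
            rw [← smul_eq_mul]
            refine Finset.sum_le_card_nsmul _ _ _ fun u hu => ?_
            exact (Finset.card_le_card (Finset.filter_subset_filter _ (UH _))).trans
              (hin u (UH _ hu))
    have h2 : (U i).card * (2 * K) ≤ (U i).card * h := Nat.mul_le_mul_left _ hK
    have h3 : (2 * (U (i + 1)).card) * h ≤ (U i).card * h := by nlinarith
    exact Nat.le_of_mul_le_mul_right h3 hpos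
  have hpow : ∀ i, 2 ^ i * (U i).card ≤ H.card := by
    intro i
    induction i with
    | zero => simpa using Finset.card_le_card (UH 0)
    | succ i ih =>
      have := Nat.mul_le_mul_left (2 ^ i) (hhalf i)
      rw [pow_succ, mul_assoc]
      exact this.trans ih
  have hend : U (Nat.log 2 (H.card / h) + 2) = ∅ := by
    by_contra hne
    obtain ⟨v, hv⟩ := Finset.nonempty_iff_ne_empty.2 hne
    have h1 := (hsub _ v hv).trans (Finset.card_le_card (Finset.filter_subset _ _))
    have h2 := (Nat.mul_le_mul_left (2 ^ (Nat.log 2 (H.card / h) + 1)) h1).trans (hpow _)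
    have h3 := Nat.lt_pow_succ_log_self (b := 2) (by norm_num) (H.card / h)
    rw [← Nat.le_div_iff_mul_le hpos] at h2
    exact absurd h2 (not_le.2 h3)
  have hex : ∀ v, ∃ i, v ∉ U i := fun v => ⟨_, by rw [hend]; simp⟩
  let rk : V → ℕ := fun v => Nat.find (hex v)
  have hrkd : ∀ v, rk v ≤ Nat.log 2 (H.card / h) + 2 := fun v =>
    Nat.find_min' (hex v) (by rw [hend]; simp)
  have hpar : ∀ v, ∃ u, v ∈ H → rk v ≠ 0 → u ∈ nb v ∧ u ∈ H ∧ rk u < rk v := by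
    intro v
    by_cases hv : v ∈ H ∧ rk v ≠ 0
    · obtain ⟨i, hi⟩ := Nat.exists_eq_succ_of_ne_zero hv.2
      have h1 : v ∉ U (i + 1) := by
        have := Nat.find_spec (hex v)
        change v ∉ U (rk v) at this
        rwa [hi] at this
      have h2 : v ∈ U i := by
        have := Nat.find_min (hex v) (m := i) (by change i < rk v; omega)
        exact not_not.1 this
      rw [Us, Finset.mem_filter, not_and] at h1
      have h3 := h1 h2
      push Not at h3
      obtain ⟨u, hu, huH, hui⟩ := h3
      refine ⟨u, fun _ _ => ⟨hu, huH, ?_⟩⟩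
      have : rk u ≤ i := Nat.find_min' (hex u) hui
      omega
    · exact ⟨v, fun a b => absurd ⟨a, b⟩ hv⟩
  choose par hpar using hpar
  -- end at rank `0` and iterate sufficiently often
  obtain ⟨st, st0, st1⟩ : ∃ st : V → V, (∀ v, rk v = 0 → st v = v) ∧
      ∀ v, rk v ≠ 0 → st v = par v :=
    ⟨fun v => if rk v = 0 then v else par v, fun v hv => if_pos hv, fun v hv => if_neg hv⟩
  set d := Nat.log 2 (H.card / h) + 2 with hd
  have hst : ∀ n, ∀ v ∈ H, st^[n] v ∈ H ∧ rk (st^[n] v) ≤ rk v - n := by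
    intro n
    induction n with
    | zero => intro v hv; simpa using hv
    | succ n ih =>
      intro v hv
      obtain ⟨h1, h2⟩ := ih v hv
      rw [Function.iterate_succ_apply']
      by_cases h0 : rk (st^[n] v) = 0
      · rw [st0 _ h0, h0]
        exact ⟨h1, Nat.zero_le _⟩
      · have := hpar _ h1 h0
        rw [st1 _ h0]
        exact ⟨this.2.1, by omega⟩
  have hroot0 : ∀ v ∈ H, rk (st^[d] v) = 0 := fun v hv => by
    have := (hst d v hv).2
    have := hrkd v
    omega
  refine ⟨par, st^[d], rk, fun v _ => hrkd v, ?_, ?_, ?_⟩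
  · intro v hv h0
    have : v ∉ U 0 := by
      have := Nat.find_spec (hex v)
      change v ∉ U (rk v) at this
      rwa [h0] at this
    rw [U0, Finset.mem_filter, not_and] at this
    exact not_lt.1 (this hv)
  · intro v hv h0
    obtain ⟨h1, h2, h3⟩ := hpar v hv h0
    refine ⟨h1, h2, h3, ?_⟩
    rw [← st1 v h0, ← Function.iterate_succ_apply st d v, Function.iterate_succ_apply' st d v,
      st0 _ (hroot0 v hv)]
  · intro v hv
    refine ⟨(hst d v hv).1, hroot0 v hv, fun h0 => ?_⟩
    exact Function.iterate_fixed (st0 v h0) d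

open Classical in
/-- Take two independent `1 / r`-samples `A ω.1`, `A ω.2` of the set `L`. A vertex `v ∈ H` is alive
if the first sample hits a prescribed set `W v ⊆ L` of size at least `3 r`. Then every graph that is
not too small and has no heavy vertex outside `H` has, with probability at least `9 / r`, an edge
all of whose ends are alive or sampled.

There are three cases: some edge has both ends in `H`; at least `24` vertices of `L` have a neighbor
in `H`; or almost all edges join two vertices of `L`, and the second moment method applies. -/
lemma survival_prob {V Ω : Type*} [Fintype Ω] (L H : Finset V) (r : ℕ) (hr : 126 ≤ r)
    (A : Ω → Finset V)
    (h1 : ∀ w ∈ L, (Finset.univ.filter fun ω => w ∈ A ω).card * r = Fintype.card Ω)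
    (h2 : ∀ w ∈ L, ∀ u ∈ L, w ≠ u →
      (Finset.univ.filter fun ω => w ∈ A ω ∧ u ∈ A ω).card * r ^ 2 ≤ Fintype.card Ω)
    (W : V → Finset V) (hW : ∀ v ∈ H, W v ⊆ L ∧ 3 * r ≤ (W v).card)
    (G : SimpleGraph V) (hG : ∀ u v, G.Adj u v → u ∈ L ∨ u ∈ H)
    (hheavy : ∀ v, Heavy G (6 * r) v → v ∈ H) (hgood : Good G (6 * r) (414 * r)) :
    9 * Fintype.card (Ω × Ω) ≤ r * (Finset.univ.filter fun ω : Ω × Ω => ∃ u v, G.Adj u v ∧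
      ((u ∈ H ∧ ∃ w ∈ W u, w ∈ A ω.1) ∨ u ∈ A ω.1 ∨ u ∈ A ω.2) ∧
      ((v ∈ H ∧ ∃ w ∈ W v, w ∈ A ω.1) ∨ v ∈ A ω.1 ∨ v ∈ A ω.2)).card := by
  set Sv := (Finset.univ.filter fun ω : Ω × Ω => ∃ u v, G.Adj u v ∧
      ((u ∈ H ∧ ∃ w ∈ W u, w ∈ A ω.1) ∨ u ∈ A ω.1 ∨ u ∈ A ω.2) ∧
      ((v ∈ H ∧ ∃ w ∈ W v, w ∈ A ω.1) ∨ v ∈ A ω.1 ∨ v ∈ A ω.2)) with hSv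
  have hr0 : 0 < r := by omega
  rw [Fintype.card_prod]
  set p := Fintype.card Ω with hp
  let al : V → Finset Ω := fun v => Finset.univ.filter fun ω => ∃ w ∈ W v, w ∈ A ω
  have hal : ∀ v ∈ H, 3 * p ≤ 4 * (al v).card := by
    intro v hv
    have := hit_prob L r hr0 A h1 h2 (W v) (hW v hv).1 (3 * r) (hW v hv).2
    have h3 : r * (3 * p) ≤ r * (4 * (al v).card) := by
      calc r * (3 * p) = 3 * r * p := by ring
        _ ≤ _ := this
        _ = _ := by ring
    exact Nat.le_of_mul_le_mul_left h3 hr0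
  by_cases ha : ∃ u v, G.Adj u v ∧ u ∈ H ∧ v ∈ H
  · obtain ⟨u, v, huv, hu, hv⟩ := ha
    have hsub : (al u ∩ al v) ×ˢ (Finset.univ : Finset Ω) ⊆ Sv := by
      intro ω hω
      simp only [Finset.mem_product, Finset.mem_inter, Finset.mem_univ, and_true, al,
        Finset.mem_filter, true_and] at hω
      rw [hSv, Finset.mem_filter]
      exact ⟨Finset.mem_univ _, u, v, huv, Or.inl ⟨hu, hω.1⟩, Or.inl ⟨hv, hω.2⟩⟩
    have h3 := Finset.card_le_card hsub
    rw [Finset.card_product, Finset.card_univ, ← hp] at h3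
    have h4 := Finset.card_union_add_card_inter (al u) (al v)
    have h5 : (al u ∪ al v).card ≤ p := Finset.card_le_univ _
    have h6 := hal u hu
    have h7 := hal v hv
    have h8 : p ≤ 2 * (al u ∩ al v).card := by omega
    calc 9 * (p * p) ≤ 9 * (2 * (al u ∩ al v).card * p) := by gcongr
      _ = 18 * ((al u ∩ al v).card * p) := by ring
      _ ≤ r * Sv.card := Nat.mul_le_mul (by omega) h3
  -- the vertices of `L` with a neighbor in `H`
  set X := L.filter fun w => ∃ y ∈ H, G.Adj w y with hX
  by_cases hb : 24 ≤ X.card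
  · have hy : ∀ w, ∃ y, w ∈ X → y ∈ H ∧ G.Adj w y := by
      intro w
      by_cases hw : w ∈ X
      · obtain ⟨y, hy⟩ := (Finset.mem_filter.1 hw).2
        exact ⟨y, fun _ => hy⟩
      · exact ⟨w, fun h => absurd h hw⟩
    choose y hy using hy
    set hit := Finset.univ.filter fun ω => ∃ w ∈ X, w ∈ A ω with hhit
    have hhitp := hit_prob L r hr0 A h1 h2 X (Finset.filter_subset _ _) 24 hb
    have hz : ∀ ω, ∃ w, ω ∈ hit → w ∈ X ∧ w ∈ A ω := by
      intro ω
      by_cases hω : ω ∈ hit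
      · obtain ⟨w, hw⟩ := (Finset.mem_filter.1 hω).2
        exact ⟨w, fun _ => hw⟩
      · by_cases hV : Nonempty V
        · exact ⟨hV.some, fun h => absurd h hω⟩
        · have : 0 < X.card := by omega
          obtain ⟨w, -⟩ := Finset.card_pos.1 this
          exact absurd ⟨w⟩ hV
    choose z hz using hz
    have hcard : hit.card * (3 * p) ≤ 4 * Sv.card := by
      calc hit.card * (3 * p) ≤ ∑ ω ∈ hit, 4 * (al (y (z ω))).card := by
            rw [← smul_eq_mul]
            exact Finset.card_nsmul_le_sum _ _ _ fun ω hω => hal _ (hy _ (hz ω hω).1).1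
        _ = 4 * (hit.sigma fun ω => al (y (z ω))).card := by
            rw [Finset.card_sigma, Finset.mul_sum]
        _ ≤ 4 * Sv.card := by
            refine Nat.mul_le_mul_left _ ?_
            refine Finset.card_le_card_of_injOn (fun a => (a.2, a.1)) ?_ ?_
            · rintro ⟨ω2, ω1⟩ ha
              rw [Finset.mem_coe, Finset.mem_sigma] at ha
              obtain ⟨ha1, ha2⟩ := ha
              simp only [al, Finset.mem_filter, Finset.mem_univ, true_and] at ha2
              obtain ⟨hzX, hzA⟩ := hz _ ha1
              obtain ⟨hyH, hyadj⟩ := hy _ hzX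
              rw [hSv, Finset.mem_coe, Finset.mem_filter]
              exact ⟨Finset.mem_univ _, z ω2, y (z ω2), hyadj, Or.inr (Or.inr hzA),
                Or.inl ⟨hyH, ha2⟩⟩
            · rintro ⟨a, b⟩ - ⟨c, d⟩ - h
              simp only [Prod.mk.injEq] at h
              rw [h.1, h.2]
    have h3 : (r + 24) * (9 * (p * p)) ≤ (r + 24) * (r * Sv.card) := by
      calc (r + 24) * (9 * (p * p)) ≤ (2 * r) * (9 * (p * p)) := by gcongr; omega
        _ = (r * (3 * p) * (24 * p)) / 4 := by
            rw [show r * (3 * p) * (24 * p) = 4 * (2 * r * (9 * (p * p))) by ring]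
            exact (Nat.mul_div_cancel_left _ (by norm_num)).symm
        _ ≤ (r * (3 * p) * ((r + 24) * hit.card)) / 4 := by gcongr
        _ = (r * (r + 24) * (hit.card * (3 * p))) / 4 := by congr 1; ring
        _ ≤ (r * (r + 24) * (4 * Sv.card)) / 4 := by gcongr
        _ = (r + 24) * (r * Sv.card) := by
            rw [show r * (r + 24) * (4 * Sv.card) = 4 * ((r + 24) * (r * Sv.card)) by ring]
            exact Nat.mul_div_cancel_left _ (by norm_num)
    exact Nat.le_of_mul_le_mul_left h3 (by omega)
  -- now no vertex is heavy
  have hLH : ∀ u v, G.Adj u v → u ∈ H → v ∈ X := by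
    intro u v huv hu
    have hv : v ∉ H := fun hv => ha ⟨u, v, huv, hu, hv⟩
    exact Finset.mem_filter.2 ⟨(hG v u huv.symm).resolve_right hv, u, hu, huv.symm⟩
  have hnh : ∀ v, ¬ Heavy G (6 * r) v := by
    intro v hv
    have hvH := hheavy v hv
    obtain ⟨B, hB, hBadj⟩ := hv
    have : B.card ≤ X.card := Finset.card_le_card fun x hx => hLH v x (hBadj x hx) hvH
    omega
  obtain ⟨F, hF, hFadj⟩ : ∃ F : Finset (V × V), 414 * r ≤ F.card ∧ ∀ q ∈ F, G.Adj q.1 q.2 := by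
    rcases hgood with ⟨v, hv⟩ | h
    · exact absurd hv (hnh v)
    · exact h
  have ho : ∀ w, (F.filter fun e => e.1 = w).card ≤ 6 * r := by
    intro w
    by_contra hlt
    refine hnh w ⟨(F.filter fun e => e.1 = w).image Prod.snd, ?_, ?_⟩
    · rw [Finset.card_image_of_injOn]
      · omega
      · intro a ha b hb hab
        exact Prod.ext ((Finset.mem_filter.1 ha).2.trans (Finset.mem_filter.1 hb).2.symm) hab
    · intro x hx
      obtain ⟨e, he, rfl⟩ := Finset.mem_image.1 hx
      obtain ⟨heF, rfl⟩ := Finset.mem_filter.1 he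
      exact hFadj e heF
  have hi : ∀ w, (F.filter fun e => e.2 = w).card ≤ 6 * r := by
    intro w
    by_contra hlt
    refine hnh w ⟨(F.filter fun e => e.2 = w).image Prod.fst, ?_, ?_⟩
    · rw [Finset.card_image_of_injOn]
      · omega
      · intro a ha b hb hab
        exact Prod.ext hab ((Finset.mem_filter.1 ha).2.trans (Finset.mem_filter.1 hb).2.symm)
    · intro x hx
      obtain ⟨e, he, rfl⟩ := Finset.mem_image.1 hx
      obtain ⟨heF, rfl⟩ := Finset.mem_filter.1 he
      exact (hFadj e heF).symm
  set FL := F.filter fun e => e.1 ∈ L ∧ e.2 ∈ L with hFL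
  have hcov : F ⊆ FL ∪ (X.biUnion (fun w => F.filter fun e => e.1 = w) ∪
      X.biUnion fun w => F.filter fun e => e.2 = w) := by
    intro e he
    simp only [hFL, Finset.mem_union, Finset.mem_filter, Finset.mem_biUnion]
    have hadj := hFadj e he
    by_cases hu : e.1 ∈ H
    · exact Or.inr (Or.inr ⟨e.2, hLH _ _ hadj hu, he, rfl⟩)
    by_cases hv : e.2 ∈ H
    · exact Or.inr (Or.inl ⟨e.1, hLH _ _ hadj.symm hv, he, rfl⟩)
    exact Or.inl ⟨he, (hG _ _ hadj).resolve_right hu, (hG _ _ hadj.symm).resolve_right hv⟩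
  have hFLc : 126 * r ≤ FL.card := by
    have e1 := Finset.card_le_card hcov
    have e2 := Finset.card_union_le FL (X.biUnion (fun w => F.filter fun e => e.1 = w) ∪
      X.biUnion fun w => F.filter fun e => e.2 = w)
    have e3 := Finset.card_union_le (X.biUnion (fun w => F.filter fun e => e.1 = w))
      (X.biUnion fun w => F.filter fun e => e.2 = w)
    have e4 := Finset.card_biUnion_le_card_mul X (fun w => F.filter fun e => e.1 = w) (6 * r)
      fun w _ => ho w
    have e5 := Finset.card_biUnion_le_card_mul X (fun w => F.filter fun e => e.2 = w) (6 * r)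
      fun w _ => hi w
    have e6 : X.card * (6 * r) ≤ 24 * (6 * r) := Nat.mul_le_mul_right _ (by omega)
    omega
  have key := pair_hit_prob L r hr A h1 h2 FL (fun e he => (Finset.mem_filter.1 he).2) hFLc
    (fun w => (Finset.card_le_card (Finset.filter_subset_filter _ (Finset.filter_subset _ _))).trans
      (ho w))
    (fun w => (Finset.card_le_card (Finset.filter_subset_filter _ (Finset.filter_subset _ _))).trans
      (hi w))
  rw [Fintype.card_prod] at key
  refine key.trans (Nat.mul_le_mul_left _ (Finset.card_le_card fun ω hω => ?_))
  obtain ⟨e, he, he1, he2⟩ := (Finset.mem_filter.1 hω).2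
  rw [hSv, Finset.mem_filter]
  exact ⟨Finset.mem_univ _, e.1, e.2, hFadj e (Finset.mem_filter.1 he).1, Or.inr (Or.inl he1),
    Or.inr (Or.inr he2)⟩

/-- If there are no heavy vertices at all, then disjointness of the color classes forces `S` to be
large, by the pigeonhole principle. -/
lemma le_card_of_no_heavy {V ι : Type*} (E : ι → SimpleGraph V) (S : Finset V) (J : Finset ι)
    (D M : ℕ) (hM : 0 < M) (hJ : J.Nonempty) (hJS : S.card ≤ J.card)
    (hS : ∀ c ∈ J, ∀ u v, (E c).Adj u v → u ∈ S) (hgood : ∀ c ∈ J, Good (E c) D M)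
    (hshort : ¬ Short E J 4) (hnh : ∀ c ∈ J, ∀ v, ¬ Heavy (E c) D v) : M ≤ S.card := by
  classical
  have hF : ∀ c, ∃ F : Finset (V × V), c ∈ J → M ≤ F.card ∧ ∀ p ∈ F, (E c).Adj p.1 p.2 := by
    intro c
    by_cases hc : c ∈ J
    · rcases hgood c hc with ⟨v, hv⟩ | ⟨F, hF⟩
      · exact absurd hv (hnh c hc v)
      · exact ⟨F, fun _ => hF⟩
    · exact ⟨∅, fun h => absurd h hc⟩
  choose F hF using hF
  have hdisj : ∀ c ∈ J, ∀ d ∈ J, c ≠ d → Disjoint (F c) (F d) := by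
    intro c hc d hd hcd
    rw [Finset.disjoint_left]
    intro p hp hp'
    exact hshort (short_digon hc hd hcd ((hF c hc).2 p hp) ((hF d hd).2 p hp'))
  have hsub : J.biUnion F ⊆ S ×ˢ S := by
    intro p hp
    obtain ⟨c, hc, hp⟩ := Finset.mem_biUnion.1 hp
    have := (hF c hc).2 p hp
    exact Finset.mem_product.2 ⟨hS c hc _ _ this, hS c hc _ _ this.symm⟩
  have h1 : J.card * M ≤ S.card * S.card := by
    calc J.card * M ≤ ∑ c ∈ J, (F c).card := by
          rw [← smul_eq_mul]
          exact Finset.card_nsmul_le_sum _ _ _ fun c hc => (hF c hc).1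
      _ = (J.biUnion F).card := (Finset.card_biUnion hdisj).symm
      _ ≤ (S ×ˢ S).card := Finset.card_le_card hsub
      _ = _ := Finset.card_product _ _
  have hSpos : 0 < S.card := by
    by_contra h0
    have h0 : S.card = 0 := by omega
    rw [h0, mul_zero] at h1
    have := Nat.mul_pos hJ.card_pos hM
    omega
  have h2 : S.card * M ≤ S.card * S.card := (Nat.mul_le_mul_right M hJS).trans h1
  exact Nat.le_of_mul_le_mul_left h2 hSpos

open Classical in
/-- If every vertex that is heavy for some color meets few colors, then there is a rainbow cycle
of length `O((log (|S| / k)) ^ 2)`. After sampling, the alive vertices are contracted along short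
paths of matched edges into the sample; by `survival_prob` more than twice as many unmatched
colors survive as there are sampled vertices, so the contracted multigraph has a logarithmic cycle,
which is then expanded. -/
lemma short_of_irreducible {V ι : Type*} (E : ι → SimpleGraph V) (S : Finset V) (J : Finset ι)
    (r K k : ℕ) (hr : 126 ≤ r) (hK : 2 * K ≤ 3 * r) (hk : 0 < k) (hkr : 4 * k ≤ r)
    (hJ : J.Nonempty) (hJS : S.card ≤ J.card)
    (hS : ∀ c ∈ J, ∀ u v, (E c).Adj u v → u ∈ S)
    (hgood : ∀ c ∈ J, Good (E c) (6 * r) (414 * r)) (hshort : ¬ Short E J 4)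
    (hdeg : ∀ v ∈ S, (∃ c ∈ J, Heavy (E c) (6 * r) v) →
      (J.filter fun c => ∃ x, (E c).Adj v x).card ≤ K) :
    Short E J ((2 * Nat.log 2 (S.card / k) + 3) * (2 * Nat.log 2 (S.card / k) + 7)) := by
  have hr0 : 0 < r := by omega
  obtain ⟨H, col, Q, hHS, hQJ, hcolinj, hcol, hQcard, hQH⟩ :=
    exists_matching S J (fun v c => Heavy (E c) (6 * r) v) hJ hJS
  have hHeavyS : ∀ c ∈ J, ∀ v, Heavy (E c) (6 * r) v → v ∈ S := by
    rintro c hc v ⟨B, hB, hBadj⟩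
    have : 0 < B.card := by omega
    obtain ⟨x, hx⟩ := Finset.card_pos.1 this
    exact hS c hc _ _ (hBadj x hx)
  -- a large set of neighbors in the matched color
  have hnb : ∀ v, ∃ B : Finset V, v ∈ H → 6 * r ≤ B.card ∧ ∀ x ∈ B, (E (col v)).Adj v x := by
    intro v
    by_cases hv : v ∈ H
    · obtain ⟨B, hB⟩ := (hcol v hv).2.1
      exact ⟨B, fun _ => hB⟩
    · exact ⟨∅, fun h => absurd h hv⟩
  choose nb hnb using hnb
  have hnbS : ∀ v ∈ H, ∀ x ∈ nb v, x ∈ S := fun v hv x hx =>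
    hS _ (hcol v hv).1 _ _ ((hnb v hv).2 x hx).symm
  obtain ⟨par, root, rk, hrkd, hrk0, hrk1, hroot⟩ := exists_levels H nb (3 * r) K hK (by omega)
    (fun v hv => by have := (hnb v hv).1; omega) (by
      intro u hu
      refine le_trans ?_ (hdeg u (hHS hu) ⟨col u, (hcol u hu).1, (hcol u hu).2.1⟩)
      refine Finset.card_le_card_of_injOn col ?_ ?_
      · intro v hv
        obtain ⟨hv, huv⟩ := Finset.mem_filter.1 hv
        exact Finset.mem_coe.2 (Finset.mem_filter.2
          ⟨(hcol v hv).1, v, ((hnb v hv).2 u huv).symm⟩)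
      · exact hcolinj.mono fun v hv => (Finset.mem_filter.1 hv).1)
  set L := S \ H with hL
  have hLcard : L.card + H.card = S.card := Finset.card_sdiff_add_card_eq_card hHS
  let W : V → Finset V := fun v => nb (root v) \ H
  have hW : ∀ v ∈ H, W v ⊆ L ∧ 3 * r ≤ (W v).card := by
    intro v hv
    obtain ⟨h1, h2, -⟩ := hroot v hv
    refine ⟨fun x hx => ?_, hrk0 _ h1 h2⟩
    obtain ⟨hx1, hx2⟩ := Finset.mem_sdiff.1 hx
    exact Finset.mem_sdiff.2 ⟨hnbS _ h1 x hx1, hx2⟩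
  have hLr : r ≤ L.card := by
    rcases H.eq_empty_or_nonempty with h0 | ⟨v, hv⟩
    · have hQne : Q.Nonempty := by
        rw [h0, Finset.card_empty, add_zero] at hQcard
        refine Finset.card_pos.1 (lt_of_lt_of_le (Finset.card_pos.2 ?_) hQcard)
        obtain ⟨c, hc⟩ := hJ
        rcases hgood c hc with ⟨v, hv⟩ | ⟨F, hF, hFadj⟩
        · exact ⟨v, hHeavyS c hc v hv⟩
        · have : 0 < F.card := by omega
          obtain ⟨e, he⟩ := Finset.card_pos.1 this
          exact ⟨_, hS c hc _ _ (hFadj e he)⟩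
      have := le_card_of_no_heavy E S Q (6 * r) (414 * r) (by omega) hQne
        (by rw [h0, Finset.card_empty, add_zero] at hQcard; exact hQcard)
        (fun c hc => hS c (hQJ hc)) (fun c hc => hgood c (hQJ hc))
        (fun ⟨I, s, t, hI, h⟩ => hshort ⟨I, s, t, hI.trans hQJ, h⟩) (fun c hc v hv => by
          have := hQH c hc v (hHeavyS c (hQJ hc) v hv) hv
          rw [h0] at this
          simp at this)
      rw [hL, h0, Finset.sdiff_empty]
      omega
    · have := Finset.card_le_card (hW v hv).1
      have := (hW v hv).2
      omega
  obtain ⟨Ω, _, _, A, hA, h1, h2⟩ := exists_sampler L r hr0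
  let node : Ω × Ω → V → Prop := fun ω u =>
    (u ∈ H ∧ ∃ w ∈ W u, w ∈ A ω.1) ∨ u ∈ A ω.1 ∨ u ∈ A ω.2
  let surv : Ω × Ω → Finset ι := fun ω =>
    Q.filter fun c => ∃ u v, (E c).Adj u v ∧ node ω u ∧ node ω v
  -- by averaging, some sample is survived by many colors
  obtain ⟨ω, hω⟩ : ∃ ω, 9 * L.card ≤ r * (surv ω).card := by
    have hsurv : ∀ c ∈ Q, 9 * Fintype.card (Ω × Ω) ≤ r * (Finset.univ.filter fun ω : Ω × Ω =>
        ∃ u v, (E c).Adj u v ∧ node ω u ∧ node ω v).card := by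
      intro c hc
      refine survival_prob L H r hr A h1 h2 W hW (E c) ?_ ?_ (hgood c (hQJ hc))
      · intro u v huv
        have := hS c (hQJ hc) u v huv
        by_cases hu : u ∈ H
        · exact Or.inr hu
        · exact Or.inl (Finset.mem_sdiff.2 ⟨this, hu⟩)
      · exact fun v hv => hQH c hc v (hHeavyS c (hQJ hc) v hv) hv
    have hsum : ∑ _ω : Ω × Ω, 9 * L.card ≤ ∑ ω : Ω × Ω, r * (surv ω).card := by
      calc ∑ _ω : Ω × Ω, 9 * L.card = L.card * (9 * Fintype.card (Ω × Ω)) := by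
            rw [Finset.sum_const, Finset.card_univ, smul_eq_mul]; ring
        _ ≤ Q.card * (9 * Fintype.card (Ω × Ω)) := Nat.mul_le_mul_right _ (by omega)
        _ ≤ ∑ c ∈ Q, r * (Finset.univ.filter fun ω : Ω × Ω =>
              ∃ u v, (E c).Adj u v ∧ node ω u ∧ node ω v).card := by
            rw [← smul_eq_mul]
            exact Finset.card_nsmul_le_sum _ _ _ hsurv
        _ = ∑ ω : Ω × Ω, r * (surv ω).card := by
            rw [← Finset.mul_sum, ← Finset.mul_sum]
            congr 1
            simp only [surv, Finset.card_filter]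
            exact Finset.sum_comm
    obtain ⟨ω, -, hω⟩ := Finset.exists_le_of_sum_le
      (Finset.univ_nonempty (α := Ω × Ω)) hsum
    exact ⟨ω, hω⟩
  set T : Finset V := A ω.1 ∪ A ω.2 with hT
  have hTr : T.card * r ≤ 4 * L.card := by
    have e1 := (hA ω.1).2
    have e2 := (hA ω.2).2
    have e3 : T.card * r ≤ ((A ω.1).card + (A ω.2).card) * r :=
      Nat.mul_le_mul_right _ (Finset.card_union_le _ _)
    rw [add_mul] at e3
    omega
  have hTsurv : 2 * T.card < (surv ω).card := by
    by_contra hlt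
    have e1 : r * (surv ω).card ≤ r * (2 * T.card) := Nat.mul_le_mul_left _ (not_lt.1 hlt)
    have e2 : r * (2 * T.card) = 2 * (T.card * r) := by ring
    omega
  -- the forest of alive vertices, rooted at the sample
  let al : V → Prop := fun v => v ∈ H ∧ ∃ w ∈ W v, w ∈ A ω.1
  have hpar' : ∀ v, ∃ u, al v → (u ∈ T ∨ (al u ∧ rk u < rk v)) ∧ (E (col v)).Adj v u := by
    intro v
    by_cases hv : al v
    · obtain ⟨hvH, w, hw, hwA⟩ := hv
      by_cases h0 : rk v = 0
      · have hwv : w ∈ nb v := by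
          have := (Finset.mem_sdiff.1 hw).1
          rwa [(hroot v hvH).2.2 h0] at this
        exact ⟨w, fun _ => ⟨Or.inl (Finset.mem_union_left _ hwA), (hnb v hvH).2 w hwv⟩⟩
      · obtain ⟨g1, g2, g3, g4⟩ := hrk1 v hvH h0
        refine ⟨par v, fun _ => ⟨Or.inr ⟨⟨g2, w, ?_, hwA⟩, g3⟩, (hnb v hvH).2 _ g1⟩⟩
        change w ∈ nb (root v) \ H at hw
        rwa [g4] at hw
    · exact ⟨v, fun h => absurd h hv⟩
  choose par' hpar' using hpar'
  obtain ⟨P, π, hP⟩ := exists_paths al (· ∈ T) par' rk (fun v hv => (hpar' v hv).1)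
    (Nat.log 2 (S.card / k) + 2) (fun v hv => by
      refine (hrkd v hv.1).trans (Nat.add_le_add_right (Nat.log_mono_right ?_) 2)
      calc H.card / (3 * r) ≤ S.card / (3 * r) :=
            Nat.div_le_div_right (Finset.card_le_card hHS)
        _ ≤ S.card / k := Nat.div_le_div_left (by omega) hk)
  have hVne : Nonempty V := by
    have : 0 < L.card := by omega
    obtain ⟨w, -⟩ := Finset.card_pos.1 this
    exact ⟨w⟩
  -- one edge for every surviving color and every matched color
  have hst : ∀ c, ∃ e : V × V, (c ∈ surv ω → (E c).Adj e.1 e.2 ∧ node ω e.1 ∧ node ω e.2) ∧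
      (c ∉ surv ω → ∀ v, al v → col v = c → e = (v, par' v)) := by
    intro c
    by_cases hc : c ∈ surv ω
    · obtain ⟨u, v, h⟩ := (Finset.mem_filter.1 hc).2
      exact ⟨(u, v), fun _ => h, fun h' => absurd hc h'⟩
    · by_cases hv : ∃ v, al v ∧ col v = c
      · obtain ⟨v, hv, hvc⟩ := hv
        refine ⟨(v, par' v), fun h' => absurd h' hc, fun _ u hu huc => ?_⟩
        rw [hcolinj hu.1 hv.1 (huc.trans hvc.symm)]
      · exact ⟨(hVne.some, hVne.some), fun h' => absurd h' hc,
          fun _ v hv' hvc => absurd ⟨v, hv', hvc⟩ hv⟩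
  choose e he1 he2 using hst
  have hcolns : ∀ v, al v → col v ∉ surv ω := fun v hv h =>
    (hcol v hv.1).2.2 (Finset.mem_filter.1 h).1
  have hnode : ∀ v, node ω v → al v ∨ v ∈ T := by
    rintro v (h | h | h)
    · exact Or.inl h
    · exact Or.inr (Finset.mem_union_left _ h)
    · exact Or.inr (Finset.mem_union_right _ h)
  obtain ⟨I, hIQ, hIne, hIsupp, hIcard⟩ := exists_short_of_two_mul_lt T (surv ω)
    (fun c => π (e c).1) (fun c => π (e c).2)
    (fun c hc => (hP _ (hnode _ (he1 c hc).2.1)).1)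
    (fun c hc => (hP _ (hnode _ (he1 c hc).2.2)).1) hTsurv
  obtain ⟨PP, hPP, hsupp, hcard⟩ := expand al par' col (fun c => (e c).1) (fun c => (e c).2) P π I
    (Nat.log 2 (S.card / k) + 3) (fun u v hu hv h => hcolinj hu.1 hv.1 h)
    (fun v hv h => hcolns v hv (hIQ h))
    (fun v hv => Or.inl (by rw [he2 _ (hcolns v hv) v hv rfl]; exact ⟨rfl, rfl⟩))
    (fun c hc v hv => by
      have hn : node ω v := by
        rcases hv with rfl | rfl
        exacts [(he1 c (hIQ hc)).2.1, (he1 c (hIQ hc)).2.2]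
      exact (hP v (hnode v hn)).2)
    hIsupp
  refine ⟨I ∪ PP.image col, fun c => (e c).1, fun c => (e c).2, ?_, hIne.mono (by simp), ?_,
    hsupp, hcard.trans ?_⟩
  · intro c hc
    rcases Finset.mem_union.1 hc with hc | hc
    · exact hQJ (Finset.mem_filter.1 (hIQ hc)).1
    · obtain ⟨v, hv, rfl⟩ := Finset.mem_image.1 hc
      exact (hcol v (hPP v hv).1).1
  · intro c hc
    rcases Finset.mem_union.1 hc with hc | hc
    · exact (he1 c (hIQ hc)).1
    · obtain ⟨v, hv, rfl⟩ := Finset.mem_image.1 hc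
      have hv := hPP v hv
      have := (hpar' v hv).2
      simp only [he2 _ (hcolns v hv) v hv rfl]
      exact this
  · have hTk : T.card ≤ S.card / k := by
      rw [Nat.le_div_iff_mul_le hk]
      have e1 : T.card * (4 * k) ≤ T.card * r := Nat.mul_le_mul_left _ hkr
      have e2 : T.card * (4 * k) = 4 * (T.card * k) := by ring
      omega
    have := Nat.log_mono_right (b := 2) hTk
    exact Nat.mul_le_mul (by omega) (by omega)

/-! ### Putting the pieces together -/

open Classical in
/-- Repeatedly contract vertices that are heavy for some color and meet more than `4 k` colors.
Each step removes `4 k` vertices and `4 k` colors and costs at most `2` in the length of the cycle,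
so there are at most `|S| / (4 k)` steps before the irreducible case is reached. -/
lemma short_of_card_lt {V ι : Type*} (n k : ℕ) (hk : 1 < k) (N : ℕ) :
    ∀ (E : ι → SimpleGraph V) (S : Finset V) (J : Finset ι), S.card = N → N ≤ n →
      S.card < J.card → (∀ c ∈ J, ∀ u v, (E c).Adj u v → u ∈ S) →
      (∀ c ∈ J, Good (E c) (6 * (100 * k)) (414 * (100 * k))) →
      Short E J ((2 * Nat.log 2 (n / k) + 3) * (2 * Nat.log 2 (n / k) + 7) +
        2 * (N / (4 * k))) := by
  induction N using Nat.strong_induction_on with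
  | _ N ih =>
    intro E S J hSN hNn hSJ hS hgood
    have hJ : J.Nonempty := Finset.card_pos.1 (by omega)
    have hΓ : 21 ≤ (2 * Nat.log 2 (n / k) + 3) * (2 * Nat.log 2 (n / k) + 7) :=
      le_trans (by norm_num) (Nat.mul_le_mul (Nat.le_add_left 3 _) (Nat.le_add_left 7 _))
    by_cases hshort : Short E J 4
    · exact hshort.mono (by omega)
    by_cases hdeg : ∀ v ∈ S, (∃ c ∈ J, Heavy (E c) (6 * (100 * k)) v) →
        (J.filter fun c => ∃ x, (E c).Adj v x).card ≤ 4 * k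
    · refine (short_of_irreducible E S J (100 * k) (4 * k) k (by omega) (by omega) (by omega)
        (by omega) hJ hSJ.le hS hgood hshort hdeg).mono ?_
      have : Nat.log 2 (S.card / k) ≤ Nat.log 2 (n / k) :=
        Nat.log_mono_right (Nat.div_le_div_right (by omega))
      exact (Nat.mul_le_mul (by omega) (by omega)).trans (Nat.le_add_right _ _)
    · push Not at hdeg
      obtain ⟨v, hvS, ⟨c₀, hc₀, hv⟩, hlt⟩ := hdeg
      have hle : 4 * k - 1 ≤ ((J.filter fun c => ∃ x, (E c).Adj v x).erase c₀).card := by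
        have := Finset.pred_card_le_card_erase (s := J.filter fun c => ∃ x, (E c).Adj v x) (a := c₀)
        omega
      obtain ⟨A, hA, hAc⟩ := Finset.exists_subset_card_eq hle
      have hx : ∀ c, ∃ x, c ∈ A → (E c).Adj v x := by
        intro c
        by_cases hc : c ∈ A
        · obtain ⟨x, hx⟩ := (Finset.mem_filter.1 (Finset.mem_of_mem_erase (hA hc))).2
          exact ⟨x, fun _ => hx⟩
        · exact ⟨v, fun h => absurd h hc⟩
      choose x hx using hx
      obtain ⟨E', S', J', hS'c, hJ'c, hS', hgood', hback⟩ := reduction E S J (6 * (100 * k))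
        (414 * (100 * k)) (4 * k - 1) hS hgood hshort v hvS c₀ hc₀ hv A
        (fun c hc => (Finset.mem_filter.1 (Finset.mem_of_mem_erase (hA hc))).1)
        (fun h => Finset.notMem_erase _ _ (hA h)) hAc x hx
      have h1 : 4 * k - 1 + 1 = 4 * k := by omega
      rw [h1] at hS'c hJ'c
      have h2 : N / (4 * k) = S'.card / (4 * k) + 1 := by
        rw [← hSN, ← hS'c]
        exact Nat.add_div_right _ (by omega)
      have := hback _ (ih S'.card (by omega) E' S' J' rfl (by omega) (by omega) hS' hgood')
      exact this.mono (by omega)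

lemma two_mul_le_two_pow (l : ℕ) (hl : 11 ≤ l) :
    2 * ((2 * l + 3) * (2 * l + 7)) ≤ 2 ^ l := by
  induction l, hl using Nat.le_induction with
  | base => norm_num
  | succ l hl ih =>
    rw [pow_succ]
    nlinarith

end RainbowGirth

/-- Let `k > 1` be an integer and let `G` be a simple graph on `n`
vertices. Suppose the edges of `G` are colored with `n + k` color classes, each of size
at least `10^9 * k`. Then `G` contains a rainbow cycle of length at most `n / k`. -/
theorem rainbow_cycle_short_of_n_add_k_colors {V : Type*} [Fintype V] [DecidableEq V]
    (n k : ℕ) (hk : 1 < k) (hn : Fintype.card V = n)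
    (G : SimpleGraph V) [DecidableRel G.Adj] (b : Sym2 V → ℕ)
    (hsize : ∀ i, 1 ≤ i → i ≤ n + k →
      10 ^ 9 * k ≤ (G.edgeFinset.filter (fun e => b e = i)).card)
    (hempty : ∀ i, n + k < i → G.edgeFinset.filter (fun e => b e = i) = ∅) :
    ∃ (u : V) (w : G.Walk u u), w.IsCycle ∧ (w.edges.map b).Nodup ∧
      (w.length : ℝ) ≤ (n : ℝ) / (k : ℝ) := by
  -- the color classes are so large that `n` is much larger than `k`
  have hbig : 2 ^ 11 ≤ n / k := by
    have h1 : (n + k) * (10 ^ 9 * k) ≤ n * n := by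
      calc (n + k) * (10 ^ 9 * k) = (Finset.Icc 1 (n + k)).card • (10 ^ 9 * k) := by simp
        _ ≤ ∑ i ∈ Finset.Icc 1 (n + k), (G.edgeFinset.filter (fun e => b e = i)).card :=
            Finset.card_nsmul_le_sum _ _ _ fun i hi =>
              hsize i (Finset.mem_Icc.1 hi).1 (Finset.mem_Icc.1 hi).2
        _ = ((Finset.Icc 1 (n + k)).biUnion fun i =>
              G.edgeFinset.filter (fun e => b e = i)).card := by
            refine (Finset.card_biUnion fun i _ j _ hij => ?_).symm
            rw [Function.onFun, Finset.disjoint_left]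
            intro e he he'
            exact hij ((Finset.mem_filter.1 he).2.symm.trans (Finset.mem_filter.1 he').2)
        _ ≤ G.edgeFinset.card := Finset.card_le_card fun e he => by
            obtain ⟨i, _, he⟩ := Finset.mem_biUnion.1 he
            exact (Finset.mem_filter.1 he).1
        _ ≤ n.choose 2 := hn ▸ G.card_edgeFinset_le_card_choose_two
        _ ≤ n * n := by
            rw [Nat.choose_two_right]
            exact (Nat.div_le_self _ _).trans (Nat.mul_le_mul_left _ (Nat.sub_le _ _))
    rw [Nat.le_div_iff_mul_le (by omega)]
    by_contra hlt
    have h2 : n < 10 ^ 9 * k := by omega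
    nlinarith
  let E : ℕ → SimpleGraph V := fun c =>
    { Adj := fun u v => G.Adj u v ∧ b s(u, v) = c
      symm := ⟨fun u v h => ⟨h.1.symm, by rw [Sym2.eq_swap]; exact h.2⟩⟩
      loopless := ⟨fun u h => G.loopless.irrefl u h.1⟩ }
  have hgood : ∀ c ∈ Finset.Icc 1 (n + k),
      RainbowGirth.Good (E c) (6 * (100 * k)) (414 * (100 * k)) := by
    intro c hc
    refine Or.inr ⟨Finset.univ.filter fun p : V × V => G.Adj p.1 p.2 ∧ b s(p.1, p.2) = c, ?_,
      fun p hp => (Finset.mem_filter.1 hp).2⟩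
    have h1 := hsize c (Finset.mem_Icc.1 hc).1 (Finset.mem_Icc.1 hc).2
    have h2 : G.edgeFinset.filter (fun e => b e = c) ⊆
        (Finset.univ.filter fun p : V × V => G.Adj p.1 p.2 ∧ b s(p.1, p.2) = c).image
          (fun p => s(p.1, p.2)) := by
      intro e he
      induction e using Sym2.ind with
      | _ u v =>
        rw [Finset.mem_filter, SimpleGraph.mem_edgeFinset, SimpleGraph.mem_edgeSet] at he
        exact Finset.mem_image.2 ⟨(u, v), Finset.mem_filter.2 ⟨Finset.mem_univ _, he⟩, rfl⟩
    have h3 := (Finset.card_le_card h2).trans Finset.card_image_le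
    omega
  obtain ⟨I, s, t, -, hIne, hadj, hsupp, hcard⟩ :=
    RainbowGirth.short_of_card_lt n k hk n E Finset.univ (Finset.Icc 1 (n + k))
      (by rw [Finset.card_univ, hn]) le_rfl
      (by rw [Finset.card_univ, hn, Nat.card_Icc]; omega) (fun _ _ _ _ _ => Finset.mem_univ _) hgood
  obtain ⟨u, w, hw, hrb, hlen⟩ := RainbowGirth.exists_rainbow_cycle G b I s t hIne
    (fun c hc => (hadj c hc).1) (fun c hc => (hadj c hc).2) hsupp
  refine ⟨u, w, hw, hrb, ?_⟩
  have hk0 : (0 : ℝ) < k := by exact_mod_cast (by omega : 0 < k)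
  rw [le_div_iff₀ hk0]
  -- the contribution of the irreducible case and that of the contractions are both at most `n / 2`
  have key : w.length * k ≤ n := by
    have h1 : 11 ≤ Nat.log 2 (n / k) := Nat.le_log_of_pow_le (by norm_num) hbig
    have h2 := RainbowGirth.two_mul_le_two_pow _ h1
    have h3 : 2 ^ Nat.log 2 (n / k) ≤ n / k := Nat.pow_log_le_self 2 (by omega)
    have h4 : n / k * k ≤ n := Nat.div_mul_le_self n k
    have h5 : n / (4 * k) * (4 * k) ≤ n := Nat.div_mul_le_self n (4 * k)
    generalize (2 * Nat.log 2 (n / k) + 3) * (2 * Nat.log 2 (n / k) + 7) = Γ at *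
    have h6 : 2 * Γ * k ≤ n := (Nat.mul_le_mul_right k (h2.trans h3)).trans h4
    have h7 : w.length * k ≤ (Γ + 2 * (n / (4 * k))) * k :=
      Nat.mul_le_mul_right k (hlen.trans hcard)
    nlinarith
  exact_mod_cast key
end

section
/- For all integers n ≥ 4 and k ≥ 2, if G is a simple graph on n vertices with n + k edges, then G contains a cycle of length at most 14·(n+k)·log k/(3k). -/
/-! Suppose that every cycle of `G` is long. Joining two components by an edge creates no cycle, so `G`
may be assumed connected, with at least `n + k` edges (`exists_connected_ge`).

A breadth-first search tree of `G` is cut into rooted trees (clusters) of height less than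
`s = ⌈n / (k - 1)⌉`, at most `n / s + 1 ≤ k` in number (`exists_clustering`). Contracting the
clusters gives a graph `Q` on `N ≤ k` vertices. Two vertices of a cluster are joined by a tree path
of length at most `2 (s - 1)`; therefore loops or multiple edges in `Q` would yield a cycle of
length at most `2 (2 s - 1)` in `G`, and a cycle of length `g` in `Q` yields one of length at most
`g (2 s - 1)` in `G`. In the absence of short cycles `Q` thus has at least `N + k ≥ 2 N` edges
(`IsClustering.card_edges_le`, `IsClustering.noShortCycle_quotient`).

A graph with `N` vertices and at least `2 N` edges contains a subgraph of minimum degree at least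
three, and the Moore bound gives a cycle of length at most `2 ⌊log₂ N⌋` (`moore_of_card_edges`).
Altogether `G` has a cycle of length at most `2 (2 s - 1) ⌊log₂ k⌋`, which is within the claimed
bound when `k ≥ 7`. For `k ≤ 6` the claimed bound is at least the number `n + k` of edges, and every
cycle satisfies it.
-/

/-! ### Graphs without short cycles -/

/-- Every cycle of `G` is longer than `L`, i.e. the girth of `G` exceeds `L` (vacuously so for
forests). -/
def NoShortCycle {V : Type*} (G : SimpleGraph V) (L : ℕ) : Prop :=
  ∀ (u : V) (w : G.Walk u u), w.IsCycle → L < w.length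

/-- An edge together with a walk joining its ends that avoids it closes up to a cycle. -/
lemma NoShortCycle.false_of_walk {V : Type*} {G : SimpleGraph V} {L : ℕ}
    (h : NoShortCycle G L) {u v : V} (huv : G.Adj u v) (q : G.Walk v u)
    (hq : s(u, v) ∉ q.edges) (hL : q.length + 1 ≤ L) : False := by
  classical
  have hc : (SimpleGraph.Walk.cons huv q.bypass).IsCycle :=
    (SimpleGraph.Walk.cons_isCycle_iff _ _).2
      ⟨q.bypass_isPath, fun he => hq (q.edges_bypass_subset_edges he)⟩
  have h1 := h _ _ hc
  have h2 := q.length_bypass_le_length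
  rw [SimpleGraph.Walk.length_cons] at h1
  omega

lemma notMem_support_of_dist_le {V : Type*} {G : SimpleGraph V} {v u w : V}
    (a : G.Walk v w) (ha : a.length = G.dist v w) (hd : G.dist v w ≤ G.dist v u)
    (hne : u ≠ w) : u ∉ a.support := by
  classical
  intro hu
  have h1 := SimpleGraph.Walk.length_takeUntil_lt_length hu hne
  have h2 := G.dist_le (a.takeUntil u hu)
  omega

/-- A vertex has at most one neighbour that is no further from `v` than itself: two such neighbours
would give two different short paths from `v`. -/
lemma NoShortCycle.unique_neighbor {V : Type*} {G : SimpleGraph V} {L : ℕ}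
    (h : NoShortCycle G L) {v u w₁ w₂ : V} (hr : G.Reachable v u)
    (h₁ : G.Adj u w₁) (h₂ : G.Adj u w₂)
    (hd₁ : G.dist v w₁ ≤ G.dist v u) (hd₂ : G.dist v w₂ ≤ G.dist v u)
    (hL : G.dist v w₁ + G.dist v w₂ + 2 ≤ L) : w₁ = w₂ := by
  by_contra hne
  obtain ⟨a, ha⟩ := (hr.trans h₁.reachable).exists_walk_length_eq_dist
  obtain ⟨b, hb⟩ := (hr.trans h₂.reachable).exists_walk_length_eq_dist
  have hua := notMem_support_of_dist_le a ha hd₁ h₁.ne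
  have hub := notMem_support_of_dist_le b hb hd₂ h₂.ne
  refine h.false_of_walk h₁ (a.reverse.append (b.concat h₂.symm)) ?_ ?_
  · simp only [SimpleGraph.Walk.edges_append, SimpleGraph.Walk.edges_reverse,
      SimpleGraph.Walk.edges_concat, List.mem_append, List.mem_reverse, List.concat_eq_append,
      List.mem_singleton, not_or]
    refine ⟨fun he => hua (a.fst_mem_support_of_mem_edges he),
      fun he => hub (b.fst_mem_support_of_mem_edges he), fun he => ?_⟩
    rw [Sym2.eq_iff] at he
    rcases he with ⟨he, -⟩ | ⟨-, he⟩
    · exact h₂.ne he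
    · exact hne he
  · simp only [SimpleGraph.Walk.length_append, SimpleGraph.Walk.length_reverse,
      SimpleGraph.Walk.length_concat]
    omega

/-! ### The Moore bound -/

/-- The set of vertices reachable from `v` and at distance exactly `i` from it. -/
noncomputable def distSphere {V : Type*} [Fintype V] (G : SimpleGraph V) (v : V) (i : ℕ) :
    Finset V := by
  classical
  exact Finset.univ.filter fun u => G.Reachable v u ∧ G.dist v u = i

lemma mem_distSphere {V : Type*} [Fintype V] {G : SimpleGraph V} {v u : V} {i : ℕ} :
    u ∈ distSphere G v i ↔ G.Reachable v u ∧ G.dist v u = i := by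
  simp [distSphere]

lemma dist_le_succ_of_adj {V : Type*} {G : SimpleGraph V} {v u w : V}
    (hr : G.Reachable v u) (h : G.Adj u w) : G.dist v w ≤ G.dist v u + 1 := by
  obtain ⟨a, ha⟩ := hr.exists_walk_length_eq_dist
  have := G.dist_le (a.concat h)
  rw [SimpleGraph.Walk.length_concat] at this
  omega

lemma distSphere_succ_mul {V : Type*} [Fintype V] {G : SimpleGraph V} [DecidableRel G.Adj]
    {r : ℕ} (h : NoShortCycle G (2 * r)) (v : V) (i m : ℕ) (hi : i + 1 ≤ r)
    (hm : ∀ u ∈ distSphere G v i,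
      m ≤ ((G.neighborFinset u).filter fun w => G.dist v w = i + 1).card) :
    (distSphere G v i).card * m ≤ (distSphere G v (i + 1)).card := by
  classical
  have key := Finset.card_mul_le_card_mul (s := distSphere G v i) (t := distSphere G v (i + 1))
    (m := m) (n := 1) G.Adj ?_ ?_
  · simpa using key
  · intro u hu
    refine (hm u hu).trans (Finset.card_le_card ?_)
    intro w hw
    rw [mem_distSphere] at hu
    simp only [Finset.mem_filter, SimpleGraph.mem_neighborFinset] at hw
    rw [Finset.mem_bipartiteAbove, mem_distSphere]
    exact ⟨⟨hu.1.trans hw.1.reachable, hw.2⟩, hw.1⟩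
  · intro u hu
    rw [mem_distSphere] at hu
    rw [Finset.card_le_one]
    intro w₁ hw₁ w₂ hw₂
    rw [Finset.mem_bipartiteBelow, mem_distSphere] at hw₁ hw₂
    exact h.unique_neighbor hu.1 hw₁.2.symm hw₂.2.symm (by omega) (by omega) (by omega)

/-- Below half the girth, the spheres of a graph of minimum degree at least three grow at least as
fast as in the cubic tree. -/
lemma card_distSphere_succ {V : Type*} [Fintype V] {G : SimpleGraph V} [DecidableRel G.Adj]
    {r : ℕ} (hdeg : ∀ v, 3 ≤ G.degree v) (h : NoShortCycle G (2 * r)) (v : V) (i : ℕ)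
    (hi : i + 1 ≤ r) : 3 * 2 ^ i ≤ (distSphere G v (i + 1)).card := by
  classical
  induction i with
  | zero =>
    have h0 : (distSphere G v 0).card = 1 := by
      rw [Finset.card_eq_one]
      refine ⟨v, ?_⟩
      ext u
      rw [mem_distSphere, Finset.mem_singleton]
      constructor
      · rintro ⟨hr, hd⟩
        exact (hr.dist_eq_zero_iff.1 hd).symm
      · rintro rfl
        exact ⟨SimpleGraph.Reachable.refl _, G.dist_self⟩
    have := distSphere_succ_mul h v 0 3 hi ?_
    · rw [h0] at this
      simpa using this
    · intro u hu
      rw [mem_distSphere] at hu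
      obtain rfl := hu.1.dist_eq_zero_iff.1 hu.2
      rw [Finset.filter_true_of_mem]
      · exact hdeg v
      · intro w hw
        rw [SimpleGraph.mem_neighborFinset] at hw
        exact SimpleGraph.dist_eq_one_iff_adj.2 hw
  | succ i ih =>
    have := distSphere_succ_mul h v (i + 1) 2 hi ?_
    · have := ih (by omega)
      rw [pow_succ]
      omega
    · intro u hu
      rw [mem_distSphere] at hu
      have hsplit := Finset.card_filter_add_card_filter_not (s := G.neighborFinset u)
        (fun w => G.dist v w = i + 1 + 1)
      have hle : ((G.neighborFinset u).filter fun w => ¬ G.dist v w = i + 1 + 1).card ≤ 1 := by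
        rw [Finset.card_le_one]
        intro w₁ hw₁ w₂ hw₂
        simp only [Finset.mem_filter, SimpleGraph.mem_neighborFinset] at hw₁ hw₂
        have e₁ := dist_le_succ_of_adj hu.1 hw₁.1
        have e₂ := dist_le_succ_of_adj hu.1 hw₂.1
        exact h.unique_neighbor hu.1 hw₁.1 hw₂.1 (by omega) (by omega) (by omega)
      have := hdeg u
      rw [SimpleGraph.card_neighborFinset_eq_degree] at hsplit
      omega

/-- Moore bound for minimum degree three, obtained from the last two spheres alone. -/
lemma moore_of_minDegree {V : Type*} [Fintype V] [Nonempty V] {G : SimpleGraph V}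
    [DecidableRel G.Adj] {r : ℕ} (hr : 1 ≤ r) (hdeg : ∀ v, 3 ≤ G.degree v)
    (h : NoShortCycle G (2 * r)) : 2 ^ (r + 1) ≤ Fintype.card V := by
  classical
  obtain ⟨v⟩ := ‹Nonempty V›
  obtain ⟨i, rfl⟩ : ∃ i, r = i + 1 := ⟨r - 1, by omega⟩
  have h1 := card_distSphere_succ hdeg h v i le_rfl
  have h2 : 2 ^ i ≤ (distSphere G v i).card := by
    rcases i with _ | i
    · rw [pow_zero, Nat.one_le_iff_ne_zero, Finset.card_ne_zero]
      exact ⟨v, mem_distSphere.2 ⟨SimpleGraph.Reachable.refl _, G.dist_self⟩⟩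
    · have := card_distSphere_succ hdeg h v i (by omega)
      rw [pow_succ]
      omega
  have hdisj : Disjoint (distSphere G v i) (distSphere G v (i + 1)) := by
    rw [Finset.disjoint_left]
    intro u hu hu'
    rw [mem_distSphere] at hu hu'
    omega
  have h3 := Finset.card_le_univ (distSphere G v i ∪ distSphere G v (i + 1))
  rw [Finset.card_union_of_disjoint hdisj] at h3
  rw [pow_succ, pow_succ]
  omega

/-- Moore bound for graphs of average degree at least four: deleting a vertex of degree at most two
preserves `2 |V| ≤ |E|`, so that the minimum degree may be taken to be at least three. -/
lemma moore_of_card_edges (N : ℕ) : ∀ {V : Type*} [Fintype V] [Nonempty V] (G : SimpleGraph V)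
    [DecidableRel G.Adj] {r : ℕ}, Fintype.card V = N → 1 ≤ r →
    2 * Fintype.card V ≤ G.edgeFinset.card → NoShortCycle G (2 * r) →
    2 ^ (r + 1) ≤ Fintype.card V := by
  induction N with
  | zero =>
    intro V _ _ G _ r hN
    exact absurd hN Fintype.card_ne_zero
  | succ N ih =>
    intro V _ _ G _ r hN hr hE h
    classical
    by_cases hdeg : ∀ v, 3 ≤ G.degree v
    · exact moore_of_minDegree hr hdeg h
    · push Not at hdeg
      obtain ⟨v, hv⟩ := hdeg
      have hcard : Fintype.card ({v}ᶜ : Set V) = N := by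
        rw [Fintype.card_compl_set, hN]
        simp
      have hNpos : N ≠ 0 := by
        rintro rfl
        have := G.card_edgeFinset_le_card_choose_two
        rw [hN] at this hE
        rw [show Nat.choose (0 + 1) 2 = 0 from rfl] at this
        omega
      have : Nonempty ({v}ᶜ : Set V) := by
        rw [← Fintype.card_pos_iff, hcard]
        omega
      have hE' : (G.induce ({v}ᶜ : Set V)).edgeFinset.card = G.edgeFinset.card - G.degree v := by
        rw [SimpleGraph.card_edgeFinset_induce_compl_singleton,
          SimpleGraph.card_edgeFinset_deleteIncidenceSet]
      have := ih (G.induce ({v}ᶜ : Set V)) (r := r) hcard hr ?_ ?_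
      · omega
      · rw [hE']
        omega
      · intro u w hw
        have := h _ _ (hw.map (f := (SimpleGraph.Embedding.induce ({v}ᶜ : Set V)).toHom)
          Subtype.val_injective)
        rwa [SimpleGraph.Walk.length_map] at this

/-! ### Clusterings and their quotients -/

/-- A decomposition of `G` into disjoint rooted trees of height less than `s`: `t v` is the height
of `v` above the root of its tree and, when `v` is not a root, `p v` is its parent. The value of
`p` at roots is irrelevant. -/
structure IsClustering {V : Type*} (G : SimpleGraph V) (s : ℕ) (t : V → ℕ) (p : V → V) : Prop where
  lt : ∀ v, t v < s
  adj : ∀ v, 0 < t v → G.Adj v (p v)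
  height : ∀ v, 0 < t v → t (p v) + 1 = t v

/-- The edges of the trees of a clustering. -/
def clusterEdges {V : Type*} (t : V → ℕ) (p : V → V) : Set (Sym2 V) :=
  {e | ∃ v, 0 < t v ∧ e = s(v, p v)}

namespace IsClustering

variable {V : Type*} {G : SimpleGraph V} {s : ℕ} {t : V → ℕ} {p : V → V}

lemma height_iterate (h : IsClustering G s t p) (m : ℕ) :
    ∀ v, t v = m → t (p^[m] v) = 0 := by
  induction m with
  | zero => intro v hv; simpa using hv
  | succ m ih =>
    intro v hv
    rw [Function.iterate_succ_apply]
    have := h.height v (by omega)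
    exact ih _ (by omega)

/-- The root of the cluster containing `v`. -/
def root (h : IsClustering G s t p) (v : V) : {v : V // t v = 0} :=
  ⟨p^[t v] v, h.height_iterate _ v rfl⟩

lemma root_parent (h : IsClustering G s t p) (v : V) (hv : 0 < t v) :
    h.root (p v) = h.root v := by
  apply Subtype.ext
  have := h.height v hv
  simp only [root]
  rw [← this, Function.iterate_succ_apply]

lemma root_self (h : IsClustering G s t p) (v : {v : V // t v = 0}) : h.root v = v := by
  apply Subtype.ext
  simp [root, v.2]

lemma isDiag_map_root (h : IsClustering G s t p) {e : Sym2 V} (he : e ∈ clusterEdges t p) :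
    (e.map h.root).IsDiag := by
  obtain ⟨v, hv, rfl⟩ := he
  simp [h.root_parent v hv]

lemma exists_walk_root (h : IsClustering G s t p) (m : ℕ) : ∀ v, t v = m →
    ∃ q : G.Walk v (h.root v), q.length = m ∧ ∀ e ∈ q.edges, e ∈ clusterEdges t p := by
  induction m with
  | zero =>
    intro v hv
    have : (h.root v : V) = v := by simp [root, hv]
    rw [this]
    exact ⟨SimpleGraph.Walk.nil, by simp, by simp⟩
  | succ m ih =>
    intro v hv
    have h0 : 0 < t v := by omega
    have h1 := h.height v h0
    obtain ⟨q, hq, hqe⟩ := h.root_parent v h0 ▸ ih (p v) (by omega)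
    refine ⟨SimpleGraph.Walk.cons (h.adj v h0) q, by simp [hq], ?_⟩
    intro e he
    rw [SimpleGraph.Walk.edges_cons, List.mem_cons] at he
    rcases he with rfl | he
    · exact ⟨v, h0, rfl⟩
    · exact hqe e he

/-- Two vertices of the same cluster are joined inside its tree, through the root. -/
lemma exists_walk (h : IsClustering G s t p) {u v : V} (huv : h.root u = h.root v) :
    ∃ q : G.Walk u v, q.length + 2 ≤ 2 * s ∧ ∀ e ∈ q.edges, e ∈ clusterEdges t p := by
  obtain ⟨a, ha, hae⟩ := h.exists_walk_root _ u rfl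
  obtain ⟨b, hb, hbe⟩ := huv ▸ h.exists_walk_root _ v rfl
  refine ⟨a.append b.reverse, ?_, ?_⟩
  · have := h.lt u
    have := h.lt v
    rw [SimpleGraph.Walk.length_append, SimpleGraph.Walk.length_reverse]
    omega
  · intro e he
    simp only [SimpleGraph.Walk.edges_append, SimpleGraph.Walk.edges_reverse, List.mem_append,
      List.mem_reverse] at he
    rcases he with he | he
    · exact hae e he
    · exact hbe e he

/-- The simple graph obtained by contracting every cluster to its root, loops and multiplicities
being discarded. -/
def quotient (h : IsClustering G s t p) : SimpleGraph {v : V // t v = 0} where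
  Adj A B := A ≠ B ∧ ∃ u v, h.root u = A ∧ h.root v = B ∧ G.Adj u v
  symm := ⟨by
    rintro A B ⟨hne, u, v, hu, hv, huv⟩
    exact ⟨hne.symm, v, u, hv, hu, huv.symm⟩⟩
  loopless := ⟨fun A hA => hA.1 rfl⟩

/-- A walk in the quotient lifts to a walk in `G` with prescribed ends in the end clusters: cross
from cluster to cluster along edges representing the steps of the walk, and use tree paths inside
each of the `w.length + 1` clusters visited. -/
lemma exists_lift (h : IsClustering G s t p) {A B : {v : V // t v = 0}}
    (w : h.quotient.Walk A B) : ∀ u v, h.root u = A → h.root v = B →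
    ∃ q : G.Walk u v, q.length + 2 + w.length ≤ 2 * s * (w.length + 1) ∧
      ∀ e ∈ q.edges, e ∈ clusterEdges t p ∨ e.map h.root ∈ w.edges := by
  induction w with
  | nil =>
    intro u v hu hv
    obtain ⟨q, hq, hqe⟩ := h.exists_walk (hu.trans hv.symm)
    exact ⟨q, by simpa using hq, fun e he => Or.inl (hqe e he)⟩
  | @cons A B C hAB w ih =>
    intro u v hu hv
    obtain ⟨x, y, hx, hy, hxy⟩ := hAB.2
    obtain ⟨q, hq, hqe⟩ := h.exists_walk (hu.trans hx.symm)
    obtain ⟨q', hq', hqe'⟩ := ih y v hy hv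
    refine ⟨q.append (SimpleGraph.Walk.cons hxy q'), ?_, ?_⟩
    · simp only [SimpleGraph.Walk.length_append, SimpleGraph.Walk.length_cons]
      rw [mul_add _ (w.length + 1)]
      omega
    · intro e he
      simp only [SimpleGraph.Walk.edges_append, SimpleGraph.Walk.edges_cons, List.mem_append,
        List.mem_cons] at he ⊢
      rcases he with he | rfl | he
      · exact Or.inl (hqe e he)
      · right; left
        simp [hx, hy]
      · rcases hqe' e he with h' | h'
        · exact Or.inl h'
        · exact Or.inr (Or.inr h')

/-- For a cycle of the quotient, lift its first step to an edge of `G` and the remaining steps to a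
walk closing it up. That walk avoids the edge, which projects to the first step only. -/
lemma noShortCycle_quotient (h : IsClustering G s t p) {L g : ℕ} (hG : NoShortCycle G L)
    (hL : g * (2 * s - 1) ≤ L) : NoShortCycle h.quotient g := by
  intro A w hw
  by_contra hlen
  push Not at hlen
  cases w with
  | nil => exact hw.ne_nil rfl
  | @cons _ B _ hAB w =>
    rw [SimpleGraph.Walk.cons_isCycle_iff] at hw
    rw [SimpleGraph.Walk.length_cons] at hlen
    obtain ⟨u, v, hu, hv, huv⟩ := hAB.2
    obtain ⟨q, hq, hqe⟩ := h.exists_lift w v u hv hu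
    refine hG.false_of_walk huv q ?_ ?_
    · intro he
      rcases hqe _ he with h' | h'
      · have := h.isDiag_map_root h'
        simp only [Sym2.map_mk, hu, hv] at this
        exact hAB.1 (by simpa using this)
      · simp only [Sym2.map_mk, hu, hv] at h'
        exact hw.2 h'
    · have hs := h.lt u
      have h1 : (w.length + 1) * (2 * s - 1) ≤ L := (Nat.mul_le_mul_right _ hlen).trans hL
      obtain ⟨s', rfl⟩ : ∃ s', s = s' + 1 := ⟨s - 1, by omega⟩
      have h2 : 2 * (s' + 1) - 1 = 2 * s' + 1 := by omega
      rw [h2] at h1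
      nlinarith

/-- In the absence of short cycles, an edge of `G` lies in a tree of the clustering or joins two
different clusters, and no two edges join the same pair of clusters. Hence contraction loses only
the tree edges, of which there is one for each vertex that is not a root. -/
lemma card_edges_le [Fintype V] (h : IsClustering G s t p) {L : ℕ} (hG : NoShortCycle G L)
    (hL : 2 * (2 * s - 1) ≤ L) :
    G.edgeSet.ncard + Nat.card {v : V // t v = 0} ≤
      Fintype.card V + h.quotient.edgeSet.ncard := by
  classical
  set T := clusterEdges t p with hT
  set C : Set (Sym2 V) := G.edgeSet \ T with hC
  have hcross : ∀ u v, s(u, v) ∈ C → h.root u ≠ h.root v := by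
    intro u v huv heq
    obtain ⟨q, hq, hqe⟩ := h.exists_walk heq.symm
    exact hG.false_of_walk huv.1 q (fun he => huv.2 (hqe _ he)) (by omega)
  have hmaps : ∀ e ∈ C, e.map h.root ∈ h.quotient.edgeSet := by
    intro e he
    induction e using Sym2.ind with
    | _ u v =>
      rw [Sym2.map_mk, SimpleGraph.mem_edgeSet]
      exact ⟨hcross u v he, u, v, rfl, rfl, he.1⟩
  have hpar : ∀ u v x y, s(u, v) ∈ C → s(x, y) ∈ C → h.root u = h.root x →
      h.root v = h.root y → s(u, v) = s(x, y) := by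
    intro u v x y huv hxy hux hvy
    by_contra hne
    obtain ⟨a, ha, hae⟩ := h.exists_walk hvy
    obtain ⟨b, hb, hbe⟩ := h.exists_walk hux.symm
    have hadj : G.Adj y x := (G.mem_edgeSet.1 hxy.1).symm
    refine hG.false_of_walk huv.1 (a.append (SimpleGraph.Walk.cons hadj b)) ?_ ?_
    · simp only [SimpleGraph.Walk.edges_append, SimpleGraph.Walk.edges_cons, List.mem_append,
        List.mem_cons, not_or]
      refine ⟨fun he => huv.2 (hae _ he), fun he => hne (he.trans Sym2.eq_swap),
        fun he => huv.2 (hbe _ he)⟩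
    · rw [SimpleGraph.Walk.length_append, SimpleGraph.Walk.length_cons]
      omega
  have hinj : Set.InjOn (Sym2.map h.root) C := by
    intro e he e' he' hee
    induction e using Sym2.ind with
    | _ u v =>
      induction e' using Sym2.ind with
      | _ x y =>
        rw [Sym2.map_mk, Sym2.map_mk, Sym2.eq_iff] at hee
        rcases hee with ⟨h1, h2⟩ | ⟨h1, h2⟩
        · exact hpar u v x y he he' h1 h2
        · rw [Sym2.eq_swap (a := x)] at he' ⊢
          exact hpar u v y x he he' h1 h2
  have hCcard : C.ncard ≤ h.quotient.edgeSet.ncard :=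
    Set.ncard_le_ncard_of_injOn _ hmaps hinj (Set.toFinite _)
  have hTcard : T.ncard ≤ {v : V | 0 < t v}.ncard := by
    have : T ⊆ (fun v => s(v, p v)) '' {v : V | 0 < t v} := by
      rintro e ⟨v, hv, rfl⟩
      exact ⟨v, hv, rfl⟩
    exact (Set.ncard_le_ncard this (Set.toFinite _)).trans (Set.ncard_image_le (Set.toFinite _))
  have hE : G.edgeSet.ncard ≤ T.ncard + C.ncard :=
    (Set.ncard_le_ncard (t := T ∪ C) (by simp [hC]) (Set.toFinite _)).trans
      (Set.ncard_union_le _ _)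
  have hV : {v : V | 0 < t v}.ncard + {v : V | t v = 0}.ncard = Fintype.card V := by
    have := Set.ncard_add_ncard_compl {v : V | 0 < t v}
    rw [← Nat.card_eq_fintype_card, ← this]
    congr 2
    ext v
    simp
  have hR : Nat.card {v : V // t v = 0} = {v : V | t v = 0}.ncard := rfl
  omega

end IsClustering

/-! ### Existence of clusterings -/

/-- Every vertex other than `ρ` has a parent in a breadth-first search from `ρ`. -/
lemma exists_parent {V : Type*} {G : SimpleGraph V} (hG : G.Connected) (ρ v : V)
    (hv : 0 < G.dist ρ v) : ∃ w, G.Adj v w ∧ G.dist ρ w + 1 = G.dist ρ v := by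
  obtain ⟨q, hq⟩ := hG.exists_walk_length_eq_dist v ρ
  rw [SimpleGraph.dist_comm] at hq
  cases q with
  | nil => simp at hv
  | @cons _ w _ hvw q =>
    refine ⟨w, hvw, ?_⟩
    rw [SimpleGraph.Walk.length_cons] at hq
    have h1 := G.dist_le q
    rw [SimpleGraph.dist_comm] at h1
    have h2 := dist_le_succ_of_adj (hG ρ w) hvw.symm
    omega

/-- Cut a breadth-first search tree at all levels congruent to `j` modulo `s`, with `j` chosen so
that these levels contain at most `|V| / s` vertices. The roots are the vertices on these levels
and the root of the search tree. -/
lemma exists_clustering {V : Type*} [Fintype V] {G : SimpleGraph V} (hG : G.Connected)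
    (s : ℕ) (hs : 0 < s) : ∃ (t : V → ℕ) (p : V → V), IsClustering G s t p ∧
      Nat.card {v : V // t v = 0} * s ≤ Fintype.card V + s := by
  classical
  obtain ⟨ρ⟩ := hG.nonempty
  choose! p hp using exists_parent hG ρ
  obtain ⟨j, hj, hjc⟩ : ∃ j < s,
      s * (Finset.univ.filter fun v : V => G.dist ρ v % s = j).card ≤ Fintype.card V := by
    by_contra! hcon
    have h1 := Finset.card_eq_sum_card_fiberwise (f := fun v : V => G.dist ρ v % s)
      (s := Finset.univ) (t := Finset.range s) (fun v _ => by
        simpa using Nat.mod_lt _ hs)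
    have h2 : ∑ j ∈ Finset.range s, Fintype.card V < ∑ j ∈ Finset.range s,
        s * (Finset.univ.filter fun v : V => G.dist ρ v % s = j).card :=
      Finset.sum_lt_sum_of_nonempty ⟨0, by simpa using hs⟩
        (fun j hj => hcon j (by simpa using hj))
    rw [← Finset.mul_sum, ← h1] at h2
    simp at h2
  refine ⟨fun v => if G.dist ρ v < j then G.dist ρ v else (G.dist ρ v - j) % s, p,
    ⟨?_, ?_, ?_⟩, ?_⟩
  · intro v
    split_ifs with h
    · omega
    · exact Nat.mod_lt _ hs
  · intro v hv
    refine (hp v ?_).1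
    by_contra h0
    have : G.dist ρ v = 0 := by omega
    simp [this] at hv
  · intro v hv
    have h0 : 0 < G.dist ρ v := by
      by_contra h0
      have : G.dist ρ v = 0 := by omega
      simp [this] at hv
    have h1 := (hp v h0).2
    by_cases hlt : G.dist ρ v < j
    · rw [if_pos hlt, if_pos (by omega)]
      exact h1
    · rw [if_neg hlt] at hv ⊢
      have hgt : ¬ G.dist ρ (p v) < j := by
        intro hlt'
        have : G.dist ρ v - j = 0 := by omega
        simp [this] at hv
      rw [if_neg hgt]
      have h2 : G.dist ρ v - j = (G.dist ρ (p v) - j) + 1 := by omega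
      rw [h2] at hv ⊢
      rcases Nat.lt_or_ge ((G.dist ρ (p v) - j) % s + 1) s with h3 | h3
      · rw [Nat.add_mod_of_add_mod_lt (a := G.dist ρ (p v) - j) (b := 1) (c := s)] <;>
          rcases Nat.lt_or_ge 1 s with h4 | h4
        · rw [Nat.mod_eq_of_lt h4]
        · omega
        · rw [Nat.mod_eq_of_lt h4]; exact h3
        · omega
      · have h4 : (G.dist ρ (p v) - j) % s = s - 1 := by
          have := Nat.mod_lt (G.dist ρ (p v) - j) hs
          omega
        rw [Nat.add_mod, h4] at hv
        rcases Nat.lt_or_ge 1 s with h5 | h5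
        · rw [Nat.mod_eq_of_lt h5, Nat.sub_add_cancel hs, Nat.mod_self] at hv
          omega
        · have : s = 1 := by omega
          subst this
          simp at hv
  · rw [Nat.card_eq_fintype_card, Fintype.card_subtype]
    have : (Finset.univ.filter fun v : V =>
        (if G.dist ρ v < j then G.dist ρ v else (G.dist ρ v - j) % s) = 0) ⊆
        insert ρ (Finset.univ.filter fun v : V => G.dist ρ v % s = j) := by
      intro v hv
      simp only [Finset.mem_filter, Finset.mem_univ, true_and] at hv
      rw [Finset.mem_insert]
      split_ifs at hv with h
      · left
        exact (hG.dist_eq_zero_iff.1 hv).symm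
      · right
        simp only [Finset.mem_filter, Finset.mem_univ, true_and]
        obtain ⟨c, hc⟩ := Nat.dvd_of_mod_eq_zero hv
        have : G.dist ρ v = j + s * c := by omega
        rw [this, Nat.add_mul_mod_self_left, Nat.mod_eq_of_lt hj]
    have h1 := (Finset.card_le_card this).trans (Finset.card_insert_le _ _)
    calc _ ≤ _ := Nat.mul_le_mul_right s h1
      _ = s * (Finset.univ.filter fun v : V => G.dist ρ v % s = j).card + s := by ring
      _ ≤ _ := by omega

/-! ### Reduction to connected graphs and conclusion -/

/-- Joining two components by an edge creates no new cycle, so an edge-maximal graph without short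
cycles is connected. -/
lemma exists_connected_ge {V : Type*} [Fintype V] [Nonempty V] {G : SimpleGraph V} {L : ℕ}
    (hG : NoShortCycle G L) : ∃ H : SimpleGraph V, G ≤ H ∧ H.Connected ∧ NoShortCycle H L := by
  classical
  obtain ⟨H, hGH, hH⟩ := (Set.toFinite {H : SimpleGraph V | NoShortCycle H L}).exists_le_maximal hG
  refine ⟨H, hGH, ?_, hH.prop⟩
  rw [SimpleGraph.connected_iff]
  refine ⟨fun u v => ?_, inferInstance⟩
  by_contra hr
  have huv : u ≠ v := by rintro rfl; exact hr (SimpleGraph.Reachable.refl _)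
  have hadj : (H ⊔ SimpleGraph.edge u v).Adj u v := by
    simp [SimpleGraph.edge_adj, huv]
  have hnadj : ¬ H.Adj u v := fun h => hr h.reachable
  have hedge : ∀ e ∈ (H ⊔ SimpleGraph.edge u v).edgeSet, e ≠ s(u, v) → e ∈ H.edgeSet := by
    intro e he hne
    rw [SimpleGraph.edgeSet_sup, SimpleGraph.edgeSet_edge_of_ne huv] at he
    rcases he with he | he
    · exact he
    · exact absurd he hne
  have hbridge : (H ⊔ SimpleGraph.edge u v).IsBridge s(u, v) := by
    rw [SimpleGraph.isBridge_iff_forall_walk_mem_edges]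
    intro q
    by_contra hq
    exact hr ⟨q.transfer H fun e he =>
      hedge e (q.edges_subset_edgeSet he) (by rintro rfl; exact hq he)⟩
  have hno : NoShortCycle (H ⊔ SimpleGraph.edge u v) L := by
    intro x w hw
    have hnot := (SimpleGraph.isBridge_iff_forall_cycle_notMem
      ((SimpleGraph.mem_edgeSet _).2 hadj)).1 hbridge w hw
    have hmem : ∀ e ∈ w.edges, e ∈ H.edgeSet := fun e he =>
      hedge e (w.edges_subset_edgeSet he) (by rintro rfl; exact hnot he)
    have := hH.prop x (w.transfer H hmem) (hw.transfer hmem)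
    simpa using this
  exact hnadj (hH.le_of_ge hno le_sup_left hadj)

/-- Contracting clusters of height less than `s`, where `|V| ≤ (k - 1) s`, leaves at most `k`
vertices and at least twice as many edges as vertices. -/
lemma exists_short_cycle {V : Type*} [Fintype V] [Nonempty V] (G : SimpleGraph V)
    (k s r : ℕ) (hk : 1 ≤ k) (hs : 0 < s) (hr : 1 ≤ r) (hks : Fintype.card V ≤ (k - 1) * s)
    (hkr : k < 2 ^ (r + 1)) (hE : Fintype.card V + k ≤ G.edgeSet.ncard) :
    ¬ NoShortCycle G (2 * r * (2 * s - 1)) := by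
  classical
  intro hG
  obtain ⟨H, hGH, hH, hno⟩ := exists_connected_ge hG
  have hE' : G.edgeSet.ncard ≤ H.edgeSet.ncard :=
    Set.ncard_le_ncard (SimpleGraph.edgeSet_mono hGH) (Set.toFinite _)
  obtain ⟨t, p, h, hN⟩ := exists_clustering hH s hs
  have hQ := h.card_edges_le hno (Nat.mul_le_mul_right _ (by omega))
  have hQno := h.noShortCycle_quotient hno (g := 2 * r) le_rfl
  have hNk : Nat.card {v : V // t v = 0} ≤ k := by
    have h1 : Nat.card {v : V // t v = 0} * s ≤ k * s := by
      calc _ ≤ _ := hN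
        _ ≤ (k - 1) * s + s := by omega
        _ = (k - 1 + 1) * s := by ring
        _ = k * s := by rw [Nat.sub_add_cancel hk]
    exact Nat.le_of_mul_le_mul_right h1 hs
  have : Nonempty {v : V // t v = 0} := ⟨h.root (Classical.arbitrary V)⟩
  have hcard : h.quotient.edgeSet.ncard = h.quotient.edgeFinset.card := by
    rw [Set.ncard_eq_toFinset_card', SimpleGraph.edgeFinset]
  rw [Nat.card_eq_fintype_card] at hQ hNk
  have := moore_of_card_edges _ h.quotient rfl hr (by omega) hQno
  omega

/-- For all integers `n ≥ 4` and `k ≥ 2`, if `G` is a simple graph on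
`n` vertices with `n + k` edges, then `G` contains a cycle of length at most
`14 * (n + k) * log k / (3 * k)` (log base 2). -/
theorem short_cycle_of_many_edges {V : Type*} [Fintype V] [DecidableEq V]
    (n k : ℕ) (hn4 : 4 ≤ n) (hk : 2 ≤ k) (hn : Fintype.card V = n)
    (G : SimpleGraph V) [DecidableRel G.Adj]
    (hedges : G.edgeFinset.card = n + k) :
    ∃ (u : V) (w : G.Walk u u), w.IsCycle ∧
      (w.length : ℝ) ≤ 14 * ((n : ℝ) + (k : ℝ)) * Real.logb 2 k / (3 * (k : ℝ)) := by
  have hn0 : Nonempty V := by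
    rw [← Fintype.card_pos_iff]
    omega
  have hk0 : (0 : ℝ) < 3 * (k : ℝ) := by
    have : (0 : ℝ) < k := by exact_mod_cast (by omega : 0 < k)
    linarith
  have hncard : G.edgeSet.ncard = n + k := by
    rw [← hedges, Set.ncard_eq_toFinset_card', SimpleGraph.edgeFinset]
  set r := Nat.log 2 k with hr
  have hr1 : 1 ≤ r := Nat.log_pos (by norm_num) hk
  have hrlog : (r : ℝ) ≤ Real.logb 2 k := by
    exact_mod_cast Real.natLog_le_logb k 2
  have hnk : (0 : ℝ) ≤ 14 * ((n : ℝ) + k) := by positivity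
  -- The integer `r = ⌊log₂ k⌋` replaces the logarithm, which turns the bound into one in `ℕ`.
  suffices hsuff : ∃ (u : V) (w : G.Walk u u), w.IsCycle ∧
      w.length * (3 * k) ≤ 14 * (n + k) * r by
    obtain ⟨u, w, hw, hle⟩ := hsuff
    refine ⟨u, w, hw, ?_⟩
    rw [le_div_iff₀ hk0]
    have hle' : (w.length : ℝ) * (3 * k) ≤ 14 * ((n : ℝ) + k) * r := by exact_mod_cast hle
    exact hle'.trans (mul_le_mul_of_nonneg_left hrlog hnk)
  rcases Nat.lt_or_ge k 7 with hk7 | hk7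
  · -- For `k ≤ 6` the bound is at least the number of edges, so any cycle will do.
    have hcyc : ¬ G.IsAcyclic := by
      intro hac
      classical
      obtain ⟨T, hGT, -, hT⟩ :=
        SimpleGraph.connected_top.exists_isTree_le_of_le_of_isAcyclic le_top hac
      have h1 := hT.card_edgeFinset
      have h2 := Finset.card_le_card (SimpleGraph.edgeFinset_mono hGT)
      omega
    rw [SimpleGraph.IsAcyclic] at hcyc
    push Not at hcyc
    obtain ⟨u, w, hw⟩ := hcyc
    refine ⟨u, w, hw, ?_⟩
    have hlen := hw.isCircuit.isTrail.length_le_card_edgeFinset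
    rw [hedges] at hlen
    have h3 : 3 * k ≤ 14 * r := by
      rcases Nat.lt_or_ge k 4 with h4 | h4
      · omega
      · have : 2 ≤ r := Nat.le_log_of_pow_le (by norm_num) (by omega)
        omega
    calc w.length * (3 * k) ≤ (n + k) * (14 * r) := Nat.mul_le_mul hlen h3
      _ = 14 * (n + k) * r := by ring
  · obtain ⟨m, rfl⟩ : ∃ m, k = m + 1 := ⟨k - 1, by omega⟩
    -- `s = ⌈n / (k - 1)⌉`
    set s := (n + m - 1) / m with hs
    have hsm : m * s ≤ n + m - 1 := Nat.mul_div_le _ _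
    have hns : n ≤ m * s := by
      have := Nat.lt_mul_div_succ (n + m - 1) (by omega : 0 < m)
      rw [← hs, mul_add] at this
      omega
    have hs0 : 0 < s := by
      rcases Nat.eq_zero_or_pos s with h | h
      · rw [h] at hns
        omega
      · exact h
    have hmain := exists_short_cycle G (m + 1) s r (by omega) hs0 hr1 (by simpa [hn] using hns)
      (Nat.lt_pow_succ_log_self (by norm_num) _) (by omega)
    rw [NoShortCycle] at hmain
    push Not at hmain
    obtain ⟨u, w, hw, hlen⟩ := hmain
    refine ⟨u, w, hw, ?_⟩
    have hkey : (2 * s - 1) * (3 * (m + 1)) ≤ 7 * (n + (m + 1)) := by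
      obtain ⟨s', hs'⟩ : ∃ s', s = s' + 1 := ⟨s - 1, by omega⟩
      have e : 2 * s - 1 = 2 * s' + 1 := by omega
      rw [e]
      rw [hs', mul_add] at hsm
      have h1 : m * s' + 1 ≤ n := by omega
      refine le_of_mul_le_mul_left (a := m) ?_ (by omega)
      nlinarith [Nat.mul_le_mul_left m h1, Nat.mul_le_mul_right n (by omega : 6 ≤ m)]
    calc w.length * (3 * (m + 1)) ≤ (2 * r * (2 * s - 1)) * (3 * (m + 1)) :=
          Nat.mul_le_mul_right _ hlen
      _ = 2 * r * ((2 * s - 1) * (3 * (m + 1))) := by ring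
      _ ≤ 2 * r * (7 * (n + (m + 1))) := Nat.mul_le_mul_left _ hkey
      _ = 14 * (n + (m + 1)) * r := by ring
end

section
/- Let k ≥ 2 be an integer and let G be a simple graph on n vertices with n ≥ 10^9 · k. Suppose the edges of G are colored with n + k color classes, each of size at least 10^9 · k. Then there exists a set S of vertices of G with |S| ≤ n·log k/(140·√k) such that every color class contains at least one edge with an endpoint in S. -/
/-!
Let `A i` be the set of vertices touched by color `i`. A graph on `m` vertices has at most `m²`
edges, so `|A i| ≥ √(10⁹ k) ≥ 28000 √k`: the task is to hit at most `2n` subsets of an `n`-set, all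
of size at least `s = 28000 √k`. Choosing vertices greedily, each step hits at least the fraction
`s / n` of the sets that are still unhit, so that after `t` steps at most `2n · exp (-s t / n)` sets
remain (`exists_greedy_hitting`). With `t ≈ n log k / (280 √k)`, at most `2n / k ^ 100` sets remain,
and each of these is hit by one further vertex.
-/

/-- Greedy covering: `t` vertices can be chosen so that the proportion of the sets `A i` that they
miss is at most `exp (-s / n) ^ t`, where `s` is a lower bound on the sizes of the sets. -/
lemma exists_greedy_hitting {V ι : Type*} [Fintype V] [DecidableEq V]
    (hV : 0 < Fintype.card V) (I : Finset ι) (A : ι → Finset V) (s : ℝ)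
    (hs : ∀ i ∈ I, s ≤ (A i).card) (t : ℕ) :
    ∃ S : Finset V, S.card ≤ t ∧
      ((I.filter (fun i => Disjoint S (A i))).card : ℝ)
        ≤ I.card * Real.exp (-(s / Fintype.card V)) ^ t := by
  classical
  induction t with
  | zero => exact ⟨∅, by simp, by simp⟩
  | succ t ih =>
    obtain ⟨S, hS, hU⟩ := ih
    set U := I.filter (fun i => Disjoint S (A i)) with hUdef
    have hn : (0 : ℝ) < Fintype.card V := by exact_mod_cast hV
    -- double counting of the incidences between vertices and unhit sets
    have hdc : ∑ v : V, ((U.filter (fun i => v ∈ A i)).card : ℝ) = ∑ i ∈ U, ((A i).card : ℝ) := by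
      have h := Finset.sum_card_bipartiteAbove_eq_sum_card_bipartiteBelow
        (s := (Finset.univ : Finset V)) (t := U) (fun v i => v ∈ A i)
      simp only [Finset.bipartiteAbove, Finset.bipartiteBelow, Finset.filter_univ_mem] at h
      exact_mod_cast h
    have hsum : (U.card : ℝ) * s ≤ ∑ i ∈ U, ((A i).card : ℝ) := by
      rw [← nsmul_eq_mul]
      exact Finset.card_nsmul_le_sum _ _ _ fun i hi => hs i (Finset.mem_filter.1 hi).1
    obtain ⟨v, -, hv⟩ : ∃ v ∈ (Finset.univ : Finset V),
        (U.card : ℝ) * (s / Fintype.card V) ≤ ((U.filter (fun i => v ∈ A i)).card : ℝ) := by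
      apply Finset.exists_le_of_sum_le
      · haveI := Fintype.card_pos_iff.1 hV
        exact Finset.univ_nonempty
      · rw [hdc, Finset.sum_const, Finset.card_univ, nsmul_eq_mul]
        refine le_trans (le_of_eq ?_) hsum
        field_simp
    refine ⟨insert v S, (Finset.card_insert_le _ _).trans (by omega), ?_⟩
    have hnew : I.filter (fun i => Disjoint (insert v S) (A i)) = U.filter (fun i => v ∉ A i) := by
      ext i
      simp only [hUdef, Finset.mem_filter, Finset.disjoint_insert_left]
      tauto
    have hsplit : ((U.filter (fun i => v ∈ A i)).card : ℝ) + (U.filter (fun i => v ∉ A i)).card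
        = U.card := by
      exact_mod_cast Finset.card_filter_add_card_filter_not (s := U) (fun i => v ∈ A i)
    rw [hnew, pow_succ, ← mul_assoc]
    have hexp := Real.add_one_le_exp (-(s / Fintype.card V))
    calc ((U.filter (fun i => v ∉ A i)).card : ℝ)
        ≤ U.card * (-(s / Fintype.card V) + 1) := by linarith
      _ ≤ U.card * Real.exp (-(s / Fintype.card V)) := by gcongr
      _ ≤ _ := by gcongr

/-- A hitting set of size at most `t` plus the number of sets missed by the greedy choice. -/
lemma exists_hitting {V ι : Type*} [Fintype V] [DecidableEq V]
    (hV : 0 < Fintype.card V) (I : Finset ι) (A : ι → Finset V) (s : ℝ) (hs0 : 0 < s)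
    (hs : ∀ i ∈ I, s ≤ (A i).card) (t : ℕ) :
    ∃ S : Finset V, (S.card : ℝ) ≤ t + I.card * Real.exp (-(s / Fintype.card V)) ^ t ∧
      ∀ i ∈ I, ∃ v ∈ S, v ∈ A i := by
  classical
  obtain ⟨S, hS, hU⟩ := exists_greedy_hitting hV I A s hs t
  have hne : ∀ i ∈ I, ∃ v, v ∈ A i := fun i hi => by
    have h : (0 : ℝ) < (A i).card := hs0.trans_le (hs i hi)
    exact Finset.card_pos.1 (by exact_mod_cast h)
  haveI : Nonempty V := Fintype.card_pos_iff.1 hV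
  choose! f hf using hne
  refine ⟨S ∪ (I.filter (fun i => Disjoint S (A i))).image f, ?_, ?_⟩
  · have h1 := Finset.card_union_le S ((I.filter (fun i => Disjoint S (A i))).image f)
    have h2 := Finset.card_image_le (s := I.filter (fun i => Disjoint S (A i))) (f := f)
    have h3 : ((S ∪ (I.filter (fun i => Disjoint S (A i))).image f).card : ℝ)
        ≤ t + (I.filter (fun i => Disjoint S (A i))).card := by
      exact_mod_cast (by omega)
    linarith
  · intro i hi
    by_cases hd : Disjoint S (A i)
    · exact ⟨f i, Finset.mem_union_right _
        (Finset.mem_image_of_mem f (Finset.mem_filter.2 ⟨hi, hd⟩)), hf i hi⟩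
    · obtain ⟨v, hv, hv'⟩ := Finset.not_disjoint_iff.1 hd
      exact ⟨v, Finset.mem_union_left _ hv, hv'⟩

/-- A set of unordered pairs whose members all lie in `A` has at most `|A|²` elements. -/
lemma card_le_sq_of_subset_sym2 {V : Type*} [DecidableEq V] (E : Finset (Sym2 V)) (A : Finset V)
    (h : E ⊆ A.sym2) : E.card ≤ A.card ^ 2 := by
  have h1 := Finset.card_le_card h
  rw [Finset.card_sym2, Nat.choose_two_right] at h1
  refine h1.trans (Nat.div_le_of_le_mul ?_)
  simp only [Nat.add_sub_cancel]
  nlinarith [Nat.le_self_pow two_ne_zero A.card]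

/-- The numerical estimate: `⌈n log₂ k / (280 √k)⌉` greedy steps, together with the sets these leave
unhit, stay within the budget. -/
lemma budget_bound (n k : ℕ) (hk : 2 ≤ k) (hnk : 10 ^ 9 * k ≤ n) :
    (⌈(n : ℝ) * Real.logb 2 k / (280 * √k)⌉₊ : ℝ) + ((n + k : ℕ) : ℝ) *
      Real.exp (-(28000 * √k / n)) ^ ⌈(n : ℝ) * Real.logb 2 k / (280 * √k)⌉₊
      ≤ (n : ℝ) * Real.logb 2 k / (140 * √k) := by
  have hk' : (2 : ℝ) ≤ k := by exact_mod_cast hk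
  have hnk' : (10 : ℝ) ^ 9 * k ≤ n := by exact_mod_cast hnk
  have hn0 : (0 : ℝ) < n := by linarith
  have hr : 0 < √(k : ℝ) := Real.sqrt_pos.2 (by linarith)
  have hrr : √(k : ℝ) * √k = k := Real.mul_self_sqrt (by linarith)
  have hr1 : 1 ≤ √(k : ℝ) := Real.one_le_sqrt.2 (by linarith)
  set r := √(k : ℝ)
  set L := Real.logb 2 k with hL
  have hL1 : 1 ≤ L := by
    rw [hL, Real.le_logb_iff_rpow_le one_lt_two (by linarith)]
    simpa using hk'
  have hLlog : Real.log k ≤ L := by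
    rw [hL, Real.logb, le_div_iff₀ (Real.log_pos one_lt_two)]
    have : Real.log 2 ≤ 1 := by linarith [Real.log_two_lt_d9]
    nlinarith [Real.log_nonneg (show (1 : ℝ) ≤ k by linarith)]
  set t := ⌈(n : ℝ) * L / (280 * r)⌉₊
  have ht1 : (n : ℝ) * L / (280 * r) ≤ t := Nat.le_ceil _
  have ht2 : (t : ℝ) < (n : ℝ) * L / (280 * r) + 1 := Nat.ceil_lt_add_one (by positivity)
  have hexp : Real.exp (-(28000 * r / n)) ^ t ≤ ((k : ℝ) ^ 100)⁻¹ := by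
    rw [← Real.exp_nat_mul, ← Real.exp_log (show (0 : ℝ) < ((k : ℝ) ^ 100)⁻¹ by positivity),
      Real.exp_le_exp, Real.log_inv, Real.log_pow]
    have h1 : (n : ℝ) * L / (280 * r) * (28000 * r / n) ≤ t * (28000 * r / n) := by gcongr
    have h2 : (n : ℝ) * L / (280 * r) * (28000 * r / n) = 100 * L := by field_simp; norm_num
    push_cast
    linarith
  have hk100 : (2000 : ℝ) * r ≤ (k : ℝ) ^ 100 := by
    have h1 : (2 : ℝ) ^ 99 ≤ (k : ℝ) ^ 99 := by gcongr
    have h2 : (k : ℝ) ^ 100 = k ^ 99 * k := pow_succ _ _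
    have h3 : r ≤ k := by nlinarith
    rw [h2]
    have h4 : (2000 : ℝ) ≤ (k : ℝ) ^ 99 := le_trans (by norm_num) h1
    gcongr
  have hinv : ((k : ℝ) ^ 100)⁻¹ ≤ (2000 * r)⁻¹ := inv_anti₀ (by positivity) hk100
  have hmiss : ((n + k : ℕ) : ℝ) * Real.exp (-(28000 * r / n)) ^ t ≤ 2 * n * (2000 * r)⁻¹ := by
    push_cast
    exact mul_le_mul (by linarith) (hexp.trans hinv) (by positivity) (by positivity)
  have hX : (1000 : ℝ) ≤ n / r := by
    rw [le_div_iff₀ hr]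
    nlinarith
  have hXL : n / r ≤ n / r * L := le_mul_of_one_le_right (by positivity) hL1
  have e1 : (n : ℝ) * L / (280 * r) = n / r * L / 280 := by field_simp
  have e2 : (n : ℝ) * L / (140 * r) = n / r * L / 140 := by field_simp
  have e3 : 2 * n * (2000 * r)⁻¹ = n / r / 1000 := by field_simp; norm_num
  rw [e1] at ht2
  rw [e3] at hmiss
  rw [e2]
  linarith

/-- Let `k ≥ 2` be an integer and let `G` be a simple graph on `n`
vertices with `n ≥ 10^9 * k`. Suppose the edges of `G` are colored with `n + k` color
classes, each of size at least `10^9 * k`. Then there exists a set `S` of vertices of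
`G` with `|S| ≤ n * log k / (140 * √k)` such that every color class contains at least
one edge with an endpoint in `S`. -/
theorem exists_small_transversal_of_colors {V : Type*} [Fintype V] [DecidableEq V]
    (n k : ℕ) (hk : 2 ≤ k) (hn : Fintype.card V = n) (hnk : 10 ^ 9 * k ≤ n)
    (G : SimpleGraph V) [DecidableRel G.Adj] (b : Sym2 V → ℕ)
    (hsize : ∀ i, 1 ≤ i → i ≤ n + k →
      10 ^ 9 * k ≤ (G.edgeFinset.filter (fun e => b e = i)).card)
    (hempty : ∀ i, n + k < i → G.edgeFinset.filter (fun e => b e = i) = ∅) :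
    ∃ S : Finset V,
      (S.card : ℝ) ≤ (n : ℝ) * Real.logb 2 k / (140 * Real.sqrt k) ∧
      ∀ i, 1 ≤ i → i ≤ n + k → ∃ e ∈ G.edgeFinset, b e = i ∧ ∃ v ∈ S, v ∈ e := by
  classical
  set A : ℕ → Finset V := fun i =>
    Finset.univ.filter (fun v => ∃ e ∈ G.edgeFinset, b e = i ∧ v ∈ e) with hA
  have hk' : (2 : ℝ) ≤ k := by exact_mod_cast hk
  have hs : ∀ i ∈ Finset.Icc 1 (n + k), 28000 * √(k : ℝ) ≤ (A i).card := by
    intro i hi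
    rw [Finset.mem_Icc] at hi
    have h := (hsize i hi.1 hi.2).trans (card_le_sq_of_subset_sym2 _ (A i) (by
      intro e he
      rw [Finset.mem_filter] at he
      rw [Finset.mem_sym2_iff]
      intro v hv
      exact Finset.mem_filter.2 ⟨Finset.mem_univ _, e, he.1, he.2, hv⟩))
    have h' : (10 : ℝ) ^ 9 * k ≤ ((A i).card : ℝ) ^ 2 := by exact_mod_cast h
    refine (pow_le_pow_iff_left₀ (by positivity) (by positivity) two_ne_zero).1 ?_
    rw [mul_pow, Real.sq_sqrt (by linarith)]
    linarith
  have hV : 0 < Fintype.card V := by omega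
  obtain ⟨S, hS, hit⟩ := exists_hitting hV (Finset.Icc 1 (n + k)) A (28000 * √(k : ℝ))
    (by have : 0 < √(k : ℝ) := Real.sqrt_pos.2 (by linarith)
        positivity) hs ⌈(n : ℝ) * Real.logb 2 k / (280 * √k)⌉₊
  rw [hn, Nat.card_Icc, Nat.add_sub_cancel] at hS
  refine ⟨S, hS.trans (budget_bound n k hk hnk), fun i h1 h2 => ?_⟩
  obtain ⟨v, hvS, hvA⟩ := hit i (Finset.mem_Icc.2 ⟨h1, h2⟩)
  obtain ⟨e, he, hb, hve⟩ := (Finset.mem_filter.1 hvA).2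
  exact ⟨e, he, hb, v, hvS, hve⟩
end

section
/- Let k ≥ 2 be an integer, set c = 10^9, and let G be a simple graph on n vertices whose edges are colored with n + k color classes, each of size exactly c·k. Let {H_1, …, H_m} be a collection of colorful stars in G, and suppose that more than k/2 of the colors have no edge in E(H_1) ∪ ⋯ ∪ E(H_m). Then there exists a colorful star H in G all of whose edge colors are among the colors having no edge in E(H_1) ∪ ⋯ ∪ E(H_m); in particular, {H_1, …, H_m, H} is a strictly larger collection of colorful stars. -/
/-!
Let `M` be the set of colors missing from the stars of `C`, so `|M| > k / 2`, and put
`x = (c k)^(1/3) ≥ 1000`. For a color class `E` with `x ^ 3` edges, call a vertex *low* if at most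
`x ^ 2` edges of `E` contain it. Since the degrees sum to at most `2 x ^ 3`, there are at most `2 x`
vertices that are not low; they span only `O(x ^ 2)` edges, which is less than half of `E`. Hence
the degrees of the low vertices of `E` sum to at least `c k / 2`
(`half_card_le_sum_lowStar`).

For a vertex `v`, consider the star formed by all edges `e` at `v` whose color is in `M` and for
which `v` is low in the color class of `e`. Each color occurs at most `x ^ 2 = c^(2/3) k^(2/3)`
times in it. Summing over `M`, the sizes of these stars add up to at least
`(k / 2) (c k / 2) = c k ^ 2 / 4`, so one of the `n` stars has at least `c k ^ 2 / (4 n)` edges.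
-/

/-- The edges of `E` at `v`, provided that there are at most `t` of them, and no edge otherwise. -/
noncomputable def lowStar {V : Type*} [DecidableEq V] (E : Finset (Sym2 V)) (t : ℝ) (v : V) :
    Finset (Sym2 V) :=
  E.filter (fun e => v ∈ e ∧ ((E.filter (fun f => v ∈ f)).card : ℝ) ≤ t)

/-- Handshake inequality; loops are allowed in `E`, which is why it is not an equality. -/
lemma sum_degree_le {V : Type*} [Fintype V] [DecidableEq V] (E : Finset (Sym2 V)) :
    ∑ v : V, (E.filter (fun e => v ∈ e)).card ≤ 2 * E.card := by
  simp only [Finset.card_filter]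
  rw [Finset.sum_comm, mul_comm, ← smul_eq_mul, ← Finset.sum_const]
  refine Finset.sum_le_sum fun e _ => ?_
  rw [← Finset.card_filter]
  induction e using Sym2.ind with
  | _ a b =>
    refine (Finset.card_le_card (t := {a, b}) ?_).trans Finset.card_le_two
    intro v hv
    simpa using hv

/-- A vertex of degree more than `x ^ 2` is high. Edges with two high ends are few, and every other
edge lies in the low star of one of its ends. -/
lemma half_card_le_sum_lowStar {V : Type*} [Fintype V] [DecidableEq V] (E : Finset (Sym2 V))
    (x : ℝ) (hx : 1000 ≤ x) (hE : (E.card : ℝ) = x ^ 3) :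
    (E.card : ℝ) / 2 ≤ ∑ v : V, ((lowStar E (x ^ 2) v).card : ℝ) := by
  classical
  set S : Finset V :=
    Finset.univ.filter (fun v => x ^ 2 < ((E.filter (fun f => v ∈ f)).card : ℝ)) with hS
  have hScard : (S.card : ℝ) ≤ 2 * x := by
    have h1 : (S.card : ℝ) * x ^ 2 ≤ ∑ v ∈ S, ((E.filter (fun f => v ∈ f)).card : ℝ) := by
      rw [← nsmul_eq_mul, ← Finset.sum_const]
      refine Finset.sum_le_sum fun v hv => ?_
      exact (Finset.mem_filter.mp hv).2.le
    have h2 : ∑ v ∈ S, ((E.filter (fun f => v ∈ f)).card : ℝ)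
        ≤ ∑ v : V, ((E.filter (fun f => v ∈ f)).card : ℝ) :=
      Finset.sum_le_sum_of_subset_of_nonneg (Finset.subset_univ _) fun _ _ _ => Nat.cast_nonneg _
    have h3 : ∑ v : V, ((E.filter (fun f => v ∈ f)).card : ℝ) ≤ 2 * (E.card : ℝ) := by
      exact_mod_cast sum_degree_le E
    have hx2 : 0 < x ^ 2 := by positivity
    refine le_of_mul_le_mul_right ?_ hx2
    calc (S.card : ℝ) * x ^ 2 ≤ 2 * (E.card : ℝ) := h1.trans (h2.trans h3)
      _ = 2 * x * x ^ 2 := by rw [hE]; ring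
  have hcover : E ⊆ S.sym2 ∪ Finset.univ.biUnion (lowStar E (x ^ 2)) := by
    intro e he
    rw [Finset.mem_union]
    by_cases h : e ∈ S.sym2
    · exact Or.inl h
    · right
      rw [Finset.mem_sym2_iff] at h
      push Not at h
      obtain ⟨v, hve, hvS⟩ := h
      rw [Finset.mem_biUnion]
      refine ⟨v, Finset.mem_univ _, Finset.mem_filter.mpr ⟨he, hve, ?_⟩⟩
      simpa [hS] using hvS
  have hcard : E.card ≤ (S.card + 1).choose 2 + ∑ v : V, (lowStar E (x ^ 2) v).card := by
    refine (Finset.card_le_card hcover).trans ((Finset.card_union_le _ _).trans ?_)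
    rw [Finset.card_sym2]
    exact Nat.add_le_add_left Finset.card_biUnion_le _
  have hcard' : (E.card : ℝ) ≤ (S.card + 1) * S.card / 2
      + ∑ v : V, ((lowStar E (x ^ 2) v).card : ℝ) := by
    have h : (E.card : ℝ) ≤ (((S.card + 1).choose 2 : ℕ) : ℝ)
        + ∑ v : V, ((lowStar E (x ^ 2) v).card : ℝ) := by exact_mod_cast hcard
    rw [Nat.cast_choose_two] at h
    push_cast at h
    simpa using h
  have hs : ((S.card : ℝ) + 1) * S.card ≤ (2 * x + 1) * (2 * x) := by gcongr
  have hx3 : (2 * x + 1) * (2 * x) ≤ x ^ 3 := by nlinarith [mul_nonneg (sub_nonneg.2 hx) (sq_nonneg x)]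
  linarith


/-- A *colorful star* in `G` (with parameters `c`, `k`, `n` and edge-coloring `b`) is a
star subgraph, given by its center `H.1` and its edge set `H.2 ⊆ E(G)` of edges all
incident with the center, having at least `c * k² / (4n)` edges and such that no color
appears more than `c^(2/3) * k^(2/3)` times among its edges. -/
def IsColorfulStar {V : Type*} [Fintype V] [DecidableEq V] (G : SimpleGraph V)
    [DecidableRel G.Adj] (b : Sym2 V → ℕ) (c k n : ℕ)
    (H : V × Finset (Sym2 V)) : Prop :=
  H.2 ⊆ G.edgeFinset ∧ (∀ e ∈ H.2, H.1 ∈ e) ∧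
    ((c : ℝ) * (k : ℝ) ^ 2 / (4 * (n : ℝ)) ≤ (H.2.card : ℝ)) ∧
    ∀ i : ℕ, ((H.2.filter (fun e => b e = i)).card : ℝ) ≤
      (c : ℝ) ^ ((2 : ℝ) / 3) * (k : ℝ) ^ ((2 : ℝ) / 3)

/-- A *collection of colorful stars* is a (finite) set of colorful stars such that every
color appears in the edge set of at most one star of the collection. -/
def IsColorfulStarCollection {V : Type*} [Fintype V] [DecidableEq V] (G : SimpleGraph V)
    [DecidableRel G.Adj] (b : Sym2 V → ℕ) (c k n : ℕ)
    (C : Finset (V × Finset (Sym2 V))) : Prop :=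
  (∀ H ∈ C, IsColorfulStar G b c k n H) ∧
    ∀ i : ℕ, ∀ H₁ ∈ C, ∀ H₂ ∈ C,
      (∃ e ∈ H₁.2, b e = i) → (∃ e ∈ H₂.2, b e = i) → H₁ = H₂

/-- Let `k ≥ 2`, `c = 10^9`, and let `G` be a simple graph on `n`
vertices whose edges are colored with `n + k` color classes, each of size exactly
`c * k`. Let `C` be a collection of colorful stars in `G`, and suppose that more than
`k / 2` of the colors have no edge in the union of the edge sets of the stars of `C`.
Then there is a colorful star `H` in `G` all of whose edge colors are among the colors
having no edge in that union; in particular, `insert H C` is a strictly larger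
collection of colorful stars. -/
theorem exists_new_colorful_star {V : Type*} [Fintype V] [DecidableEq V]
    (n k c : ℕ) (hk : 2 ≤ k) (hc : c = 10 ^ 9) (hn : Fintype.card V = n)
    (G : SimpleGraph V) [DecidableRel G.Adj] (b : Sym2 V → ℕ)
    (hsize : ∀ i, 1 ≤ i → i ≤ n + k →
      (G.edgeFinset.filter (fun e => b e = i)).card = c * k)
    (hempty : ∀ i, n + k < i → G.edgeFinset.filter (fun e => b e = i) = ∅)
    (C : Finset (V × Finset (Sym2 V)))
    (hC : IsColorfulStarCollection G b c k n C)
    (hmissing : (k : ℝ) / 2 < (((Finset.Icc 1 (n + k)).filter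
      (fun i => ∀ H ∈ C, ∀ e ∈ H.2, b e ≠ i)).card : ℝ)) :
    ∃ H : V × Finset (Sym2 V), IsColorfulStar G b c k n H ∧
      (∀ e ∈ H.2, ∀ H' ∈ C, ∀ f ∈ H'.2, b f ≠ b e) ∧
      H ∉ C ∧ IsColorfulStarCollection G b c k n (insert H C) := by
  classical
  have hn0 : 0 < n := by
    -- Otherwise `G` has no edge, whereas color `1` is used `c * k > 0` times.
    have h := hsize 1 le_rfl (by omega)
    have hne : (G.edgeFinset.filter (fun e => b e = 1)).Nonempty := by
      rw [← Finset.card_pos, h, hc]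
      positivity
    obtain ⟨e, -⟩ := hne
    rw [← hn, Fintype.card_pos_iff]
    exact ⟨e.out.1⟩
  set M := (Finset.Icc 1 (n + k)).filter (fun i => ∀ H ∈ C, ∀ e ∈ H.2, b e ≠ i) with hM
  set E : ℕ → Finset (Sym2 V) := fun i => G.edgeFinset.filter (fun e => b e = i) with hEdef
  have hck : (0 : ℝ) ≤ (c : ℝ) * k := by positivity
  have hkR : (2 : ℝ) ≤ k := by exact_mod_cast hk
  have hcR : (c : ℝ) = 10 ^ 9 := by rw [hc]; norm_num
  set x : ℝ := ((c : ℝ) * k) ^ ((1 : ℝ) / 3) with hxdef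
  have hx0 : 0 ≤ x := Real.rpow_nonneg hck _
  have hx3 : x ^ 3 = (c : ℝ) * k := by
    rw [hxdef, ← Real.rpow_natCast, ← Real.rpow_mul hck]
    norm_num
  have hx2 : x ^ 2 = (c : ℝ) ^ ((2 : ℝ) / 3) * (k : ℝ) ^ ((2 : ℝ) / 3) := by
    rw [hxdef, ← Real.rpow_natCast, ← Real.rpow_mul hck, Real.mul_rpow (by positivity) (by positivity)]
    norm_num
  have hx : 1000 ≤ x := by
    refine le_of_pow_le_pow_left₀ (n := 3) (by norm_num) hx0 ?_
    rw [hx3, hcR]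
    linarith
  have hclass : ∀ i ∈ M, (c : ℝ) * k / 2 ≤ ∑ v : V, ((lowStar (E i) (x ^ 2) v).card : ℝ) := by
    intro i hi
    have hi' := Finset.mem_Icc.mp (Finset.mem_filter.mp hi).1
    have hcard : ((E i).card : ℝ) = (c : ℝ) * k := by
      exact_mod_cast hsize i hi'.1 hi'.2
    rw [← hcard]
    exact half_card_le_sum_lowStar (E i) x hx (hcard.trans hx3.symm)
  have hstar : ∀ v i e, e ∈ lowStar (E i) (x ^ 2) v → e ∈ G.edgeFinset ∧ b e = i ∧ v ∈ e := by
    intro v i e he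
    have h := Finset.mem_filter.mp he
    have h' := Finset.mem_filter.mp h.1
    exact ⟨h'.1, h'.2, h.2.1⟩
  set A : V → Finset (Sym2 V) := fun v => M.biUnion (fun i => lowStar (E i) (x ^ 2) v) with hA
  have hAcard : ∀ v, (A v).card = ∑ i ∈ M, (lowStar (E i) (x ^ 2) v).card := by
    intro v
    refine Finset.card_biUnion fun i _ j _ hij => Finset.disjoint_left.mpr fun e hei hej => hij ?_
    exact (hstar v i e hei).2.1.symm.trans (hstar v j e hej).2.1
  have hsum : (c : ℝ) * k ^ 2 / 4 ≤ ∑ v : V, ((A v).card : ℝ) := by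
    calc (c : ℝ) * k ^ 2 / 4 = (k : ℝ) / 2 * (c * k / 2) := by ring
      _ ≤ (M.card : ℝ) * (c * k / 2) := by gcongr
      _ = ∑ i ∈ M, (c : ℝ) * k / 2 := by rw [Finset.sum_const, nsmul_eq_mul]
      _ ≤ ∑ i ∈ M, ∑ v : V, ((lowStar (E i) (x ^ 2) v).card : ℝ) := Finset.sum_le_sum hclass
      _ = ∑ v : V, ((A v).card : ℝ) := by
        rw [Finset.sum_comm]
        simp only [hAcard, Nat.cast_sum]
  have hnR : (0 : ℝ) < n := by exact_mod_cast hn0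
  obtain ⟨v, hv⟩ : ∃ v, (c : ℝ) * k ^ 2 / (4 * n) ≤ ((A v).card : ℝ) := by
    have : Nonempty V := by rw [← Fintype.card_pos_iff, hn]; exact hn0
    obtain ⟨v, -, hv⟩ := Finset.exists_le_of_sum_le (s := (Finset.univ : Finset V))
      (f := fun _ => (c : ℝ) * k ^ 2 / (4 * n)) (g := fun v => ((A v).card : ℝ))
      Finset.univ_nonempty (by
        rw [Finset.sum_const, nsmul_eq_mul, Finset.card_univ, hn]
        refine le_trans (le_of_eq ?_) hsum
        field_simp)
    exact ⟨v, hv⟩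
  have hApos : (A v).Nonempty := by
    rw [← Finset.card_pos]
    have : (0 : ℝ) < (c : ℝ) * k ^ 2 / (4 * n) := by rw [hcR]; positivity
    exact_mod_cast this.trans_le hv
  have hAmiss : ∀ e ∈ A v, ∀ H' ∈ C, ∀ f ∈ H'.2, b f ≠ b e := by
    intro e he
    obtain ⟨i, hi, hei⟩ := Finset.mem_biUnion.mp he
    rw [(hstar v i e hei).2.1]
    exact (Finset.mem_filter.mp hi).2
  have hAcolorful : IsColorfulStar G b c k n (v, A v) := by
    refine ⟨fun e he => ?_, fun e he => ?_, hv, fun i => ?_⟩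
    · obtain ⟨i, -, hei⟩ := Finset.mem_biUnion.mp he
      exact (hstar v i e hei).1
    · obtain ⟨i, -, hei⟩ := Finset.mem_biUnion.mp he
      exact (hstar v i e hei).2.2
    · rw [← hx2]
      rcases ((A v).filter (fun e => b e = i)).eq_empty_or_nonempty with h | ⟨e, he⟩
      · change (((A v).filter (fun e => b e = i)).card : ℝ) ≤ x ^ 2
        rw [h, Finset.card_empty, Nat.cast_zero]
        positivity
      · have hlow : ∀ f ∈ (A v).filter (fun e => b e = i), f ∈ lowStar (E i) (x ^ 2) v := by
          intro f hf
          obtain ⟨hf, hfi⟩ := Finset.mem_filter.mp hf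
          obtain ⟨j, -, hfj⟩ := Finset.mem_biUnion.mp hf
          rwa [← hfi, (hstar v j f hfj).2.1]
        -- A single edge of color `i` in the star certifies that `v` is low for that color.
        refine le_trans ?_ (Finset.mem_filter.mp (hlow e he)).2.2
        have hsub : (A v).filter (fun e => b e = i) ⊆ (E i).filter (fun f => v ∈ f) := by
          intro f hf
          have h := Finset.mem_filter.mp (hlow f hf)
          exact Finset.mem_filter.mpr ⟨h.1, h.2.1⟩
        exact_mod_cast Finset.card_le_card hsub
  refine ⟨(v, A v), hAcolorful, hAmiss, fun hmem => ?_, fun H hH => ?_, ?_⟩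
  · obtain ⟨e, he⟩ := hApos
    exact hAmiss e he _ hmem e he rfl
  · rcases Finset.mem_insert.mp hH with rfl | hH
    · exact hAcolorful
    · exact hC.1 H hH
  · intro i H₁ hH₁ H₂ hH₂ h₁ h₂
    rcases Finset.mem_insert.mp hH₁ with rfl | hH₁ <;>
      rcases Finset.mem_insert.mp hH₂ with rfl | hH₂
    · rfl
    · obtain ⟨e, he, rfl⟩ := h₁
      obtain ⟨f, hf, hfe⟩ := h₂
      exact absurd hfe (hAmiss e he _ hH₂ f hf)
    · obtain ⟨e, he, rfl⟩ := h₂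
      obtain ⟨f, hf, hfe⟩ := h₁
      exact absurd hfe (hAmiss e he _ hH₁ f hf)
    · exact hC.2 i H₁ hH₁ H₂ hH₂ h₁ h₂
end

section
/- Let k ≥ 2 be an integer, set c = 10^9, and let G be a simple graph on n vertices with an edge coloring, where n ≥ c·k and 140·k^(10/9) ≥ n. Suppose that G contains no rainbow cycle of length at most 4. Then every collection of colorful stars in G contains fewer than n^(1/5)/12 stars. -/
/-- The leaves of a star `H` with center `H.1` and edge set `H.2`. -/
def starLeaves {V : Type*} [Fintype V] [DecidableEq V] (H : V × Finset (Sym2 V)) : Finset V :=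
  Finset.univ.filter (fun x => s(H.1, x) ∈ H.2)

lemma card_le_card_starLeaves {V : Type*} [Fintype V] [DecidableEq V] (H : V × Finset (Sym2 V))
    (h : ∀ e ∈ H.2, H.1 ∈ e) : H.2.card ≤ (starLeaves H).card := by
  have hsub : H.2 ⊆ (starLeaves H).image (fun x => s(H.1, x)) := by
    intro e he
    obtain ⟨x, rfl⟩ := Sym2.mem_iff_exists.mp (h e he)
    exact Finset.mem_image.mpr ⟨x, by simp [starLeaves, he], rfl⟩
  exact (Finset.card_le_card hsub).trans Finset.card_image_le

/-- A set of leaves joined to the center by edges of a single color is no larger than that color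
class of the star. -/
lemma card_le_of_monochromatic {V : Type*} [Fintype V] [DecidableEq V] (b : Sym2 V → ℕ)
    (H : V × Finset (Sym2 V)) (X : Finset V) (hX : X ⊆ starLeaves H) (i : ℕ)
    (hi : ∀ x ∈ X, b s(H.1, x) = i) : X.card ≤ (H.2.filter (fun e => b e = i)).card := by
  refine Finset.card_le_card_of_injOn (fun x => s(H.1, x)) ?_ ?_
  · intro x hx
    have h1 := hX hx
    simp only [starLeaves, Finset.mem_filter, Finset.mem_univ, true_and] at h1
    simp [h1, hi x hx]
  · intro x _ y _ hxy
    exact Sym2.congr_right.mp hxy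

/-- A 4-cycle `u x v y` in a graph without short rainbow cycles has a repeated color. -/
lemma four_cycle_not_rainbow {V : Type*} (G : SimpleGraph V) (b : Sym2 V → ℕ)
    (hnorainbow : ∀ (u : V) (w : G.Walk u u), w.IsCycle → (w.edges.map b).Nodup →
      4 < w.length)
    (u v x y : V) (huv : u ≠ v) (hxy : x ≠ y)
    (hux : G.Adj u x) (hvx : G.Adj v x) (hvy : G.Adj v y) (huy : G.Adj u y) :
    ¬ [b s(u, x), b s(v, x), b s(v, y), b s(u, y)].Nodup := by
  intro hnd
  have h := hnorainbow u
    (.cons hux (.cons hvx.symm (.cons hvy (.cons huy.symm .nil)))) ?_ ?_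
  · simp at h
  · have := hux.ne
    have := hvx.ne
    have := hvy.ne
    have := huy.ne
    rw [SimpleGraph.Walk.isCycle_def]
    refine ⟨?_, by simp, ?_⟩
    · rw [SimpleGraph.Walk.isTrail_def]
      simp
      grind
    · simp
      grind
  · simpa [Sym2.eq_swap (a := x) (b := v), Sym2.eq_swap (a := y) (b := u)] using hnd

lemma inter_leaves_card_le {V : Type*} [Fintype V] [DecidableEq V] (G : SimpleGraph V)
    [DecidableRel G.Adj] (b : Sym2 V → ℕ) (c k n : ℕ)
    (hnorainbow : ∀ (u : V) (w : G.Walk u u), w.IsCycle → (w.edges.map b).Nodup →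
      4 < w.length)
    (C : Finset (V × Finset (Sym2 V)))
    (hC : IsColorfulStarCollection G b c k n C)
    (H₁ H₂ : V × Finset (Sym2 V)) (h₁ : H₁ ∈ C) (h₂ : H₂ ∈ C) (hne : H₁ ≠ H₂) :
    ((starLeaves H₁ ∩ starLeaves H₂).card : ℝ) ≤
      (c : ℝ) ^ ((2 : ℝ) / 3) * (k : ℝ) ^ ((2 : ℝ) / 3) := by
  obtain ⟨hstar, hdisj⟩ := hC
  obtain ⟨hE₁, -, -, hT₁⟩ := hstar H₁ h₁
  obtain ⟨hE₂, -, -, hT₂⟩ := hstar H₂ h₂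
  set X := starLeaves H₁ ∩ starLeaves H₂ with hX
  have hmem : ∀ x ∈ X, s(H₁.1, x) ∈ H₁.2 ∧ s(H₂.1, x) ∈ H₂.2 := by
    intro x hx
    simpa [hX, starLeaves] using hx
  have hcol : ∀ x ∈ X, ∀ y ∈ X, b s(H₁.1, x) ≠ b s(H₂.1, y) := by
    intro x hx y hy heq
    exact hne (hdisj _ H₁ h₁ H₂ h₂ ⟨_, (hmem x hx).1, heq⟩ ⟨_, (hmem y hy).2, rfl⟩)
  rcases X.eq_empty_or_nonempty with h0 | ⟨x₀, hx₀⟩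
  · rw [h0]
    simp only [Finset.card_empty, Nat.cast_zero]
    positivity
  -- A common leaf of two stars with the same center would be a common edge.
  have huv : H₁.1 ≠ H₂.1 := fun h => hcol x₀ hx₀ x₀ hx₀ (by rw [h])
  have hagree : ∀ x ∈ X, ∀ y ∈ X,
      b s(H₁.1, x) = b s(H₁.1, y) ∨ b s(H₂.1, x) = b s(H₂.1, y) := by
    intro x hx y hy
    by_contra! hcon
    have hxy : x ≠ y := fun h => hcon.1 (by rw [h])
    have adj₁ : ∀ z ∈ X, G.Adj H₁.1 z := fun z hz => by simpa using hE₁ (hmem z hz).1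
    have adj₂ : ∀ z ∈ X, G.Adj H₂.1 z := fun z hz => by simpa using hE₂ (hmem z hz).2
    refine four_cycle_not_rainbow G b hnorainbow H₁.1 H₂.1 x y huv hxy
      (adj₁ x hx) (adj₂ x hx) (adj₂ y hy) (adj₁ y hy) ?_
    have a1 := hcol x hx x hx
    have a2 := hcol x hx y hy
    have a3 := hcol y hy x hx
    have a4 := hcol y hy y hy
    simp
    grind
  have hline : (∀ x ∈ X, b s(H₁.1, x) = b s(H₁.1, x₀)) ∨
      (∀ x ∈ X, b s(H₂.1, x) = b s(H₂.1, x₀)) := by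
    by_contra! hcon
    obtain ⟨⟨x, hx, hx'⟩, ⟨y, hy, hy'⟩⟩ := hcon
    have e1 := hagree x hx x₀ hx₀
    have e2 := hagree y hy x₀ hx₀
    have e3 := hagree x hx y hy
    grind
  rcases hline with h | h
  · refine le_trans ?_ (hT₁ (b s(H₁.1, x₀)))
    exact_mod_cast card_le_of_monochromatic b H₁ X Finset.inter_subset_left _ h
  · refine le_trans ?_ (hT₂ (b s(H₂.1, x₀)))
    exact_mod_cast card_le_of_monochromatic b H₂ X Finset.inter_subset_right _ h

/-- Large sets with small pairwise intersections have a large union. -/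
lemma card_biUnion_ge {ι V : Type*} [DecidableEq ι] [DecidableEq V] (f : ι → Finset V) (D T : ℝ)
    (hT : 0 ≤ T) (S : Finset ι) (hD : ∀ i ∈ S, D ≤ ((f i).card : ℝ))
    (hI : ∀ i ∈ S, ∀ j ∈ S, i ≠ j → ((f i ∩ f j).card : ℝ) ≤ T) :
    (S.card : ℝ) * (D - S.card * T) ≤ ((S.biUnion f).card : ℝ) := by
  induction S using Finset.induction_on with
  | empty => simp
  | insert a S ha ih =>
    have ih' := ih (fun i hi => hD i (Finset.mem_insert_of_mem hi))
      (fun i hi j hj => hI i (Finset.mem_insert_of_mem hi) j (Finset.mem_insert_of_mem hj))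
    have h1 : ((f a ∩ S.biUnion f).card : ℝ) ≤ S.card * T := by
      rw [Finset.inter_biUnion]
      calc ((S.biUnion (fun i => f a ∩ f i)).card : ℝ)
          ≤ ∑ i ∈ S, ((f a ∩ f i).card : ℝ) := by exact_mod_cast Finset.card_biUnion_le
        _ ≤ ∑ i ∈ S, T := Finset.sum_le_sum fun i hi =>
            hI a (Finset.mem_insert_self _ _) i (Finset.mem_insert_of_mem hi)
              (fun h => ha (h ▸ hi))
        _ = S.card * T := by simp
    have h2 : ((f a ∪ S.biUnion f).card : ℝ) + ((f a ∩ S.biUnion f).card : ℝ)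
        = (f a).card + (S.biUnion f).card := by
      exact_mod_cast Finset.card_union_add_card_inter _ _
    have h3 := hD a (Finset.mem_insert_self _ _)
    rw [Finset.biUnion_insert, Finset.card_insert_of_notMem ha]
    push_cast
    have h4 : (0 : ℝ) ≤ S.card * T := by positivity
    nlinarith

/-- The numerical heart: with `m = ⌈n^(1/5) / 12⌉` stars, the overlaps `m T` use up at most half of
each star, yet the remaining halves would cover more than `n` vertices. -/
lemma exists_num_stars (n k : ℕ) (hk : 2 ≤ k) (hnk : 10 ^ 9 * k ≤ n)
    (hkn : (n : ℝ) ≤ 140 * (k : ℝ) ^ ((10 : ℝ) / 9)) :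
    (n : ℝ) < (⌈(n : ℝ) ^ ((1 : ℝ) / 5) / 12⌉₊ : ℝ) *
      (((10 ^ 9 : ℕ) : ℝ) * (k : ℝ) ^ 2 / (4 * (n : ℝ)) -
        (⌈(n : ℝ) ^ ((1 : ℝ) / 5) / 12⌉₊ : ℝ) *
          (((10 ^ 9 : ℕ) : ℝ) ^ ((2 : ℝ) / 3) * (k : ℝ) ^ ((2 : ℝ) / 3))) := by
  have hkpos : (0 : ℝ) < k := by exact_mod_cast (by omega : 0 < k)
  have hnbig : (12 : ℝ) ^ 5 ≤ n := by
    have : 12 ^ 5 ≤ n := by omega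
    exact_mod_cast this
  have hnpos : (0 : ℝ) < n := lt_of_lt_of_le (by norm_num) hnbig
  -- Express everything through `r = k^(1/9)` and `q = n^(1/5)`.
  obtain ⟨r, hr, hrk⟩ : ∃ r : ℝ, 0 < r ∧ r ^ 9 = k :=
    ⟨(k : ℝ) ^ ((1 : ℝ) / 9), by positivity, by
      rw [← Real.rpow_natCast, ← Real.rpow_mul hkpos.le]; norm_num⟩
  set q : ℝ := (n : ℝ) ^ ((1 : ℝ) / 5) with hq
  have hqpos : 0 < q := by positivity
  have hqn : q ^ 5 = n := by
    rw [hq, ← Real.rpow_natCast, ← Real.rpow_mul hnpos.le]; norm_num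
  have hk10 : (k : ℝ) ^ ((10 : ℝ) / 9) = r ^ 10 := by
    rw [← hrk, ← Real.rpow_natCast, ← Real.rpow_mul hr.le, ← Real.rpow_natCast]; norm_num
  have hk23 : (k : ℝ) ^ ((2 : ℝ) / 3) = r ^ 6 := by
    rw [← hrk, ← Real.rpow_natCast, ← Real.rpow_mul hr.le, ← Real.rpow_natCast]; norm_num
  have hc23 : (((10 ^ 9 : ℕ) : ℝ)) ^ ((2 : ℝ) / 3) = 10 ^ 6 := by
    rw [Nat.cast_pow, ← Real.rpow_natCast, ← Real.rpow_mul (by positivity), ← Real.rpow_natCast]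
    norm_num
  have hq12 : 12 ≤ q := by
    refine le_of_pow_le_pow_left₀ (n := 5) (by norm_num) hqpos.le ?_
    rw [hqn]; exact hnbig
  -- `2.7 ^ 5 > 140`
  have hqr : q ≤ 2.7 * r ^ 2 := by
    refine le_of_pow_le_pow_left₀ (n := 5) (by norm_num) (by positivity) ?_
    rw [hqn]
    have : (0 : ℝ) < r ^ 10 := by positivity
    calc (n : ℝ) ≤ 140 * r ^ 10 := by rw [← hk10]; exact hkn
      _ ≤ (2.7 * r ^ 2) ^ 5 := by rw [mul_pow, ← pow_mul]; norm_num; linarith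
  rw [hc23, hk23]
  set m : ℝ := (⌈q / 12⌉₊ : ℝ) with hm
  have hm1 : q / 12 ≤ m := Nat.le_ceil _
  have hm2 : m ≤ q / 6 := by
    have := Nat.ceil_lt_add_one (a := q / 12) (by positivity)
    linarith
  set D : ℝ := ((10 ^ 9 : ℕ) : ℝ) * (k : ℝ) ^ 2 / (4 * (n : ℝ)) with hD
  have hDn : D * (4 * n) = 10 ^ 9 * r ^ 18 := by
    rw [hD, div_mul_cancel₀ _ (by positivity), ← hrk]; push_cast; ring
  have hDlow : 10 ^ 6 * r ^ 8 ≤ D := by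
    rw [hD, le_div_iff₀ (by positivity), ← hrk]
    rw [hk10] at hkn
    calc 10 ^ 6 * r ^ 8 * (4 * (n : ℝ)) ≤ 10 ^ 6 * r ^ 8 * (4 * (140 * r ^ 10)) := by gcongr
      _ = (560 * 10 ^ 6) * r ^ 18 := by ring
      _ ≤ 10 ^ 9 * r ^ 18 := by gcongr; norm_num
      _ = _ := by push_cast; ring
  have hmT : m * (10 ^ 6 * r ^ 6) ≤ D / 2 := by
    calc m * (10 ^ 6 * r ^ 6) ≤ (2.7 * r ^ 2 / 6) * (10 ^ 6 * r ^ 6) := by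
          gcongr; linarith
      _ = 450000 * r ^ 8 := by ring
      _ ≤ D / 2 := by
        have : (0 : ℝ) < r ^ 8 := by positivity
        linarith
  have hDpos : 0 < D := lt_of_lt_of_le (by positivity) hDlow
  have hmD : (n : ℝ) < q / 12 * (D / 2) := by
    have h9 : q ^ 9 ≤ 2.7 ^ 9 * r ^ 18 := by
      calc q ^ 9 ≤ (2.7 * r ^ 2) ^ 9 := by gcongr
        _ = _ := by ring
    have hr18 : (0 : ℝ) < r ^ 18 := by positivity
    have h96 : 96 * q ^ 9 < 10 ^ 9 * r ^ 18 := by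
      norm_num at h9 ⊢; linarith
    rw [← hDn, ← hqn] at h96
    have h5 : 0 < q ^ 4 := by positivity
    rw [← hqn]
    refine lt_of_mul_lt_mul_right (a := 96 * q ^ 4) ?_ (by positivity)
    calc q ^ 5 * (96 * q ^ 4) = 96 * q ^ 9 := by ring
      _ < D * (4 * q ^ 5) := h96
      _ = q / 12 * (D / 2) * (96 * q ^ 4) := by ring
  calc (n : ℝ) < q / 12 * (D / 2) := hmD
    _ ≤ m * (D - m * (10 ^ 6 * r ^ 6)) := by
      gcongr
      linarith

/-- Let `k ≥ 2`, `c = 10^9`, and let `G` be a simple graph on `n`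
vertices with an edge-coloring, where `n ≥ c * k` and `140 * k^(10/9) ≥ n`. Suppose `G`
contains no rainbow cycle of length at most `4`. Then every collection of colorful
stars in `G` contains fewer than `n^(1/5) / 12` stars. -/
theorem colorful_star_collection_small {V : Type*} [Fintype V] [DecidableEq V]
    (n k c : ℕ) (hk : 2 ≤ k) (hc : c = 10 ^ 9) (hn : Fintype.card V = n)
    (hnk : c * k ≤ n) (hkn : (n : ℝ) ≤ 140 * (k : ℝ) ^ ((10 : ℝ) / 9))
    (G : SimpleGraph V) [DecidableRel G.Adj] (b : Sym2 V → ℕ)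
    (hnorainbow : ∀ (u : V) (w : G.Walk u u), w.IsCycle → (w.edges.map b).Nodup →
      4 < w.length)
    (C : Finset (V × Finset (Sym2 V)))
    (hC : IsColorfulStarCollection G b c k n C) :
    (C.card : ℝ) < (n : ℝ) ^ ((1 : ℝ) / 5) / 12 := by
  subst hc
  by_contra! hcon
  obtain ⟨S, hSC, hS⟩ := Finset.exists_subset_card_eq (Nat.ceil_le.mpr hcon)
  have hlt := exists_num_stars n k hk hnk hkn
  rw [← hS] at hlt
  have hcover := card_biUnion_ge starLeaves
    (((10 ^ 9 : ℕ) : ℝ) * (k : ℝ) ^ 2 / (4 * (n : ℝ)))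
    (((10 ^ 9 : ℕ) : ℝ) ^ ((2 : ℝ) / 3) * (k : ℝ) ^ ((2 : ℝ) / 3)) (by positivity) S
    (fun H hH => by
      obtain ⟨-, hcen, hcard, -⟩ := hC.1 H (hSC hH)
      exact hcard.trans (by exact_mod_cast card_le_card_starLeaves H hcen))
    (fun H hH H' hH' hne =>
      inter_leaves_card_le G b _ k n hnorainbow C hC H H' (hSC hH) (hSC hH') hne)
  have hle : ((S.biUnion starLeaves).card : ℝ) ≤ n := by
    rw [← hn]; exact_mod_cast Finset.card_le_univ _
  linarith
end

section
/- Let G be a simple graph with an edge-coloring b, and suppose G contains no rainbow cycle of length at most 4. Let u and v be distinct vertices of G and let W ⊆ (N(u) ∩ N(v)) \ {u, v} be a set of common neighbors of u and v. Suppose that no color appears both on an edge from u to W and on an edge from v to W. Then either all edges from u to W have the same color, or all edges from v to W have the same color. -/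
/-!
Two common neighbors `w₁ ≠ w₂` span with `u` and `v` the 4-cycle `u w₁ v w₂`. It is not
rainbow, and an edge at `u` never shares its color with an edge at `v`, so the repeated color
gives `b s(u, w₁) = b s(u, w₂)` or `b s(v, w₁) = b s(v, w₂)`. Thus any two elements of `W` are
related by one of two equivalence relations, "same color towards `u`" and "same color towards
`v`". Two equivalence relations that together cover all pairs cannot both be proper, just as a
group is never the union of two proper subgroups, so one of them is all of `W × W`.
-/


/-- Let `G` be a simple graph with an edge-coloring `b`, and suppose
`G` contains no rainbow cycle of length at most `4`. Let `u` and `v` be distinct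
vertices of `G` and let `W ⊆ (N(u) ∩ N(v)) \ {u, v}` be a set of common neighbors of
`u` and `v`. Suppose that no color appears both on an edge from `u` to `W` and on an
edge from `v` to `W`. Then either all edges from `u` to `W` have the same color, or all
edges from `v` to `W` have the same color. -/
theorem common_neighbors_monochromatic {V : Type*} (G : SimpleGraph V) (b : Sym2 V → ℕ)
    (hnorainbow : ∀ (x : V) (w : G.Walk x x), w.IsCycle → (w.edges.map b).Nodup →
      4 < w.length)
    (u v : V) (huv : u ≠ v) (W : Set V)
    (hW : W ⊆ (G.neighborSet u ∩ G.neighborSet v) \ {u, v})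
    (hdisj : ∀ w₁ ∈ W, ∀ w₂ ∈ W, b s(u, w₁) ≠ b s(v, w₂)) :
    (∀ w₁ ∈ W, ∀ w₂ ∈ W, b s(u, w₁) = b s(u, w₂)) ∨
    (∀ w₁ ∈ W, ∀ w₂ ∈ W, b s(v, w₁) = b s(v, w₂)) := by
  have key : ∀ w₁ ∈ W, ∀ w₂ ∈ W,
      b s(u, w₁) = b s(u, w₂) ∨ b s(v, w₁) = b s(v, w₂) := by
    intro w₁ h₁ w₂ h₂
    by_contra! hne
    obtain ⟨hu, hv⟩ := hne
    obtain ⟨⟨hu₁, hv₁⟩, -⟩ := hW h₁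
    obtain ⟨⟨hu₂, hv₂⟩, -⟩ := hW h₂
    rw [SimpleGraph.mem_neighborSet] at hu₁ hv₁ hu₂ hv₂
    have hw : w₁ ≠ w₂ := fun h => hu (by rw [h])
    let c : G.Walk u u := .cons hu₁ (.cons hv₁.symm (.cons hv₂ (.cons hu₂.symm .nil)))
    have hc : c.IsCycle := by
      have := hu₁.ne
      have := hv₁.ne
      have := hu₂.ne
      have := hv₂.ne
      simp only [c, SimpleGraph.Walk.cons_isCycle_iff, SimpleGraph.Walk.isPath_def]
      simp
      grind
    have hrainbow : (c.edges.map b).Nodup := by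
      have := hdisj w₁ h₁ w₁ h₁
      have := hdisj w₁ h₁ w₂ h₂
      have := hdisj w₂ h₂ w₁ h₁
      have := hdisj w₂ h₂ w₂ h₂
      simp [c, Sym2.eq_swap (a := w₁) (b := v), Sym2.eq_swap (a := w₂) (b := u)]
      grind
    have hlen := hnorainbow u c hc hrainbow
    simp [c] at hlen
  by_contra! hne
  obtain ⟨⟨x₁, hx₁, x₂, hx₂, hx⟩, y₁, hy₁, y₂, hy₂, hy⟩ := hne
  -- `x₁, x₂` agree towards `v` and `y₁, y₂` towards `u`. Some `yⱼ` differs from both `xᵢ`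
  -- towards `v`, hence agrees with both towards `u`, although `x₁` and `x₂` differ there.
  grind
end
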